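/- arXiv:1505.05496 — 5 statements merged into one kernel-verified Lean document; each statement's English description precedes it below -/
import Mathlib

section
/- Let G be a connected graph with a cut-vertex v such that G1 and G2 are two connected subgraphs of G having v as their only common vertex and V(G1) ∪ V(G2) = V(G). Let n1 = |V(G1)|, n2 = |V(G2)|, m1 = |E(G1)|, m2 = |E(G2)|. Then D_R(G) = D_R(G1) + D_R(G2) + 2·m2·Kf_v(G1) + 2·m1·Kf_v(G2) + (n2 − 1)·D_v(G1) + (n1 − 1)·D_v(G2). -/
open Finset

/-- Effective resistance between two vertices of a graph (for a connected graph
this is the effective resistance when every edge is a unit resistor), defined via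
the matrix-tree / spanning-two-forest determinant formula. -/
noncomputable def effRes {V : Type*} [Finite V] (G : SimpleGraph V) (u v : V) : ℝ :=
  letI := Fintype.ofFinite V
  letI := Classical.decEq V
  letI : DecidableRel G.Adj := Classical.decRel _
  if u = v then 0
  else
    Matrix.det ((G.lapMatrix ℝ).submatrix
        (fun w : {w : V // w ≠ u ∧ w ≠ v} => (w : V)) (fun w => (w : V)))
      / Matrix.det ((G.lapMatrix ℝ).submatrix
        (fun w : {w : V // w ≠ u} => (w : V)) (fun w => (w : V)))

/-- The degree resistance distance `D_R(G) = Σ_{ {u,v} ⊆ V } (d(u)+d(v)) R(u,v)`. -/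
noncomputable def degRes {V : Type*} [Finite V] (G : SimpleGraph V) : ℝ :=
  letI := Fintype.ofFinite V
  letI := Classical.decEq V
  letI : DecidableRel G.Adj := Classical.decRel _
  (1 / 2) * ∑ u : V, ∑ v : V, ((G.degree u : ℝ) + (G.degree v : ℝ)) * effRes G u v

/-- The Kirchhoff index `Kf(G) = Σ_{ {u,v} ⊆ V } R(u,v)`. -/
noncomputable def kirchhoffIndex {V : Type*} [Finite V] (G : SimpleGraph V) : ℝ :=
  letI := Fintype.ofFinite V
  (1 / 2) * ∑ u : V, ∑ v : V, effRes G u v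

/-- `Kf_v(G) = Σ_{u ∈ V} R(u,v)`. -/
noncomputable def Kfv {V : Type*} [Finite V] (G : SimpleGraph V) (v : V) : ℝ :=
  letI := Fintype.ofFinite V
  ∑ u : V, effRes G u v

/-- `D_v(G) = Σ_{u ∈ V} d(u) R(u,v)`. -/
noncomputable def Dv {V : Type*} [Finite V] (G : SimpleGraph V) (v : V) : ℝ :=
  letI := Fintype.ofFinite V
  letI := Classical.decEq V
  letI : DecidableRel G.Adj := Classical.decRel _
  ∑ u : V, (G.degree u : ℝ) * effRes G u v

/-- A subgraph is a cycle if it is connected and `2`-regular. -/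
def IsCycleSubgraph {V : Type*} {G : SimpleGraph V} (H : G.Subgraph) : Prop :=
  H.coe.Connected ∧ ∀ v ∈ H.verts, {u | H.Adj v u}.ncard = 2

/-- A cactus is a connected graph in which any two distinct cycles share at most
one vertex (equivalently, every block is an edge or a cycle). -/
def IsCactus {V : Type*} (G : SimpleGraph V) : Prop :=
  G.Connected ∧ ∀ H₁ H₂ : G.Subgraph, IsCycleSubgraph H₁ → IsCycleSubgraph H₂ →
    H₁ ≠ H₂ → (H₁.verts ∩ H₂.verts).ncard ≤ 1

/-- The number of cycles of a graph. -/
noncomputable def numCycles {V : Type*} (G : SimpleGraph V) : ℕ :=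
  {H : G.Subgraph | IsCycleSubgraph H}.ncard

/-- `G ∈ Cact(n;t)`: `G` is a cactus with `n` vertices and `t` cycles. -/
def MemCact {V : Type*} (n t : ℕ) (G : SimpleGraph V) : Prop :=
  IsCactus G ∧ Nat.card V = n ∧ numCycles G = t

/-- `G⁰(n,t)`: `t` triangles (on vertices `2i+1, 2i+2`, `i < t`) and `n - 2t - 1`
pendent edges, all sharing the common vertex `0`. -/
def G0 (n t : ℕ) : SimpleGraph (Fin n) :=
  SimpleGraph.fromRel (fun a b =>
    a.val = 0 ∨ (Odd a.val ∧ b.val = a.val + 1 ∧ b.val ≤ 2 * t))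

namespace CutRes
open Matrix

section core
variable {V : Type*} [Fintype V] [DecidableEq V] (G : SimpleGraph V) [DecidableRel G.Adj]

lemma sum_lap (f : V → ℝ) : ∑ x, (G.lapMatrix ℝ *ᵥ f) x = 0 := by
  have h : ∑ x, (G.lapMatrix ℝ *ᵥ f) x = (fun _ => (1:ℝ)) ⬝ᵥ (G.lapMatrix ℝ *ᵥ f) := by
    simp [dotProduct]
  rw [h, Matrix.dotProduct_mulVec, ← Matrix.mulVec_transpose, (G.isSymm_lapMatrix (R := ℝ)).eq,
    SimpleGraph.lapMatrix_mulVec_const_eq_zero]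
  simp

/-- the reduced Laplacian -/
abbrev red (u : V) : Matrix {w : V // w ≠ u} {w : V // w ≠ u} ℝ :=
  (G.lapMatrix ℝ).submatrix (fun w : {w : V // w ≠ u} => (w : V)) (fun w => (w : V))

lemma red_mulVec (u : V) (f : V → ℝ) (hf : f u = 0) (x : {w : V // w ≠ u}) :
    (red G u *ᵥ fun y => f y) x = (G.lapMatrix ℝ *ᵥ f) x := by
  simp only [Matrix.mulVec, dotProduct, red, Matrix.submatrix_apply]
  rw [← Fintype.sum_subtype_add_sum_subtype (fun w => w ≠ u)
    (fun y => G.lapMatrix ℝ x y * f y)]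
  rw [left_eq_add]
  apply Finset.sum_eq_zero
  rintro ⟨y, hy⟩ _
  have : y = u := by simpa using hy
  subst this
  simp [hf]

lemma ext_eq (u : V) (g : {w : V // w ≠ u} → ℝ) :
    ∃ f : V → ℝ, f u = 0 ∧ (fun y : {w : V // w ≠ u} => f y) = g := by
  refine ⟨fun y => if h : y ≠ u then g ⟨y, h⟩ else 0, by simp, ?_⟩
  ext ⟨y, hy⟩
  simp [hy]

lemma det_red_ne (hG : G.Connected) (u : V) : (red G u).det ≠ 0 := by
  intro h
  obtain ⟨g, hg0, hg⟩ := Matrix.exists_mulVec_eq_zero_iff.mpr h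
  obtain ⟨f, hfu, rfl⟩ := ext_eq u g
  have h1 : ∀ x, x ≠ u → (G.lapMatrix ℝ *ᵥ f) x = 0 := by
    intro x hx
    rw [← red_mulVec G u f hfu ⟨x, hx⟩, hg]; rfl
  have h2 : (G.lapMatrix ℝ *ᵥ f) u = 0 := by
    have := sum_lap G f
    rwa [Finset.sum_eq_single u (fun x _ hx => h1 x hx) (by simp)] at this
  have h3 : G.lapMatrix ℝ *ᵥ f = 0 := by
    ext x
    by_cases hx : x = u
    · subst hx; exact h2
    · exact h1 x hx
  rw [SimpleGraph.lapMatrix_mulVec_eq_zero_iff_forall_reachable] at h3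
  apply hg0
  ext y
  have := h3 y u (hG.preconnected _ _)
  simp [this, hfu]

lemma exists_pot (hG : G.Connected) (u w : V) :
    ∃ f : V → ℝ, G.lapMatrix ℝ *ᵥ f = Pi.single u 1 - Pi.single w 1 := by
  by_cases huw : u = w
  · exact ⟨0, by simp [huw]⟩
  have hd : IsUnit (red G u).det := isUnit_iff_ne_zero.mpr (det_red_ne G hG u)
  obtain ⟨f, hfu, hf⟩ := ext_eq u ((red G u)⁻¹ *ᵥ (fun x => (Pi.single u 1 - Pi.single w 1 : V → ℝ) x))
  refine ⟨f, ?_⟩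
  have h1 : ∀ x, x ≠ u → (G.lapMatrix ℝ *ᵥ f) x = (Pi.single u 1 - Pi.single w 1 : V → ℝ) x := by
    intro x hx
    rw [← red_mulVec G u f hfu ⟨x, hx⟩, hf, Matrix.mulVec_mulVec, Matrix.mul_nonsing_inv _ hd,
      Matrix.one_mulVec]
  have h2 : ∑ x, ((G.lapMatrix ℝ *ᵥ f) x - (Pi.single u 1 - Pi.single w 1 : V → ℝ) x) = 0 := by
    rw [Finset.sum_sub_distrib, sum_lap]
    simp
  rw [Finset.sum_eq_single u (fun x _ hx => by rw [h1 x hx, sub_self]) (by simp)] at h2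
  ext x
  by_cases hx : x = u
  · subst hx; linarith
  · exact h1 x hx

lemma adj_diag {ι : Type*} [Fintype ι] [DecidableEq ι] (M : Matrix ι ι ℝ) (w : ι) :
    M.adjugate w w = (M.submatrix (fun x : {x // x ≠ w} => (x : ι)) (fun x : {x // x ≠ w} => (x : ι))).det := by
  rw [Matrix.adjugate_apply, Matrix.twoBlockTriangular_det _ (fun i => i ≠ w)]
  · have : Subsingleton {a // ¬ (a ≠ w)} := ⟨by
      rintro ⟨a, ha⟩ ⟨b, hb⟩
      simp only [not_not] at ha hb
      subst ha; subst hb; rfl⟩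
    rw [Matrix.det_eq_elem_of_subsingleton (Matrix.toSquareBlockProp _ (fun i => ¬ (i ≠ w))) ⟨w, by simp⟩]
    simp only [Matrix.toSquareBlockProp_def, Matrix.of_apply, Matrix.updateRow_self, Pi.single_eq_same,
      mul_one]
    congr 1
    ext ⟨i, hi⟩ ⟨j, hj⟩
    simp [Matrix.updateRow_ne hi]
  · intro i hi j hj
    have : i = w := by simpa using hi
    subst this
    simp [hj]

lemma core_eff (hG : G.Connected) (u w : V) (f : V → ℝ)
    (hf : G.lapMatrix ℝ *ᵥ f = Pi.single u 1 - Pi.single w 1) :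
    (if u = w then 0 else
    Matrix.det ((G.lapMatrix ℝ).submatrix
        (fun x : {x : V // x ≠ u ∧ x ≠ w} => (x : V)) (fun x => (x : V)))
      / Matrix.det ((G.lapMatrix ℝ).submatrix
        (fun x : {x : V // x ≠ u} => (x : V)) (fun x => (x : V)))) = f u - f w := by
  split_ifs with huw
  · simp [huw]
  have hd := det_red_ne G hG u
  have hwu : w ≠ u := fun h => huw h.symm
  rw [div_eq_iff hd]
  let g : V → ℝ := fun x => f x - f u
  have hg : G.lapMatrix ℝ *ᵥ g = Pi.single u 1 - Pi.single w 1 := by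
    have : g = f - fun _ => f u := rfl
    rw [this, Matrix.mulVec_sub, hf]
    have h0 : (fun _ : V => f u) = f u • (fun _ : V => (1:ℝ)) := by ext; simp
    rw [h0, Matrix.mulVec_smul, SimpleGraph.lapMatrix_mulVec_const_eq_zero]
    simp
  have hM : red G u *ᵥ (fun y => g y) = - Pi.single ⟨w, hwu⟩ 1 := by
    ext x
    rw [red_mulVec G u g (by simp [g]), hg]
    simp [Pi.single_apply, x.2, Subtype.ext_iff]
  have h1 := congrArg (fun z => ((red G u).adjugate *ᵥ z) ⟨w, hwu⟩) hM
  simp only [Matrix.mulVec_mulVec, Matrix.adjugate_mul, Matrix.smul_mulVec, Matrix.one_mulVec,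
    Matrix.mulVec_neg, Pi.smul_apply, Pi.neg_apply, smul_eq_mul, Matrix.mulVec_single_one,
    Matrix.col_apply] at h1
  rw [adj_diag] at h1
  have h2 : ((red G u).submatrix (fun x : {x : {x : V // x ≠ u} // x ≠ ⟨w, hwu⟩} => (x : {x : V // x ≠ u}))
      (fun x : {x : {x : V // x ≠ u} // x ≠ ⟨w, hwu⟩} => (x : {x : V // x ≠ u}))).det = Matrix.det ((G.lapMatrix ℝ).submatrix
        (fun x : {x : V // x ≠ u ∧ x ≠ w} => (x : V)) (fun x => (x : V))) := by
    let e : {x : V // x ≠ u ∧ x ≠ w} ≃ {x : {x : V // x ≠ u} // x ≠ ⟨w, hwu⟩} :=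
      { toFun := fun x => ⟨⟨x.1, x.2.1⟩, fun h => x.2.2 (congrArg Subtype.val h)⟩
        invFun := fun x => ⟨x.1.1, x.1.2, fun h => x.2 (Subtype.ext h)⟩
        left_inv := fun _ => rfl
        right_inv := fun _ => rfl }
    rw [← Matrix.det_submatrix_equiv_self e]
    rfl
  rw [h2] at h1
  simp only [g] at h1
  change _ = _ * (red G u).det
  linarith

end core

open Classical in
/-- potential of the unit current from `u` to `w` -/
def IsPot {V : Type*} [Fintype V] (G : SimpleGraph V) (u w : V) (f : V → ℝ) : Prop :=
  ∀ x, ∑ y, (if G.Adj x y then f x - f y else 0) =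
    (if x = u then 1 else 0) - (if x = w then 1 else 0)

open Classical in
lemma isPot_iff {V : Type*} [Fintype V] (G : SimpleGraph V) (u w : V) (f : V → ℝ) :
    IsPot G u w f ↔ G.lapMatrix ℝ *ᵥ f = Pi.single u 1 - Pi.single w 1 := by
  rw [funext_iff]
  refine forall_congr' fun x => ?_
  rw [SimpleGraph.lapMatrix_mulVec_apply, ← Finset.sum_filter, Finset.sum_sub_distrib,
    ← SimpleGraph.neighborFinset_eq_filter]
  simp [Pi.single_apply]

lemma exists_isPot {V : Type*} [Fintype V] (G : SimpleGraph V) (hG : G.Connected) (u w : V) :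
    ∃ f, IsPot G u w f := by
  classical
  obtain ⟨f, hf⟩ := exists_pot G hG u w
  refine ⟨f, (isPot_iff _ _ _ _).mpr ?_⟩
  convert hf

lemma IsPot.eff {V : Type*} [Fintype V] {G : SimpleGraph V} (hG : G.Connected) {u w : V}
    {f : V → ℝ} (hf : IsPot G u w f) : effRes G u w = f u - f w := by
  classical
  rw [isPot_iff] at hf
  rw [← core_eff G hG u w f (by convert hf)]
  unfold effRes
  congr!

lemma IsPot.add {V : Type*} [Fintype V] {G : SimpleGraph V} {u v w : V}
    {f g : V → ℝ} (hf : IsPot G u v f) (hg : IsPot G v w g) : IsPot G u w (f + g) := by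
  classical
  rw [isPot_iff] at *
  rw [Matrix.mulVec_add, hf, hg]; abel

lemma eff_symm {V : Type*} [Fintype V] {G : SimpleGraph V} (hG : G.Connected) (u w : V) :
    effRes G u w = effRes G w u := by
  classical
  obtain ⟨f, hf⟩ := exists_isPot G hG u w
  have hg : IsPot G w u (-f) := by
    rw [isPot_iff] at *
    rw [Matrix.mulVec_neg, hf]; abel
  rw [hf.eff hG, hg.eff hG]
  simp; ring

open Classical in
lemma degRes_eq {V : Type*} [Fintype V] {G : SimpleGraph V} (hG : G.Connected) :
    degRes G = ∑ u, (G.degree u : ℝ) * ∑ w, effRes G u w := by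
  have h : degRes G = (1 / 2) * ∑ u : V, ∑ v : V, ((G.degree u : ℝ) + (G.degree v : ℝ)) * effRes G u v := by
    unfold degRes
    congr!
  rw [h]
  simp only [add_mul, Finset.sum_add_distrib, Finset.mul_sum]
  rw [Finset.sum_comm (f := fun u v => (G.degree v : ℝ) * effRes G u v)]
  have : ∑ y, ∑ x, (G.degree y : ℝ) * effRes G x y = ∑ x, ∑ y, (G.degree x : ℝ) * effRes G x y :=
    Finset.sum_congr rfl fun x _ => Finset.sum_congr rfl fun y _ => by rw [eff_symm hG]
  rw [this]
  ring

lemma sum_verts {V : Type*} [Fintype V] (s : Set V) [Fintype s] (F : V → ℝ)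
    (hF : ∀ x, x ∉ s → F x = 0) : ∑ x, F x = ∑ x : s, F x := by
  classical
  have h := Fintype.sum_subtype_add_sum_subtype (fun x => x ∈ s) F
  rw [← h, Finset.sum_eq_zero (s := (Finset.univ : Finset {x // ¬ x ∈ s})) (fun x _ => hF x x.2),
    add_zero]
  congr!

/-- `G` is glued from `G1` and `G2` at `v`. -/
structure Glue {V : Type*} (G : SimpleGraph V) (v : V) (G1 G2 : G.Subgraph) : Prop where
  adj : ∀ x y, G.Adj x y ↔ G1.Adj x y ∨ G2.Adj x y
  cover : ∀ x, x ∈ G1.verts ∨ x ∈ G2.verts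
  common : ∀ x, x ∈ G1.verts → x ∈ G2.verts → x = v
  m1 : v ∈ G1.verts
  m2 : v ∈ G2.verts

section glue
variable {V : Type*} {G : SimpleGraph V} {v : V} {G1 G2 : G.Subgraph}

lemma Glue.symm (h : Glue G v G1 G2) : Glue G v G2 G1 :=
  ⟨fun x y => by rw [h.adj, or_comm], fun x => (h.cover x).symm, fun x a b => h.common x b a,
    h.m2, h.m1⟩

open Classical in
lemma Glue.ite_adj (h : Glue G v G1 G2) (x y : V) (c : ℝ) :
    (if G.Adj x y then c else 0) =
      (if G1.Adj x y then c else 0) + (if G2.Adj x y then c else 0) := by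
  have hn : ¬ (G1.Adj x y ∧ G2.Adj x y) := by
    rintro ⟨a, b⟩
    have hx := h.common x a.fst_mem b.fst_mem
    have hy := h.common y a.snd_mem b.snd_mem
    exact a.ne (hx.trans hy.symm)
  rw [h.adj]
  by_cases h1 : G1.Adj x y <;> by_cases h2 : G2.Adj x y <;> simp_all

variable [Fintype V]

open Classical in
lemma Glue.lift (h : Glue G v G1 G2) (u w : G1.verts) (f : G1.verts → ℝ)
    (hf : IsPot G1.coe u w f) :
    ∃ F : V → ℝ, IsPot G u w F ∧ (∀ x : G1.verts, F x = f x) ∧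
      ∀ x ∈ G2.verts, F x = f ⟨v, h.m1⟩ := by
  let F : V → ℝ := fun x => if hx : x ∈ G1.verts then f ⟨x, hx⟩ else f ⟨v, h.m1⟩
  have hF1 : ∀ x : G1.verts, F x = f x := fun x => by simp [F]
  have hF2 : ∀ x ∈ G2.verts, F x = f ⟨v, h.m1⟩ := by
    intro x hx
    by_cases hx1 : x ∈ G1.verts
    · have := h.common x hx1 hx
      subst this
      simp [F, hx1]
    · simp [F, hx1]
  refine ⟨F, ?_, hF1, hF2⟩
  intro x
  simp only [h.ite_adj, Finset.sum_add_distrib]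
  rw [Finset.sum_eq_zero (f := fun y => if G2.Adj x y then F x - F y else 0), add_zero]
  · rw [sum_verts G1.verts _ (fun y hy => if_neg fun a => hy a.snd_mem)]
    by_cases hx : x ∈ G1.verts
    · have := hf ⟨x, hx⟩
      simp only [SimpleGraph.Subgraph.coe_adj, Subtype.ext_iff] at this
      rw [← this]
      refine Finset.sum_congr (by congr!) fun y _ => ?_
      rw [hF1 y, ← hF1 ⟨x, hx⟩]
    · rw [Finset.sum_eq_zero (fun y _ => if_neg fun a => hx a.fst_mem)]
      have h1 : x ≠ u := fun e => hx (e ▸ u.2)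
      have h2 : x ≠ w := fun e => hx (e ▸ w.2)
      simp [h1, h2]
  · intro y _
    split_ifs with a
    · rw [hF2 x a.fst_mem, hF2 y a.snd_mem, sub_self]
    · rfl

lemma Glue.eff_same (h : Glue G v G1 G2) (hG : G.Connected) (h1 : G1.coe.Connected)
    (u w : G1.verts) : effRes G u w = effRes G1.coe u w := by
  classical
  obtain ⟨f, hf⟩ := exists_isPot G1.coe h1 u w
  obtain ⟨F, hF, hF1, -⟩ := h.lift u w f hf
  rw [hf.eff h1, hF.eff hG, hF1, hF1]

lemma Glue.eff_cross (h : Glue G v G1 G2) (hG : G.Connected) (h1 : G1.coe.Connected)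
    (h2 : G2.coe.Connected) (u : G1.verts) (w : G2.verts) :
    effRes G u w = effRes G1.coe u ⟨v, h.m1⟩ + effRes G2.coe w ⟨v, h.m2⟩ := by
  classical
  obtain ⟨f, hf⟩ := exists_isPot G1.coe h1 u ⟨v, h.m1⟩
  obtain ⟨F, hF, hF1, hF2⟩ := h.lift _ _ f hf
  obtain ⟨g, hg⟩ := exists_isPot G2.coe h2 ⟨v, h.m2⟩ w
  obtain ⟨K, hK, hK1, hK2⟩ := h.symm.lift _ _ g hg
  rw [eff_symm h2, hf.eff h1, hg.eff h2, (hF.add hK).eff hG]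
  simp only [Pi.add_apply]
  rw [hF1, hK1, hF2 w w.2, hK2 u u.2]
  ring

open Classical in
lemma deg_sum {W : Type*} [Fintype W] (H : SimpleGraph W) (x : W)
    [Fintype (H.neighborSet x)] :
    (H.degree x : ℝ) = ∑ y, if H.Adj x y then 1 else 0 := by
  have e : H.degree x = @SimpleGraph.degree _ H x (Subtype.fintype _) := by congr!
  rw [e, ← SimpleGraph.card_neighborFinset_eq_degree, SimpleGraph.neighborFinset_eq_filter]
  simp

open Classical in
/-- degree in a subgraph, extended by zero -/
noncomputable def sdeg (H : G.Subgraph) (x : V) : ℝ := ∑ y, if H.Adj x y then 1 else 0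

open Classical in
lemma sdeg_coe (H : G.Subgraph) (x : H.verts) [Fintype (H.coe.neighborSet x)] : (H.coe.degree x : ℝ) = sdeg H x := by
  rw [deg_sum, sdeg, sum_verts H.verts _ (fun y hy => if_neg fun a => hy a.snd_mem)]
  refine Finset.sum_congr (by congr!) fun y _ => ?_
  congr!

lemma sdeg_zero (H : G.Subgraph) (x : V) (hx : x ∉ H.verts) : sdeg H x = 0 := by
  classical
  exact Finset.sum_eq_zero fun y _ => if_neg fun a => hx a.fst_mem

open Classical in
lemma sum_sdeg (H : G.Subgraph) : ∑ x : H.verts, sdeg H x = 2 * (H.edgeSet.ncard : ℝ) := by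
  have h := SimpleGraph.sum_degrees_eq_twice_card_edges H.coe
  have h2 : #H.coe.edgeFinset = H.edgeSet.ncard := by
    rw [← SimpleGraph.Subgraph.image_coe_edgeSet_coe,
      Set.ncard_image_of_injective _ (Sym2.map.injective Subtype.val_injective),
      ← SimpleGraph.coe_edgeFinset, Set.ncard_coe_finset]
  rw [h2] at h
  have h3 := congrArg (Nat.cast (R := ℝ)) h
  push_cast at h3
  rw [← h3]
  exact Finset.sum_congr rfl fun x _ => by rw [sdeg_coe]

open Classical in
lemma Glue.sum_all (h : Glue G v G1 G2) (F : V → ℝ) :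
    ∑ x, F x = ∑ x : G1.verts, F x + ∑ x : G2.verts, F x - F v := by
  have e : ∀ x, F x = (if x ∈ G1.verts then F x else 0) + (if x ∈ G2.verts then F x else 0)
      - (if x = v then F x else 0) := by
    intro x
    by_cases h1 : x ∈ G1.verts
    · by_cases h2 : x ∈ G2.verts
      · have := h.common x h1 h2
        simp only [h1, h2, this, if_true, h.m1, h.m2]; ring
      · have : x ≠ v := fun e => h2 (e ▸ h.m2)
        simp [h1, h2, this]
    · have h2 := (h.cover x).resolve_left h1
      have : x ≠ v := fun e => h1 (e ▸ h.m1)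
      simp [h1, h2, this]
  rw [Finset.sum_congr rfl fun x _ => e x, Finset.sum_sub_distrib, Finset.sum_add_distrib,
    sum_verts G1.verts (fun x => if x ∈ G1.verts then F x else 0) (fun x hx => if_neg hx),
    sum_verts G2.verts (fun x => if x ∈ G2.verts then F x else 0) (fun x hx => if_neg hx)]
  simp

open Classical in
lemma Glue.half (h : Glue G v G1 G2) (hG : G.Connected) (h1 : G1.coe.Connected)
    (h2 : G2.coe.Connected) :
    ∑ u, sdeg G1 u * ∑ w, effRes G u w = degRes G1.coe
      + 2 * (G1.edgeSet.ncard : ℝ) * Kfv G2.coe ⟨v, h.m2⟩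
      + ((G2.verts.ncard : ℝ) - 1) * Dv G1.coe ⟨v, h.m1⟩ := by
  have hK : Kfv G2.coe ⟨v, h.m2⟩ = ∑ w : G2.verts, effRes G2.coe w ⟨v, h.m2⟩ := by
    unfold Kfv; congr!
  have hD : Dv G1.coe ⟨v, h.m1⟩ = ∑ u : G1.verts, sdeg G1 u * effRes G1.coe u ⟨v, h.m1⟩ := by
    unfold Dv
    refine Finset.sum_congr (by congr!) fun u _ => ?_
    rw [← sdeg_coe]
    congr!
  have hc : (G2.verts.ncard : ℝ) = Fintype.card G2.verts := by
    rw [Set.ncard_eq_toFinset_card', Set.toFinset_card]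
  rw [sum_verts G1.verts _ (fun u hu => by rw [sdeg_zero G1 u hu, zero_mul]), degRes_eq h1, hK, hD,
    ← sum_sdeg, Finset.sum_mul, Finset.mul_sum, ← Finset.sum_add_distrib, ← Finset.sum_add_distrib]
  refine Finset.sum_congr rfl fun u _ => ?_
  rw [h.sum_all]
  have e := h.eff_same hG h1 u ⟨v, h.m1⟩
  simp only at e
  rw [e, sdeg_coe, hc]
  simp only [h.eff_same hG h1, h.eff_cross hG h1 h2, Finset.sum_add_distrib, Finset.sum_const,
    Finset.card_univ, nsmul_eq_mul]
  ring

end glue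

end CutRes

/-- Lemma 1: decomposition of the degree resistance distance at a cut vertex. -/
theorem stmt_0 {V : Type*} [Finite V] (G : SimpleGraph V) (hG : G.Connected)
    (v : V) (hcut : ¬ (G.induce {w : V | w ≠ v}).Connected)
    (G1 G2 : G.Subgraph)
    (h1c : G1.coe.Connected) (h2c : G2.coe.Connected)
    (hunion : G1 ⊔ G2 = ⊤)
    (hcommon : G1.verts ∩ G2.verts = {v})
    (hv1 : v ∈ G1.verts) (hv2 : v ∈ G2.verts) :
    degRes G = degRes G1.coe + degRes G2.coe
      + 2 * (G2.edgeSet.ncard : ℝ) * Kfv G1.coe ⟨v, hv1⟩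
      + 2 * (G1.edgeSet.ncard : ℝ) * Kfv G2.coe ⟨v, hv2⟩
      + ((G2.verts.ncard : ℝ) - 1) * Dv G1.coe ⟨v, hv1⟩
      + ((G1.verts.ncard : ℝ) - 1) * Dv G2.coe ⟨v, hv2⟩ := by
  classical
  letI := Fintype.ofFinite V
  have h : CutRes.Glue G v G1 G2 := by
    refine ⟨fun x y => ?_, fun x => ?_, fun x a b => ?_, hv1, hv2⟩
    · rw [← SimpleGraph.Subgraph.sup_adj, hunion, SimpleGraph.Subgraph.top_adj]
    · have : x ∈ (G1 ⊔ G2).verts := by rw [hunion]; trivial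
      simpa using this
    · have : x ∈ G1.verts ∩ G2.verts := ⟨a, b⟩
      rw [hcommon] at this
      exact this
  have e1 := h.half hG h1c h2c
  have e2 := h.symm.half hG h2c h1c
  rw [CutRes.degRes_eq hG]
  have hd : ∀ u, (G.degree u : ℝ) = CutRes.sdeg G1 u + CutRes.sdeg G2 u := by
    intro u
    rw [CutRes.deg_sum]
    simp only [h.ite_adj, Finset.sum_add_distrib]
    rfl
  simp only [hd, add_mul, Finset.sum_add_distrib]
  rw [e1, e2]
  ring
end

section
/- Let G ∈ Cact(n;t) with t ≥ 2 be a cactus without cut edges, let C be an end cycle of G and v its anchor, and let u be a vertex of C different from v. Let G1 and G2 be the graphs obtained from G by adding r ≥ 1 pendent edges to the vertex u and to the vertex v, respectively. Then D_R(G1) > D_R(G2). -/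
open Finset

/-- The graph obtained from `G` by attaching `r` new pendent vertices to `w`. -/
def addPendents {V : Type*} (G : SimpleGraph V) (w : V) (r : ℕ) :
    SimpleGraph (V ⊕ Fin r) :=
  SimpleGraph.fromRel (fun a b =>
    (∃ x y, a = Sum.inl x ∧ b = Sum.inl y ∧ G.Adj x y) ∨
    (a = Sum.inl w ∧ ∃ i : Fin r, b = Sum.inr i))

section Helpers

open Classical in
/-- The graph Laplacian acting on functions. -/
noncomputable def lapl {V : Type*} [Fintype V] (G : SimpleGraph V) (f : V → ℝ) (x : V) : ℝ :=
  ∑ y, if G.Adj x y then f x - f y else 0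

open Classical in
/-- `f` is a potential of a unit flow from `a` to `b`. -/
def IsPot {V : Type*} [Fintype V] (G : SimpleGraph V) (a b : V) (f : V → ℝ) : Prop :=
  ∀ x, lapl G f x = (if x = a then 1 else 0) - (if x = b then 1 else 0)

open Classical in
lemma lapMatrix_mulVec_eq_lapl {V : Type*} [Fintype V] (G : SimpleGraph V) (f : V → ℝ) (x : V) :
    ((G.lapMatrix ℝ).mulVec f) x = lapl G f x := by
  rw [SimpleGraph.lapMatrix_mulVec_apply, lapl, ← Finset.sum_filter, SimpleGraph.neighborFinset_eq_filter, Finset.sum_sub_distrib]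
  congr 1
  simp [SimpleGraph.degree, SimpleGraph.neighborFinset_eq_filter]

lemma lapl_symm {V : Type*} [Fintype V] (G : SimpleGraph V) (f g : V → ℝ) :
    ∑ x, g x * lapl G f x = ∑ x, f x * lapl G g x := by
  classical
  have key : ∀ f g : V → ℝ, ∑ x, g x * lapl G f x
      = (∑ x, ∑ y, if G.Adj x y then g x * f x else 0)
        - ∑ x, ∑ y, if G.Adj x y then g x * f y else 0 := by
    intro f g
    rw [← Finset.sum_sub_distrib]
    refine Finset.sum_congr rfl fun x _ => ?_
    rw [lapl, Finset.mul_sum, ← Finset.sum_sub_distrib]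
    refine Finset.sum_congr rfl fun y _ => ?_
    split_ifs <;> ring
  rw [key, key]
  congr 1
  · simp only [mul_comm]
  · rw [Finset.sum_comm]
    simp only [mul_comm, SimpleGraph.adj_comm]

lemma lapl_sum {V : Type*} [Fintype V] (G : SimpleGraph V) (f : V → ℝ) :
    ∑ x, lapl G f x = 0 := by
  have := lapl_symm G f (fun _ => 1)
  simpa [lapl] using this

lemma lapl_sub {V : Type*} [Fintype V] (G : SimpleGraph V) (f g : V → ℝ) (x : V) :
    lapl G (fun y => f y - g y) x = lapl G f x - lapl G g x := by
  classical
  simp only [lapl]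
  rw [← Finset.sum_sub_distrib]
  refine Finset.sum_congr rfl fun y _ => ?_
  split_ifs <;> ring

lemma lapl_neg {V : Type*} [Fintype V] (G : SimpleGraph V) (f : V → ℝ) (x : V) :
    lapl G (fun y => - f y) x = - lapl G f x := by
  classical
  simp only [lapl]
  rw [← Finset.sum_neg_distrib]
  refine Finset.sum_congr rfl fun y _ => ?_
  split_ifs <;> ring

lemma lapl_const {V : Type*} [Fintype V] (G : SimpleGraph V) (c : ℝ) (x : V) :
    lapl G (fun _ => c) x = 0 := by
  simp [lapl]

lemma const_of_lapl {V : Type*} [Fintype V] {G : SimpleGraph V} (hG : G.Connected) {f : V → ℝ}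
    (h : ∀ x, lapl G f x = 0) (a b : V) : f a = f b := by
  classical
  have : (G.lapMatrix ℝ).mulVec f = 0 := by
    ext x
    rw [lapMatrix_mulVec_eq_lapl, h]; rfl
  exact (SimpleGraph.lapMatrix_mulVec_eq_zero_iff_forall_reachable G).1 this a b
    (hG.preconnected a b)

lemma isPot_of_ne {V : Type*} [Fintype V] {G : SimpleGraph V} {a b c : V} {f : V → ℝ}
    (h : ∀ x, x ≠ c → lapl G f x
      = (open Classical in (if x = a then (1:ℝ) else 0) - (if x = b then 1 else 0))) :
    IsPot G a b f := by
  classical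
  intro x
  by_cases hx : x = c
  · subst hx
    have h1 := lapl_sum G f
    have h2 : ∑ y, (((if y = a then (1:ℝ) else 0) - (if y = b then 1 else 0))) = 0 := by
      simp
    rw [← Finset.add_sum_erase _ _ (Finset.mem_univ x)] at h1 h2
    have h3 : ∑ y ∈ Finset.univ.erase x, lapl G f y = ∑ y ∈ Finset.univ.erase x,
      (((if y = a then (1:ℝ) else 0) - (if y = b then 1 else 0))) := by
      refine Finset.sum_congr rfl fun y hy => ?_
      rw [h y (Finset.ne_of_mem_erase hy)]
    rw [h3] at h1
    linarith
  · exact h x hx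

/-- Diagonal entries of the adjugate. -/
lemma adjugate_diag {n : Type*} [Fintype n] [DecidableEq n] (M : Matrix n n ℝ) (i : n) :
    M.adjugate i i = (M.submatrix (fun w : {w : n // w ≠ i} => (w : n))
      (fun w : {w : n // w ≠ i} => (w : n))).det := by
  rw [Matrix.adjugate_apply,
    Matrix.twoBlockTriangular_det (M.updateRow i (Pi.single i 1)) (fun j => j ≠ i)]
  · have h2 : ((M.updateRow i (Pi.single i 1)).toSquareBlockProp (fun j => ¬ (j ≠ i))).det = 1 := by
      have : (M.updateRow i (Pi.single i 1)).toSquareBlockProp (fun j => ¬ (j ≠ i)) = 1 := by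
        ext a b
        obtain ⟨a, ha⟩ := a
        obtain ⟨b, hb⟩ := b
        simp only [not_not] at ha hb
        subst ha
        subst hb
        simp [Matrix.toSquareBlockProp]
      rw [this, Matrix.det_one]
    rw [h2, mul_one]
    congr 1
    ext a b
    simp [Matrix.toSquareBlockProp, a.2]
  · intro a ha b hb
    simp only [not_not] at ha
    subst ha
    simp [hb]

open Classical in
/-- Reduced Laplacian. -/
noncomputable def redLap {V : Type*} [Fintype V] (G : SimpleGraph V) (u : V) :
    Matrix {w : V // w ≠ u} {w : V // w ≠ u} ℝ :=
  (G.lapMatrix ℝ).submatrix (fun w => (w : V)) (fun w => (w : V))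

open Classical in
lemma redLap_mulVec {V : Type*} [Fintype V] (G : SimpleGraph V) (u : V) (f : V → ℝ) (hf : f u = 0)
    (x : {w : V // w ≠ u}) :
    (redLap G u).mulVec (fun w => f w) x = lapl G f x := by
  rw [← lapMatrix_mulVec_eq_lapl]
  simp only [Matrix.mulVec, dotProduct, redLap, Matrix.submatrix_apply]
  have h := Finset.sum_subtype (p := fun w => w ≠ u) (F := inferInstance) (Finset.univ.erase u) (by simp)
    (fun w => G.lapMatrix ℝ x w * f w)
  rw [← Finset.add_sum_erase _ _ (Finset.mem_univ u), hf, mul_zero, zero_add, h]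

open Classical in
lemma redLap_det_ne {V : Type*} [Fintype V] {G : SimpleGraph V} (hG : G.Connected) (u : V) :
    (redLap G u).det ≠ 0 := by
  intro h
  obtain ⟨g, hg0, hg⟩ := Matrix.exists_mulVec_eq_zero_iff.2 h
  let f : V → ℝ := fun w => if h : w ≠ u then g ⟨w, h⟩ else 0
  have hfu : f u = 0 := by simp [f]
  have hfg : (fun w : {w : V // w ≠ u} => f w) = g := by
    ext w
    simp [f, w.2]
  have hl : IsPot G u u f := isPot_of_ne (c := u) (fun x hx => by
    have := redLap_mulVec G u f hfu ⟨x, hx⟩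
    rw [hfg, hg] at this
    rw [← this]; simp)
  apply hg0
  rw [← hfg]
  ext w
  have := const_of_lapl hG (f := f) (fun x => by rw [hl x]; simp) w u
  rw [this, hfu]; rfl

lemma exists_pot {V : Type*} [Fintype V] {G : SimpleGraph V} (hG : G.Connected) (a b : V) :
    ∃ f, IsPot G a b f := by
  classical
  have hdet := redLap_det_ne hG a
  let d : {w : V // w ≠ a} → ℝ := fun w => (if (w:V) = a then 1 else 0) - (if (w:V) = b then 1 else 0)
  let g := (redLap G a)⁻¹.mulVec d
  have hg : (redLap G a).mulVec g = d := by
    simp only [g, Matrix.mulVec_mulVec]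
    rw [Matrix.mul_nonsing_inv _ (isUnit_iff_ne_zero.2 hdet), Matrix.one_mulVec]
  let f : V → ℝ := fun w => if h : w ≠ a then g ⟨w, h⟩ else 0
  have hfu : f a = 0 := by simp [f]
  have hfg : (fun w : {w : V // w ≠ a} => f w) = g := by
    ext w
    simp [f, w.2]
  refine ⟨f, isPot_of_ne (c := a) (fun x hx => ?_)⟩
  have := redLap_mulVec G a f hfu ⟨x, hx⟩
  rw [hfg, hg] at this
  rw [← this]

lemma effRes_eq {V : Type*} [Fintype V] {G : SimpleGraph V} (hG : G.Connected) {a b : V}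
    {f : V → ℝ} (hf : IsPot G a b f) : effRes G a b = f a - f b := by
  classical
  have e1 : effRes G a b = if a = b then 0
      else Matrix.det ((G.lapMatrix ℝ).submatrix
        (fun w : {w : V // w ≠ a ∧ w ≠ b} => (w : V)) (fun w => (w : V)))
      / Matrix.det (redLap G a) := by
    unfold effRes redLap
    congr!
  rw [e1]
  by_cases hab : a = b
  · simp [hab]
  rw [if_neg hab]
  have hdet := redLap_det_ne hG a
  have hba : b ≠ a := fun h => hab h.symm
  have h1 : Matrix.det ((G.lapMatrix ℝ).submatrix
        (fun w : {w : V // w ≠ a ∧ w ≠ b} => (w : V)) (fun w => (w : V)))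
      = (redLap G a).adjugate ⟨b, hba⟩ ⟨b, hba⟩ := by
    rw [adjugate_diag]
    let e : {w : V // w ≠ a ∧ w ≠ b} ≃ {w : {w : V // w ≠ a} // w ≠ ⟨b, hba⟩} :=
      { toFun := fun w => ⟨⟨w.1, w.2.1⟩, fun h => w.2.2 (congrArg Subtype.val h)⟩
        invFun := fun w => ⟨w.1.1, w.1.2, fun h => w.2 (Subtype.ext h)⟩
        left_inv := fun w => rfl
        right_inv := fun w => rfl }
    rw [← Matrix.det_submatrix_equiv_self e]
    rfl
  let g : V → ℝ := fun x => f x - f a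
  have hg : ∀ x, lapl G g x = lapl G f x := fun x => by
    have := lapl_sub G f (fun _ => f a) x
    rw [lapl_const, sub_zero] at this
    exact this
  have h2 : (redLap G a).mulVec (fun w => g w) = fun w => - (Pi.single ⟨b, hba⟩ 1 : _ → ℝ) w := by
    ext x
    rw [redLap_mulVec G a g (by simp [g]), hg, hf, if_neg x.2]
    obtain ⟨x, hx⟩ := x
    simp [Pi.single_apply]
  have h3 := congrArg (fun z => (redLap G a).adjugate.mulVec z ⟨b, hba⟩) h2
  simp only [Matrix.mulVec_mulVec, Matrix.adjugate_mul, Matrix.smul_mulVec, Matrix.one_mulVec] at h3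
  have h4 : (redLap G a).adjugate.mulVec (fun w => - (Pi.single ⟨b, hba⟩ 1 : _ → ℝ) w) ⟨b, hba⟩
      = - (redLap G a).adjugate ⟨b, hba⟩ ⟨b, hba⟩ := by
    simp [Matrix.mulVec, dotProduct, Pi.single_apply]
  rw [h4] at h3
  simp only [Pi.smul_apply, smul_eq_mul, g] at h3
  rw [h1, div_eq_iff hdet]
  linarith

lemma IsPot.neg {V : Type*} [Fintype V] {G : SimpleGraph V} {a b : V} {f : V → ℝ}
    (hf : IsPot G a b f) : IsPot G b a (fun x => - f x) := by
  intro x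
  rw [lapl_neg, hf x]; ring

lemma IsPot.sub {V : Type*} [Fintype V] {G : SimpleGraph V} {a b c : V} {f g : V → ℝ}
    (hf : IsPot G a b f) (hg : IsPot G a c g) : IsPot G c b (fun x => f x - g x) := by
  intro x
  rw [lapl_sub, hf x, hg x]; ring

lemma IsPot.recip {V : Type*} [Fintype V] {G : SimpleGraph V} {a b c d : V} {f g : V → ℝ}
    (hf : IsPot G a b f) (hg : IsPot G c d g) : g a - g b = f c - f d := by
  classical
  have := lapl_symm G f g
  simp only [hf _, hg _] at this
  simpa [mul_sub, Finset.sum_sub_distrib] using this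

lemma effRes_symm {V : Type*} [Fintype V] {G : SimpleGraph V} (hG : G.Connected) (a b : V) :
    effRes G a b = effRes G b a := by
  obtain ⟨f, hf⟩ := exists_pot hG a b
  rw [effRes_eq hG hf, effRes_eq hG hf.neg]; ring

lemma effRes_self {V : Type*} [Finite V] (G : SimpleGraph V) (a : V) :
    effRes G a a = 0 := by
  simp [effRes]

lemma effRes_pos {V : Type*} [Fintype V] {G : SimpleGraph V} (hG : G.Connected) {a b : V}
    (hab : a ≠ b) : 0 < effRes G a b := by
  classical
  obtain ⟨f, hf⟩ := exists_pot hG a b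
  rw [effRes_eq hG hf]
  have h1 : ∑ x, f x * lapl G f x = f a - f b := by
    simp [hf _, mul_sub, Finset.sum_sub_distrib]
  have h2 : Matrix.toLinearMap₂' ℝ (G.lapMatrix ℝ) f f = f a - f b := by
    rw [Matrix.toLinearMap₂'_apply', dotProduct, ← h1]
    simp only [lapMatrix_mulVec_eq_lapl]
  have h3 : 0 ≤ f a - f b := by
    rw [← h2, SimpleGraph.lapMatrix_toLinearMap₂']
    refine div_nonneg (Finset.sum_nonneg fun i _ => Finset.sum_nonneg fun j _ => ?_) (by norm_num)
    split_ifs <;> positivity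
  refine lt_of_le_of_ne h3 fun h => ?_
  rw [← h] at h2
  have h5 := (SimpleGraph.lapMatrix_toLinearMap₂'_apply'_eq_zero_iff_forall_adj G (R := ℝ) f).1 h2
  have h6 : lapl G f a = 0 := by
    unfold lapl
    refine Finset.sum_eq_zero fun y _ => ?_
    split_ifs with h
    · rw [h5 a y h, sub_self]
    · rfl
  rw [hf a] at h6
  simp [hab] at h6

lemma lapl_congr {V : Type*} [Fintype V] {G : SimpleGraph V} {f g : V → ℝ} {x : V}
    (h : ∀ y, G.Adj x y → f x - f y = g x - g y) : lapl G f x = lapl G g x := by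
  classical
  unfold lapl
  refine Finset.sum_congr rfl fun y _ => ?_
  split_ifs with hy
  · exact h y hy
  · rfl

lemma lapl_eq_zero {V : Type*} [Fintype V] {G : SimpleGraph V} {f : V → ℝ} {x : V}
    (h : ∀ y, G.Adj x y → f x = f y) : lapl G f x = 0 := by
  rw [← lapl_const G 0 x]
  exact lapl_congr fun y hy => by rw [h y hy]; ring

lemma effRes_retract {V W : Type*} [Fintype V] [Fintype W] {G : SimpleGraph V}
    {Γ : SimpleGraph W} (hG : G.Connected) (hΓ : Γ.Connected) (ι : W → V) (ρ : V → W)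
    (h1 : ∀ x, ρ (ι x) = x) (h2 : ∀ x y, G.Adj (ι x) (ι y) ↔ Γ.Adj x y)
    (h3 : ∀ z y, G.Adj z y → (z ∉ Set.range ι ∨ y ∉ Set.range ι) → ρ z = ρ y) (a b : W) :
    effRes G (ι a) (ι b) = effRes Γ a b := by
  classical
  have hinj : Function.Injective ι := Function.LeftInverse.injective h1
  obtain ⟨f, hf⟩ := exists_pot hΓ a b
  have hp : IsPot G (ι a) (ι b) (fun z => f (ρ z)) := by
    intro z
    by_cases hz : z ∈ Set.range ι
    · obtain ⟨w, rfl⟩ := hz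
      have : lapl G (fun z => f (ρ z)) (ι w) = lapl Γ f w := by
        unfold lapl
        symm
        apply Fintype.sum_of_injective ι hinj
        · intro y hy
          split_ifs with h
          · show f (ρ _) - f (ρ _) = 0
            rw [h3 _ _ h (Or.inr hy), sub_self]
          · rfl
        · intro y
          simp only [h1, h2]
      rw [this, hf w]
      simp only [hinj.eq_iff]
    · rw [lapl_eq_zero (fun y hy => by rw [h3 z y hy (Or.inl hz)]), if_neg, if_neg, sub_zero]
      · rintro rfl
        exact hz ⟨_, rfl⟩
      · rintro rfl
        exact hz ⟨_, rfl⟩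
  rw [effRes_eq hG hp, effRes_eq hΓ hf, h1, h1]

lemma effRes_cut {V : Type*} [Fintype V] {G : SimpleGraph V} (hG : G.Connected) (S : Set V) (v : V)
    (hv : v ∈ S) (hS : ∀ x ∈ S, ∀ y ∉ S, G.Adj x y → x = v) (a b : V) (ha : a ∈ S) (hb : b ∉ S) :
    effRes G a b = effRes G a v + effRes G v b := by
  classical
  obtain ⟨f, hf⟩ := exists_pot hG a v
  obtain ⟨g, hg⟩ := exists_pot hG v b
  have hf' : IsPot G a v (fun x => if x ∈ S then f x else f v) := by
    apply isPot_of_ne (c := v)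
    intro x hx
    by_cases hxS : x ∈ S
    · rw [← hf x]
      refine lapl_congr fun y hy => ?_
      have : y ∈ S := by
        by_contra h
        exact hx (hS x hxS y h hy)
      simp [hxS, this]
    · rw [lapl_eq_zero, if_neg, if_neg hx, sub_zero]
      · rintro rfl
        exact hxS ha
      · intro y hy
        by_cases hyS : y ∈ S
        · have := hS y hyS x hxS hy.symm
          subst this
          simp [hxS]
        · simp [hxS, hyS]
  have hg' : IsPot G v b (fun x => if x ∈ S then g v else g x) := by
    apply isPot_of_ne (c := v)
    intro x hx
    by_cases hxS : x ∈ S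
    · rw [lapl_eq_zero, if_neg hx, if_neg, sub_zero]
      · rintro rfl
        exact hb hxS
      · intro y hy
        have : y ∈ S := by
          by_contra h
          exact hx (hS x hxS y h hy)
        simp [hxS, this]
    · rw [← hg x]
      refine lapl_congr fun y hy => ?_
      by_cases hyS : y ∈ S
      · have := hS y hyS x hxS hy.symm
        subst this
        simp [hxS, hyS]
      · simp [hxS, hyS]
  rw [effRes_eq hG hf, effRes_eq hG hg, effRes_eq hG (hg'.sub hf'.neg)]
  simp only [ha, hb, if_true, if_false]
  ring

lemma local_rule {V : Type*} [Fintype V] {G : SimpleGraph V} (hG : G.Connected) {w x : V} (y : V)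
    {f : V → ℝ} (hf : IsPot G w x f) :
    effRes G w y + effRes G w x - effRes G y x = 2 * (f w - f y) := by
  obtain ⟨g, hg⟩ := exists_pot hG w y
  have := hf.recip hg
  rw [effRes_eq hG hf, effRes_eq hG hg, effRes_eq hG (hf.sub hg)]
  linarith

lemma lapl_two {V : Type*} [Fintype V] {G : SimpleGraph V} {w a c : V} (hac : a ≠ c)
    (h : ∀ y, G.Adj w y ↔ y = a ∨ y = c) (f : V → ℝ) :
    lapl G f w = (f w - f a) + (f w - f c) := by
  classical
  unfold lapl
  simp only [h]
  rw [← Finset.sum_filter]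
  have : Finset.univ.filter (fun y => y = a ∨ y = c) = {a, c} := by
    ext; simp
  rw [this, Finset.sum_pair hac]

lemma edge_eq {V : Type*} [Fintype V] {G : SimpleGraph V} (hG : G.Connected) {w a c : V}
    (hac : a ≠ c) (h : ∀ y, G.Adj w y ↔ y = a ∨ y = c) :
    effRes G w a = effRes G w c := by
  classical
  have hwa : w ≠ a := fun e => G.ne_of_adj ((h a).2 (Or.inl rfl)) e
  have hwc : w ≠ c := fun e => G.ne_of_adj ((h c).2 (Or.inr rfl)) e
  obtain ⟨f, hf⟩ := exists_pot hG w a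
  obtain ⟨g, hg⟩ := exists_pot hG w c
  have h1 := hf.recip hg
  have h2 := hf w
  have h3 := hg w
  rw [lapl_two hac h] at h2 h3
  simp only [if_true, hwa, hwc, if_false] at h2 h3
  rw [effRes_eq hG hf, effRes_eq hG hg]
  linarith

open Classical in
lemma cycle_const {V : Type*} [Fintype V] {G : SimpleGraph V} (hG : G.Connected)
    (h2 : ∀ x, {y | G.Adj x y}.ncard = 2) (a b : V) :
    ∑ x, effRes G a x = ∑ x, effRes G b x := by
  set S : V → ℝ := fun w => ∑ y, if G.Adj w y then effRes G w y else 0 with hSdef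
  have hS : ∀ w y, G.Adj w y → S w = 2 * effRes G w y := by
    intro w y hy
    obtain ⟨p, q, hpq, he⟩ := Set.ncard_eq_two.1 (h2 w)
    have hadj : ∀ z, G.Adj w z ↔ z = p ∨ z = q := by
      intro z
      have : z ∈ {y | G.Adj w y} ↔ z ∈ ({p, q} : Set V) := by rw [he]
      simpa using this
    have hpqe := edge_eq hG hpq hadj
    have hSw : S w = effRes G w p + effRes G w q := by
      simp only [hSdef, hadj]
      rw [← Finset.sum_filter]
      have : Finset.univ.filter (fun y => y = p ∨ y = q) = {p, q} := by
        ext; simp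
      rw [this, Finset.sum_pair hpq]
    rcases (hadj y).1 hy with rfl | rfl <;> linarith
  have hSc : ∀ x y, S x = S y := const_of_lapl hG fun x => lapl_eq_zero fun y hy => by
    rw [hS x y hy, hS y x hy.symm, effRes_symm hG]
  set K : V → ℝ := fun w => ∑ x, effRes G w x with hK
  have hcol : ∀ x w, lapl G (fun z => effRes G z x) w = 2 * (1 - if w = x then 1 else 0) - S w := by
    intro x w
    obtain ⟨f, hf⟩ := exists_pot hG w x
    have h := hf w
    rw [if_pos rfl] at h
    rw [← h, lapl, lapl, hSdef, Finset.mul_sum, ← Finset.sum_sub_distrib]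
    refine Finset.sum_congr rfl fun y _ => ?_
    split_ifs
    · have := local_rule hG y hf
      linarith
    · ring
  have hKl : ∀ w, lapl G K w = ∑ x, (2 * (1 - if w = x then 1 else 0) - S w) := by
    intro w
    simp only [← hcol]
    unfold lapl
    rw [Finset.sum_comm]
    refine Finset.sum_congr rfl fun y _ => ?_
    split_ifs
    · rw [hK, Finset.sum_sub_distrib]
    · simp
  have hKl2 : ∀ w, lapl G K w = 2 * ((Fintype.card V : ℝ) - 1) - Fintype.card V * S w := by
    intro w
    rw [hKl, Finset.sum_sub_distrib, ← Finset.mul_sum, Finset.sum_sub_distrib]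
    simp
  have hconst : ∀ w, lapl G K w = lapl G K a := fun w => by rw [hKl2, hKl2, hSc w a]
  have hz : lapl G K a = 0 := by
    have h := lapl_sum G K
    simp only [hconst] at h
    rw [Finset.sum_const, nsmul_eq_mul] at h
    rcases mul_eq_zero.1 h with h | h
    · exfalso
      have : Nonempty V := ⟨a⟩
      have : (Finset.univ : Finset V).card ≠ 0 := Fintype.card_ne_zero
      exact this (by exact_mod_cast h)
    · exact h
  exact const_of_lapl hG (f := K) (fun w => by rw [hconst, hz]) a b

open Classical in
/-- The real-valued degree. -/
noncomputable def dg {V : Type*} [Fintype V] (G : SimpleGraph V) (x : V) : ℝ :=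
  ∑ y, if G.Adj x y then 1 else 0

lemma degRes_eq {V : Type*} [Fintype V] (G : SimpleGraph V) :
    degRes G = (1 / 2) * ∑ u : V, ∑ v : V, (dg G u + dg G v) * effRes G u v := by
  classical
  have hd : ∀ x, dg G x = (G.degree x : ℝ) := by
    intro x
    rw [SimpleGraph.degree_eq_sum_if_adj, dg]
  simp only [hd]
  unfold degRes
  congr!

section Pend

variable {V : Type*} (G : SimpleGraph V) (w : V) (r : ℕ)

lemma pend_ll (x y : V) :
    (addPendents G w r).Adj (Sum.inl x) (Sum.inl y) ↔ G.Adj x y := by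
  simp only [addPendents, SimpleGraph.fromRel_adj]
  constructor
  · rintro ⟨_, (⟨a, b, ha, hb, h⟩ | ⟨_, i, hi⟩) | (⟨a, b, ha, hb, h⟩ | ⟨_, i, hi⟩)⟩
    · cases ha; cases hb; exact h
    · cases hi
    · cases ha; cases hb; exact h.symm
    · cases hi
  · intro h
    refine ⟨fun e => G.ne_of_adj h (Sum.inl.inj e), Or.inl (Or.inl ⟨x, y, rfl, rfl, h⟩)⟩

lemma pend_lr (x : V) (i : Fin r) :
    (addPendents G w r).Adj (Sum.inl x) (Sum.inr i) ↔ x = w := by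
  simp [addPendents]

lemma pend_rl (x : V) (i : Fin r) :
    (addPendents G w r).Adj (Sum.inr i) (Sum.inl x) ↔ x = w := by
  rw [SimpleGraph.adj_comm, pend_lr]

lemma pend_rr (i j : Fin r) :
    ¬ (addPendents G w r).Adj (Sum.inr i) (Sum.inr j) := by
  simp [addPendents]

variable {G}

lemma pend_conn (hG : G.Connected) : (addPendents G w r).Connected := by
  have hl : ∀ x, (addPendents G w r).Reachable (Sum.inl x) (Sum.inl w) := by
    intro x
    let φ : G →g addPendents G w r := ⟨Sum.inl, fun {a b} h => (pend_ll G w r a b).2 h⟩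
    exact (hG.preconnected x w).map φ
  have ha : ∀ z, (addPendents G w r).Reachable z (Sum.inl w) := by
    rintro (x | i)
    · exact hl x
    · exact ((pend_rl G w r w i).2 rfl).reachable
  have : Nonempty (V ⊕ Fin r) := ⟨Sum.inl w⟩
  exact ⟨fun a b => (ha a).trans (ha b).symm⟩

variable [Fintype V]

lemma pend_res_ll (hG : G.Connected) (x y : V) :
    effRes (addPendents G w r) (Sum.inl x) (Sum.inl y) = effRes G x y := by
  apply effRes_retract (pend_conn w r hG) hG Sum.inl (Sum.elim id (fun _ => w))
  · simp
  · exact pend_ll G w r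
  · rintro (a | i) (b | j) h hr
    · simp at hr
    · simpa using (pend_lr G w r a j).1 h
    · simpa using ((pend_rl G w r b i).1 h).symm
    · simp

lemma pend_res_w (hG : G.Connected) (i : Fin r) :
    effRes (addPendents G w r) (Sum.inr i) (Sum.inl w) = 1 := by
  classical
  have hp : IsPot (addPendents G w r) (Sum.inr i) (Sum.inl w)
      (fun z => if z = Sum.inr i then 1 else 0) := by
    apply isPot_of_ne (c := Sum.inl w)
    rintro (x | j) hx
    · have hx' : x ≠ w := fun h => hx (by rw [h])
      rw [lapl_eq_zero]
      · simp [hx']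
      · rintro (y | k) hy
        · simp
        · exact absurd ((pend_lr G w r x k).1 hy) hx'
    · simp only [lapl, Fintype.sum_sum_type, pend_rl, pend_rr]
      simp
  rw [effRes_eq (pend_conn w r hG) hp]
  simp

lemma pend_cut (hG : G.Connected) (i : Fin r) (b : V ⊕ Fin r) (hb : b ≠ Sum.inr i) :
    effRes (addPendents G w r) (Sum.inr i) b
      = 1 + effRes (addPendents G w r) (Sum.inl w) b := by
  by_cases hbw : b = Sum.inl w
  · rw [hbw, pend_res_w w r hG, effRes_self, add_zero]
  rw [effRes_cut (pend_conn w r hG) {Sum.inr i, Sum.inl w} (Sum.inl w) (by simp) _ _ b (by simp)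
    (by simp [hb, hbw]), pend_res_w w r hG]
  rintro x (rfl | rfl) y hy h
  · rcases y with y | j
    · rw [pend_rl] at h
      subst h
      simp at hy
    · exact absurd h (pend_rr G w r i j)
  · rfl

lemma pend_res_rl (hG : G.Connected) (x : V) (i : Fin r) :
    effRes (addPendents G w r) (Sum.inr i) (Sum.inl x) = 1 + effRes G w x := by
  rw [pend_cut w r hG i _ (by simp), pend_res_ll w r hG]

lemma pend_res_lr (hG : G.Connected) (x : V) (i : Fin r) :
    effRes (addPendents G w r) (Sum.inl x) (Sum.inr i) = 1 + effRes G w x := by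
  rw [effRes_symm (pend_conn w r hG), pend_res_rl w r hG]

lemma pend_res_rr (hG : G.Connected) (i j : Fin r) :
    effRes (addPendents G w r) (Sum.inr i) (Sum.inr j) = if i = j then 0 else 2 := by
  split_ifs with h
  · rw [h, effRes_self]
  · rw [pend_cut w r hG i _ (by simpa using fun e => h e.symm),
      effRes_symm (pend_conn w r hG), pend_res_w w r hG]
    norm_num

open Classical in
lemma pend_dg_l (x : V) : dg (addPendents G w r) (Sum.inl x) = dg G x + if x = w then (r:ℝ) else 0 := by
  simp only [dg, Fintype.sum_sum_type, pend_ll, pend_lr]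
  simp

lemma pend_dg_r (i : Fin r) : dg (addPendents G w r) (Sum.inr i) = 1 := by
  classical
  simp only [dg, Fintype.sum_sum_type, pend_rl, pend_rr]
  simp

lemma degRes_pend (hG : G.Connected) :
    degRes (addPendents G w r) = degRes G + r * (∑ x, (dg G x + 2) * effRes G w x)
      + (r * ∑ x, (dg G x + 1) + r * r +
        (1 / 2) * ∑ i : Fin r, ∑ j : Fin r, (1 + 1) * (if i = j then (0:ℝ) else 2)) := by
  classical
  rw [degRes_eq, degRes_eq]
  simp only [Fintype.sum_sum_type, pend_dg_l, pend_dg_r, pend_res_ll w r hG, pend_res_rl w r hG,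
    pend_res_lr w r hG, pend_res_rr w r hG]
  have h1 : ∀ x, ∑ y, (dg G x + (if x = w then (r:ℝ) else 0) + (dg G y + if y = w then (r:ℝ) else 0))
      * effRes G x y = ∑ y, (dg G x + dg G y) * effRes G x y
        + (if x = w then r * ∑ y, effRes G w y else 0) + r * effRes G w x := by
    intro x
    have e : ∀ y, (dg G x + (if x = w then (r:ℝ) else 0) + (dg G y + if y = w then (r:ℝ) else 0))
      * effRes G x y = (dg G x + dg G y) * effRes G x y + (if x = w then r * effRes G w y else 0)
        + (if y = w then r * effRes G w x else 0) := by
      intro y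
      by_cases hx : x = w <;> by_cases hy : y = w
      · subst hx; subst hy; simp; ring
      · subst hx; simp [hy]; ring
      · subst hy; simp [hx]; rw [effRes_symm hG x y]; ring
      · simp [hx, hy]
    simp only [e, Finset.sum_add_distrib]
    congr 1
    · congr 1
      split_ifs <;> simp [Finset.mul_sum]
    · simp
  have h2 : ∑ x, (dg G x + (if x = w then (r:ℝ) else 0) + 1) * (1 + effRes G w x)
      = ∑ x, (dg G x + 1) + ∑ x, (dg G x + 1) * effRes G w x + r := by
    have e : ∀ x, (dg G x + (if x = w then (r:ℝ) else 0) + 1) * (1 + effRes G w x)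
      = (dg G x + 1) + (dg G x + 1) * effRes G w x + if x = w then (r:ℝ) else 0 := by
      intro x
      by_cases hx : x = w
      · subst hx; simp [effRes_self]; ring
      · simp [hx]; ring
    simp only [e, Finset.sum_add_distrib]
    simp
  have h2' : ∑ x, (1 + (dg G x + (if x = w then (r:ℝ) else 0))) * (1 + effRes G w x)
      = ∑ x, (dg G x + 1) + ∑ x, (dg G x + 1) * effRes G w x + r := by
    rw [← h2]
    exact Finset.sum_congr rfl fun x _ => by ring
  have h3 : ∑ x, ∑ i : Fin r, (dg G x + (if x = w then (r:ℝ) else 0) + 1) * (1 + effRes G w x)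
      = r * (∑ x, (dg G x + 1) + ∑ x, (dg G x + 1) * effRes G w x + r) := by
    rw [← h2, Finset.mul_sum]
    simp
  have h4 : ∑ x, (dg G x + 2) * effRes G w x
      = ∑ x, (dg G x + 1) * effRes G w x + ∑ x, effRes G w x := by
    rw [← Finset.sum_add_distrib]
    exact Finset.sum_congr rfl fun x _ => by ring
  simp only [Finset.sum_add_distrib, h1, h2', h3, h4]
  simp only [Finset.sum_const, Finset.card_univ, Fintype.card_fin, nsmul_eq_mul,
    Finset.sum_ite_eq', Finset.mem_univ, if_true, ← Finset.mul_sum]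
  ring

end Pend

lemma no_chord {V : Type*} {G : SimpleGraph V} (hG : IsCactus G) [Finite V] (C : G.Subgraph)
    (hC : IsCycleSubgraph C) {x y : V} (hx : x ∈ C.verts) (hy : y ∈ C.verts) (h : G.Adj x y) :
    C.Adj x y := by
  by_contra hn
  obtain ⟨q, hq⟩ := (hC.1.preconnected ⟨y, hy⟩ ⟨x, hx⟩).exists_isPath
  let p : G.Walk y x := q.map C.hom
  have hp : p.IsPath := hq.map C.hom_injective
  have hpe : s(x, y) ∉ p.edges := by
    intro he
    have he' : s(x, y) ∈ (q.map C.hom).edges := he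
    rw [SimpleGraph.Walk.edges_map, List.mem_map] at he'
    obtain ⟨e, he, hee⟩ := he'
    have h1 := q.edges_subset_edgeSet he
    induction e with
    | h a b =>
      rw [SimpleGraph.mem_edgeSet, SimpleGraph.Subgraph.coe_adj] at h1
      simp only [Sym2.map_mk, SimpleGraph.Subgraph.hom_apply] at hee
      rcases Sym2.eq_iff.1 hee with ⟨h2, h3⟩ | ⟨h2, h3⟩
      · rw [h2, h3] at h1; exact hn h1
      · rw [h2, h3] at h1; exact hn h1.symm
  have hc : (SimpleGraph.Walk.cons h p).IsCycle :=
    (SimpleGraph.Walk.cons_isCycle_iff p h).2 ⟨hp, hpe⟩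
  set c := SimpleGraph.Walk.cons h p with hcdef
  have hcyc : IsCycleSubgraph c.toSubgraph := by
    refine ⟨c.toSubgraph_connected.coe, fun z hz => ?_⟩
    exact hc.ncard_neighborSet_toSubgraph_eq_two (c.mem_verts_toSubgraph.1 hz)
  have hcxy : c.toSubgraph.Adj x y := by
    simp [hcdef]
  have hne : c.toSubgraph ≠ C := by
    intro e
    rw [e] at hcxy
    exact hn hcxy
  have h1 := hG.2 _ _ hcyc hC hne
  have hsub : ({x, y} : Set V) ⊆ c.toSubgraph.verts ∩ C.verts := by
    rintro z (rfl | rfl)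
    · exact ⟨c.toSubgraph.edge_vert hcxy, hx⟩
    · exact ⟨c.toSubgraph.edge_vert hcxy.symm, hy⟩
  have h2 := Set.ncard_le_ncard hsub (Set.toFinite _)
  rw [Set.ncard_pair (G.ne_of_adj h)] at h2
  omega

lemma dg_eq_ncard {V : Type*} [Fintype V] (G : SimpleGraph V) (x : V) :
    dg G x = ({y | G.Adj x y}.ncard : ℝ) := by
  classical
  rw [dg, Finset.sum_boole, Set.ncard_eq_toFinset_card']
  congr 2
  ext; simp

lemma main_ineq {V : Type*} [Fintype V] {G : SimpleGraph V} (hG : IsCactus G)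
    (C : G.Subgraph) (hC : IsCycleSubgraph C)
    (v : V) (hvC : v ∈ C.verts)
    (hanchor : ∃ y ∉ C.verts, G.Adj v y)
    (huniq : ∀ x ∈ C.verts, (∃ y ∉ C.verts, G.Adj x y) → x = v)
    (u : V) (huC : u ∈ C.verts) (huv : u ≠ v) :
    ∑ x, (dg G x + 2) * effRes G v x < ∑ x, (dg G x + 2) * effRes G u x := by
  classical
  have hR := effRes_pos hG.1 huv
  have hadj : ∀ x y : C.verts, G.Adj x y ↔ C.coe.Adj x y := fun x y =>
    ⟨fun h => no_chord hG C hC x.2 y.2 h, fun h => C.adj_sub h⟩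
  have hres : ∀ x y : C.verts, effRes G (x : V) y = effRes C.coe x y := by
    apply effRes_retract hG.1 hC.1 Subtype.val
      (fun z => if h : z ∈ C.verts then ⟨z, h⟩ else ⟨v, hvC⟩)
    · intro x; simp
    · exact hadj
    · intro z y h hzy
      simp only [Subtype.range_coe_subtype, Set.setOf_mem_eq] at hzy
      by_cases hz : z ∈ C.verts <;> by_cases hy : y ∈ C.verts
      · simp [hz, hy] at hzy
      · have := huniq z hz ⟨y, hy, h⟩
        simp [hz, hy, this]
      · have := huniq y hy ⟨z, hz, h.symm⟩
        simp [hz, hy, this]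
      · simp [hz, hy]
  have hdeg2 : ∀ x : C.verts, {y | C.coe.Adj x y}.ncard = 2 := by
    intro x
    rw [← hC.2 x x.2, ← Set.ncard_image_of_injective _ Subtype.val_injective]
    congr 1
    ext y
    simp only [Set.mem_image, Set.mem_setOf_eq, SimpleGraph.Subgraph.coe_adj]
    constructor
    · rintro ⟨y, h, rfl⟩; exact h
    · intro h; exact ⟨⟨y, C.edge_vert h.symm⟩, h, rfl⟩
  have hsum : ∑ x : C.verts, (effRes G u x - effRes G v x) = 0 := by
    rw [Finset.sum_sub_distrib, sub_eq_zero]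
    have := cycle_const hC.1 hdeg2 ⟨u, huC⟩ ⟨v, hvC⟩
    simp only [← hres] at this
    exact this
  have hsum' : ∑ x, (if x ∈ C.verts then 4 * (effRes G u x - effRes G v x) else 0) = 0 := by
    rw [← Finset.sum_filter, ← Finset.mul_sum,
      Finset.sum_subtype (p := fun x => x ∈ C.verts) (F := inferInstance) _ (by simp)]
    rw [mul_eq_zero]; right
    convert hsum
  have hdg : ∀ x ∈ C.verts, x ≠ v → dg G x = 2 := by
    intro x hx hxv
    rw [dg_eq_ncard]
    have : {y | G.Adj x y} = {y | C.Adj x y} := by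
      ext y
      refine ⟨fun h => ?_, fun h => C.adj_sub h⟩
      by_cases hy : y ∈ C.verts
      · exact no_chord hG C hC hx hy h
      · exact absurd (huniq x hx ⟨y, hy, h⟩) hxv
    rw [this, hC.2 x hx]; norm_num
  have hdgv : 2 ≤ dg G v := by
    rw [dg_eq_ncard]
    have : ({y | C.Adj v y}).ncard ≤ ({y | G.Adj v y}).ncard :=
      Set.ncard_le_ncard (fun y h => C.adj_sub h) (Set.toFinite _)
    rw [hC.2 v hvC] at this
    exact_mod_cast this
  have hdg0 : ∀ x, 0 ≤ dg G x := fun x => by rw [dg_eq_ncard]; positivity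
  have hout : ∀ x ∉ C.verts, effRes G u x - effRes G v x = effRes G u v := by
    intro x hx
    rw [effRes_cut hG.1 C.verts v hvC (fun a ha b hb h => huniq a ha ⟨b, hb, h⟩) u x huC hx]
    ring
  rw [← sub_pos, ← Finset.sum_sub_distrib, ← hsum']
  obtain ⟨y, hy, -⟩ := hanchor
  apply Finset.sum_lt_sum
  · intro x _
    rw [← mul_sub]
    split_ifs with hx
    · by_cases hxv : x = v
      · subst hxv
        rw [effRes_self, sub_zero]
        nlinarith
      · rw [hdg x hx hxv]
        apply le_of_eq; ring
    · rw [hout x hx]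
      have := hdg0 x
      positivity
  · refine ⟨y, Finset.mem_univ _, ?_⟩
    rw [if_neg hy, ← mul_sub, hout y hy]
    have := hdg0 y
    positivity

end Helpers

/-- Lemma 5: in a cactus without cut edges, attaching `r` pendent edges at a
non-anchor vertex `u` of an end cycle gives a strictly larger degree resistance
distance than attaching them at the anchor `v`. -/
theorem stmt_3 {V : Type*} [Finite V] (n t : ℕ) (ht : 2 ≤ t)
    (G : SimpleGraph V) (hG : MemCact n t G)
    (hbridgeless : ∀ e ∈ G.edgeSet, ¬ G.IsBridge e)
    (C : G.Subgraph) (hC : IsCycleSubgraph C)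
    (v : V) (hvC : v ∈ C.verts)
    (hanchor : ∃ y ∉ C.verts, G.Adj v y)
    (huniq : ∀ x ∈ C.verts, (∃ y ∉ C.verts, G.Adj x y) → x = v)
    (u : V) (huC : u ∈ C.verts) (huv : u ≠ v)
    (r : ℕ) (hr : 1 ≤ r) :
    degRes (addPendents G v r) < degRes (addPendents G u r) := by

  classical
  have := Fintype.ofFinite V
  have hconn := hG.1.1
  rw [degRes_pend v r hconn, degRes_pend u r hconn]
  have h := main_ineq hG.1 C hC v hvC hanchor huniq u huC huv
  have hr' : (0:ℝ) < r := by exact_mod_cast hr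
  have := mul_lt_mul_of_pos_left h hr'
  linarith
end

section
/- Let G ∈ Cact(n;t) with t ≥ 3 and let C_h (h ≥ 4) be a cycle of G such that there is a unique vertex u of C_h adjacent to a vertex in V(G)∖V(C_h). Let v, w be vertices of C_h with uv, vw ∈ E(C_h), and let G* = G − vw + uw (so that v becomes a pendent vertex attached at u and the cycle shrinks to a cycle of length h−1). Then D_R(G) > D_R(G*). -/
open Finset

section LinAlg
variable {ι : Type*} [Fintype ι] [DecidableEq ι]

lemma aux_adjugate_diag (A : Matrix ι ι ℝ) (y : ι) :
    A.adjugate y y = (A.submatrix (fun i : {i : ι // i ≠ y} => (i : ι)) (fun i : {i : ι // i ≠ y} => (i : ι))).det := by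
  rw [Matrix.adjugate_apply, Matrix.twoBlockTriangular_det _ (fun i => i ≠ y)]
  · have h1 : ((A.updateRow y (Pi.single y 1)).toSquareBlockProp fun i => ¬ i ≠ y).det = 1 := by
      have : Subsingleton {i : ι // ¬ i ≠ y} := ⟨fun a b => by
        apply Subtype.ext
        rw [not_not.mp a.2, not_not.mp b.2]⟩
      rw [Matrix.det_eq_elem_of_subsingleton _ ⟨y, by simp⟩]
      simp [Matrix.toSquareBlockProp]
    rw [h1, mul_one]
    congr 1
    ext i j
    simp [Matrix.toSquareBlockProp, Matrix.updateRow_apply, i.2]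
  · intro i hi j hj
    have : i = y := not_not.mp hi
    subst this
    simp [hj]

end LinAlg

section Lap
variable {V : Type*} [Fintype V] [DecidableEq V]

lemma aux_lap_sum (G : SimpleGraph V) [DecidableRel G.Adj] (f : V → ℝ) :
    ∑ z, (G.lapMatrix ℝ).mulVec f z = 0 := by
  have h := G.lapMatrix_mulVec_const_eq_zero (R := ℝ)
  have h2 : ∑ z, (G.lapMatrix ℝ).mulVec f z = (fun _ => (1:ℝ)) ⬝ᵥ (G.lapMatrix ℝ).mulVec f := by
    simp [dotProduct]
  rw [h2, Matrix.dotProduct_mulVec, ← Matrix.mulVec_transpose, (G.isSymm_lapMatrix (R := ℝ)).eq, h]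
  simp

/-- `f` is the grounded potential of `b`, at ground `u`. -/
lemma aux_lap_ground (G : SimpleGraph V) [DecidableRel G.Adj] (f : V → ℝ) (b u : V)
    (h : ∀ z, z ≠ u → (G.lapMatrix ℝ).mulVec f z = if z = b then 1 else 0) (z : V) :
    (G.lapMatrix ℝ).mulVec f z = (if z = b then 1 else 0) - (if z = u then 1 else 0) := by
  by_cases hz : z = u
  · subst hz
    have h0 := aux_lap_sum G f
    rw [← Finset.add_sum_erase _ _ (Finset.mem_univ z)] at h0
    have h1 : ∑ x ∈ univ.erase z, (G.lapMatrix ℝ).mulVec f x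
        = ∑ x ∈ univ.erase z, if x = b then (1:ℝ) else 0 :=
      Finset.sum_congr rfl (fun x hx => h x (Finset.ne_of_mem_erase hx))
    rw [h1, Finset.sum_ite_eq'] at h0
    by_cases hb : z = b
    · subst hb; simp at h0 ⊢; linarith
    · have hb' : b ≠ z := fun e => hb e.symm
      simp [hb, hb'] at h0 ⊢; linarith
  · rw [h z hz]; simp [hz]

/-- Effective resistance from grounded Green function. `g b` is the potential of `b`. -/
lemma aux_effRes (G : SimpleGraph V) [DecidableRel G.Adj] (g : V → V → ℝ) (u : V)
    (h : ∀ b z, z ≠ u → (G.lapMatrix ℝ).mulVec (g b) z = if z = b then 1 else 0) (x y : V) :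
    effRes G x y = g x x + g y y - g x y - g y x := by
  by_cases hxy : x = y
  · subst hxy; simp [effRes]
  have key : effRes G x y = Matrix.det ((G.lapMatrix ℝ).submatrix
        (fun w : {w : V // w ≠ x ∧ w ≠ y} => (w : V)) (fun w => (w : V)))
      / Matrix.det ((G.lapMatrix ℝ).submatrix
        (fun w : {w : V // w ≠ x} => (w : V)) (fun w => (w : V))) := by
    unfold effRes
    rw [if_neg hxy]
    congr!
  rw [key]
  set A := (G.lapMatrix ℝ).submatrix
        (fun w : {w : V // w ≠ x} => (w : V)) (fun w : {w : V // w ≠ x} => (w : V)) with hA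
  let M : Matrix {w : V // w ≠ x} {w : V // w ≠ x} ℝ :=
    fun a b => g b a - g b x - g x a + g x x
  have hAM : A * M = 1 := by
    ext a b
    have hfull : (G.lapMatrix ℝ).mulVec (fun z => g b z - g b x - g x z + g x x) a
        = if (a:V) = b then 1 else 0 := by
      have e : (fun z => g (b:V) z - g b x - g x z + g x x)
          = g b - g x + (g x x - g b x) • (fun _ => (1:ℝ)) := by
        ext z; simp; ring
      rw [e, Matrix.mulVec_add, Matrix.mulVec_sub, Matrix.mulVec_smul,
        G.lapMatrix_mulVec_const_eq_zero]
      simp only [smul_zero, add_zero, Pi.sub_apply]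
      rw [aux_lap_ground G _ _ u (h b), aux_lap_ground G _ _ u (h x)]
      simp [a.2]
    have h1 : (1 : Matrix {w : V // w ≠ x} {w : V // w ≠ x} ℝ) a b = if (a:V) = b then 1 else 0 := by
      rw [Matrix.one_apply]; simp [Subtype.ext_iff]
    rw [h1, ← hfull, Matrix.mul_apply, Matrix.mulVec, dotProduct]
    rw [← Finset.add_sum_erase univ _ (Finset.mem_univ x)]
    simp only [sub_self, zero_sub, neg_add_cancel, mul_zero, zero_add]
    rw [Finset.sum_subtype (univ.erase x) (p := fun w => w ≠ x) (by simp)]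
    rfl
  have hinv : A⁻¹ = M := Matrix.inv_eq_right_inv hAM
  have hy : y ≠ x := fun e => hxy e.symm
  have h3 : A⁻¹ ⟨y, hy⟩ ⟨y, hy⟩ = g x x + g y y - g x y - g y x := by
    rw [hinv]; simp only [M]; ring
  rw [← h3, Matrix.inv_def, Matrix.smul_apply, aux_adjugate_diag, Ring.inverse_eq_inv', smul_eq_mul,
    div_eq_inv_mul]
  congr 1
  let e : {w : V // w ≠ x ∧ w ≠ y} ≃ {i : {w : V // w ≠ x} // i ≠ ⟨y, hy⟩} :=
    { toFun := fun w => ⟨⟨w, w.2.1⟩, fun e => w.2.2 (congrArg Subtype.val e)⟩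
      invFun := fun i => ⟨i.1.1, i.1.2, fun e => i.2 (Subtype.ext e)⟩
      left_inv := fun _ => rfl
      right_inv := fun _ => rfl }
  rw [← Matrix.det_submatrix_equiv_self e]
  rfl

/-- existence of grounded potentials -/
lemma aux_exists_green (G : SimpleGraph V) [DecidableRel G.Adj] (hG : G.Connected) (u b : V) :
    ∃ f : V → ℝ, f u = 0 ∧
      ∀ z, z ≠ u → (G.lapMatrix ℝ).mulVec f z = if z = b then 1 else 0 := by
  let T : (V → ℝ) →ₗ[ℝ] (V → ℝ) :=
    { toFun := fun f z => if z = u then f u else (G.lapMatrix ℝ).mulVec f z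
      map_add' := fun f f' => by
        ext z; by_cases hz : z = u <;> simp [hz, Matrix.mulVec_add]
      map_smul' := fun r f => by
        ext z; by_cases hz : z = u <;> simp [hz, Matrix.mulVec_smul] }
  have hT : ∀ f z, T f z = if z = u then f u else (G.lapMatrix ℝ).mulVec f z := fun _ _ => rfl
  have hinj : Function.Injective T := by
    rw [← LinearMap.ker_eq_bot, LinearMap.ker_eq_bot']
    intro f hf
    have hu : f u = 0 := by have := congrFun hf u; simpa [hT] using this
    have hz : ∀ z, z ≠ u → (G.lapMatrix ℝ).mulVec f z = if z = u then 1 else 0 := by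
      intro z hz; have := congrFun hf z; simpa [hT, hz] using this
    have h0 : (G.lapMatrix ℝ).mulVec f = 0 := by
      ext z; rw [aux_lap_ground G f u u hz]; simp
    rw [SimpleGraph.lapMatrix_mulVec_eq_zero_iff_forall_reachable] at h0
    ext z
    rw [h0 z u (hG.preconnected z u), hu]; rfl
  obtain ⟨f, hf⟩ := (LinearMap.injective_iff_surjective.mp hinj)
    (fun z => if z = u then 0 else if z = b then 1 else 0)
  refine ⟨f, ?_, ?_⟩
  · have := congrFun hf u; simpa [hT] using this
  · intro z hz; have := congrFun hf z; simpa [hT, hz] using this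

lemma aux_degRes (G : SimpleGraph V) [DecidableRel G.Adj] (g : V → V → ℝ) (u : V)
    (h : ∀ b z, z ≠ u → (G.lapMatrix ℝ).mulVec (g b) z = if z = b then 1 else 0) :
    degRes G = (Fintype.card V : ℝ) * ∑ x, (G.degree x : ℝ) * g x x
      + (∑ x, (G.degree x : ℝ)) * ∑ y, g y y
      - ∑ x, ∑ y, (G.degree x : ℝ) * (g x y + g y x) := by
  have key : degRes G = (1 / 2) * ∑ x : V, ∑ y : V,
      ((G.degree x : ℝ) + (G.degree y : ℝ)) * effRes G x y := by
    unfold degRes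
    congr!
  have h1 : ∑ x : V, ∑ y : V, (G.degree y : ℝ) * (g x x + g y y - g x y - g y x)
      = ∑ x : V, ∑ y : V, (G.degree x : ℝ) * (g x x + g y y - g x y - g y x) := by
    rw [Finset.sum_comm]
    refine Finset.sum_congr rfl fun x _ => Finset.sum_congr rfl fun y _ => ?_
    ring
  have h2 : ∑ x : V, ∑ y : V, (G.degree x : ℝ) * (g x x + g y y - g x y - g y x)
      = (Fintype.card V : ℝ) * ∑ x, (G.degree x : ℝ) * g x x
      + (∑ x, (G.degree x : ℝ)) * ∑ y, g y y
      - ∑ x, ∑ y, (G.degree x : ℝ) * (g x y + g y x) := by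
    rw [Finset.sum_mul_sum, Finset.mul_sum, ← Finset.sum_add_distrib, ← Finset.sum_sub_distrib]
    refine Finset.sum_congr rfl fun x _ => ?_
    have : (Fintype.card V : ℝ) * ((G.degree x : ℝ) * g x x) = ∑ y : V, (G.degree x : ℝ) * g x x := by
      simp
    rw [this, ← Finset.sum_add_distrib, ← Finset.sum_sub_distrib]
    refine Finset.sum_congr rfl fun y _ => ?_
    ring
  rw [key, ← h2]
  simp_rw [aux_effRes G g u h, add_mul, Finset.sum_add_distrib]
  rw [h1]
  ring

end Lap

section Sums

/-- Green function of the cycle of length `h` grounded at position `0`. -/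
noncomputable def auxγ (h i j : ℕ) : ℝ := ((min i j : ℕ) : ℝ) * ((h : ℝ) - ((max i j : ℕ) : ℝ)) / h

/-- Green function for the modified side. -/
noncomputable def auxγ' (h i j : ℕ) : ℝ :=
  (if i = 1 ∧ j = 1 then 1 else 0) + auxγ (h - 1) (i - 1) (j - 1)

lemma auxγ_zero_left (h j : ℕ) : auxγ h 0 j = 0 := by simp [auxγ]
lemma auxγ_zero_right (h j : ℕ) : auxγ h j 0 = 0 := by simp [auxγ]
lemma auxγ_comm (h i j : ℕ) : auxγ h i j = auxγ h j i := by
  simp [auxγ, min_comm, max_comm]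
lemma auxγ_top (h j : ℕ) (hj : j ≤ h) : auxγ h j h = 0 := by simp [auxγ, hj]

lemma auxγ_lap (h i j : ℕ) (hi : i + 1 < h) :
    2 * auxγ h j (i + 1) - auxγ h j i - auxγ h j (i + 2) = if i + 1 = j then 1 else 0 := by
  have hpos : (h : ℝ) ≠ 0 := by
    have : h ≠ 0 := by omega
    exact_mod_cast this
  unfold auxγ
  rcases lt_trichotomy j (i + 1) with hlt | heq | hgt
  · rw [min_eq_left (by omega), min_eq_left (by omega), min_eq_left (by omega),
      max_eq_right (by omega), max_eq_right (by omega), max_eq_right (by omega), if_neg (by omega)]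
    push_cast; field_simp; ring
  · subst heq
    rw [min_eq_left (by omega), min_eq_right (by omega), min_eq_left (by omega),
      max_eq_right (by omega), max_eq_left (by omega), max_eq_right (by omega), if_pos rfl]
    push_cast; field_simp; ring
  · rw [min_eq_right (by omega), min_eq_right (by omega), min_eq_right (by omega),
      max_eq_left (by omega), max_eq_left (by omega), max_eq_left (by omega), if_neg (by omega)]
    push_cast; field_simp; ring

lemma auxγ'_zero_left (h j : ℕ) : auxγ' h 0 j = 0 := by simp [auxγ', auxγ_zero_left]
lemma auxγ'_zero_right (h j : ℕ) : auxγ' h j 0 = 0 := by simp [auxγ', auxγ_zero_right]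
lemma auxγ'_comm (h i j : ℕ) : auxγ' h i j = auxγ' h j i := by
  simp [auxγ', and_comm, auxγ_comm]
lemma auxγ'_top (h j : ℕ) (hj : j ≤ h) (hh : 4 ≤ h) : auxγ' h j h = 0 := by
  have : ¬ (j = 1 ∧ h = 1) := by omega
  simp only [auxγ', if_neg this]
  rw [auxγ_top _ _ (by omega)]; simp
lemma auxγ'_one (h j : ℕ) : auxγ' h j 1 = if 1 = j then 1 else 0 := by
  simp [auxγ', auxγ_zero_right, eq_comm]

lemma auxγ'_lap (h i j : ℕ) (hi : i + 3 < h) :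
    2 * auxγ' h j (i + 3) - auxγ' h j (i + 2) - auxγ' h j (i + 4) = if i + 3 = j then 1 else 0 := by
  have := auxγ_lap (h - 1) (i + 1) (j - 1) (by omega)
  simp only [auxγ']
  rw [if_neg (by omega), if_neg (by omega), if_neg (by omega)]
  have e : (i + 3 = j) ↔ (i + 1 + 1 = j - 1) := by omega
  simp only [e, ← this]
  simp

lemma auxγ'_lap2 (h j : ℕ) (hi : 3 < h) :
    2 * auxγ' h j 2 - auxγ' h j 0 - auxγ' h j 3 = if 2 = j then 1 else 0 := by
  have := auxγ_lap (h - 1) 0 (j - 1) (by omega)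
  rw [auxγ'_zero_right]
  simp only [auxγ']
  rw [if_neg (by omega), if_neg (by omega)]
  have e : (2 = j) ↔ (0 + 1 = j - 1) := by omega
  simp only [e, ← this]
  simp [auxγ_zero_right]

lemma aux_row (H : ℝ) (i : ℕ) : ∀ m : ℕ,
    (∑ j ∈ range m, ((min i j : ℕ) : ℝ) * (H - ((max i j : ℕ) : ℝ)))
      = if m ≤ i then (m : ℝ) * (m - 1) / 2 * (H - i)
        else (i : ℝ) * (i - 1) / 2 * (H - i) + i * (H * (m - i) - (m * (m - 1) / 2 - i * (i - 1) / 2)) := by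
  intro m
  induction m with
  | zero => simp
  | succ m ih =>
    rw [Finset.sum_range_succ, ih]
    rcases lt_trichotomy m i with hlt | heq | hgt
    · rw [if_pos (by omega), if_pos (by omega), min_eq_right (by omega), max_eq_left (by omega)]
      push_cast; ring
    · subst heq
      rw [if_pos (by omega), if_neg (by omega), min_self, max_self]
      push_cast; ring
    · rw [if_neg (by omega), if_neg (by omega), min_eq_left (by omega), max_eq_right (by omega)]
      push_cast; ring

lemma auxγ_row (h i : ℕ) (hi : i ≤ h) (hh : 1 ≤ h) :
    ∑ j ∈ range h, auxγ h i j = (i : ℝ) * (h - i) / 2 := by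
  have hpos : (h : ℝ) ≠ 0 := by
    have : h ≠ 0 := by omega
    exact_mod_cast this
  unfold auxγ
  rw [← Finset.sum_div, aux_row]
  split_ifs with hc
  · have : i = h := by omega
    subst this; simp
  · field_simp; ring

lemma aux_sq (H : ℝ) (m : ℕ) : ∑ i ∈ range m, (i : ℝ) * (H - i)
    = H * (m * (m - 1) / 2) - m * (m - 1) * (2 * m - 1) / 6 := by
  induction m with
  | zero => simp
  | succ m ih => rw [Finset.sum_range_succ, ih]; push_cast; ring

lemma auxγ_diag (h : ℕ) (hh : 1 ≤ h) : ∑ i ∈ range h, auxγ h i i = ((h : ℝ) ^ 2 - 1) / 6 := by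
  have hpos : (h : ℝ) ≠ 0 := by
    have : h ≠ 0 := by omega
    exact_mod_cast this
  simp only [auxγ, min_self, max_self]
  rw [← Finset.sum_div, aux_sq]
  field_simp; ring

lemma auxγ_tot (h : ℕ) (hh : 1 ≤ h) :
    ∑ i ∈ range h, ∑ j ∈ range h, auxγ h i j = h * ((h : ℝ) ^ 2 - 1) / 12 := by
  rw [Finset.sum_congr rfl (fun i hi => auxγ_row h i (by simp at hi; omega) hh), ← Finset.sum_div,
    aux_sq]
  ring

lemma auxγ'_diag (h : ℕ) (hh : 4 ≤ h) :
    ∑ i ∈ range h, auxγ' h i i = 1 + (((h : ℝ) - 1) ^ 2 - 1) / 6 := by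
  obtain ⟨k, rfl⟩ : ∃ k, h = k + 1 := ⟨h - 1, by omega⟩
  rw [Finset.sum_range_succ', auxγ'_zero_left]
  simp only [auxγ', Nat.add_sub_cancel, Finset.sum_add_distrib, auxγ_diag k (by omega)]
  have : k ≠ 0 := by omega
  simp [Nat.pos_of_ne_zero this]

lemma auxγ'_tot (h : ℕ) (hh : 4 ≤ h) :
    ∑ i ∈ range h, ∑ j ∈ range h, auxγ' h i j
      = 1 + ((h : ℝ) - 1) * (((h : ℝ) - 1) ^ 2 - 1) / 12 := by
  obtain ⟨k, rfl⟩ : ∃ k, h = k + 1 := ⟨h - 1, by omega⟩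
  rw [Finset.sum_range_succ']
  simp only [auxγ'_zero_left, Finset.sum_const_zero, add_zero]
  simp only [Finset.sum_range_succ', auxγ'_zero_right, add_zero]
  simp only [auxγ', Nat.add_sub_cancel, Finset.sum_add_distrib, auxγ_tot k (by omega)]
  have h0 : ∀ x : ℕ, (∑ y ∈ range k, if x + 1 = 1 ∧ y + 1 = 1 then (1:ℝ) else 0)
      = if x = 0 then 1 else 0 := by
    intro x
    by_cases hx : x = 0
    · subst hx
      have : 0 < k := by omega
      simp [this]
    · simp [hx]
  simp only [h0]
  have : 0 < k := by omega
  simp [this]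

end Sums

section Core
variable {V : Type*} [Fintype V] [DecidableEq V]

lemma aux_two (Γ : SimpleGraph V) [DecidableRel Γ.Adj] (x a b : V) (hab : a ≠ b)
    (hN : ∀ z, Γ.Adj x z ↔ z = a ∨ z = b) :
    Γ.degree x = 2 ∧ ∀ φ : V → ℝ, (Γ.lapMatrix ℝ).mulVec φ x = 2 * φ x - φ a - φ b := by
  have hn : Γ.neighborFinset x = {a, b} := by ext z; simp [hN]
  have hd : Γ.degree x = 2 := by
    rw [← SimpleGraph.card_neighborFinset_eq_degree, hn, Finset.card_pair hab]
  refine ⟨hd, fun φ => ?_⟩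
  rw [SimpleGraph.lapMatrix_mulVec_apply, hn, hd, Finset.sum_pair hab]
  push_cast; ring

lemma aux_one (Γ : SimpleGraph V) [DecidableRel Γ.Adj] (x a : V)
    (hN : ∀ z, Γ.Adj x z ↔ z = a) :
    Γ.degree x = 1 ∧ ∀ φ : V → ℝ, (Γ.lapMatrix ℝ).mulVec φ x = φ x - φ a := by
  have hn : Γ.neighborFinset x = {a} := by ext z; simp [hN]
  have hd : Γ.degree x = 1 := by
    rw [← SimpleGraph.card_neighborFinset_eq_degree, hn, Finset.card_singleton]
  refine ⟨hd, fun φ => ?_⟩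
  rw [SimpleGraph.lapMatrix_mulVec_apply, hn, hd, Finset.sum_singleton]
  push_cast; ring

lemma aux_lap_zero (Γ : SimpleGraph V) [DecidableRel Γ.Adj] (x : V) (φ : V → ℝ) (h0 : φ x = 0)
    (hN : ∀ z, Γ.Adj x z → φ z = 0) : (Γ.lapMatrix ℝ).mulVec φ x = 0 := by
  rw [SimpleGraph.lapMatrix_mulVec_apply, h0, Finset.sum_eq_zero]
  · simp
  · intro z hz; exact hN z (by simpa using hz)

lemma aux_lap_congr (Γ Γ' : SimpleGraph V) [DecidableRel Γ.Adj] [DecidableRel Γ'.Adj] (x : V)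
    (φ ψ : V → ℝ) (hx : φ x = ψ x) (hN : ∀ z, Γ.Adj x z ↔ Γ'.Adj x z)
    (hφ : ∀ z, Γ.Adj x z → φ z = ψ z) :
    Γ.degree x = Γ'.degree x ∧
    (Γ.lapMatrix ℝ).mulVec φ x = (Γ'.lapMatrix ℝ).mulVec ψ x := by
  have hn : Γ.neighborFinset x = Γ'.neighborFinset x := by ext z; simp [hN]
  have hd : Γ.degree x = Γ'.degree x := by
    rw [← SimpleGraph.card_neighborFinset_eq_degree, hn, SimpleGraph.card_neighborFinset_eq_degree]
  refine ⟨hd, ?_⟩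
  rw [SimpleGraph.lapMatrix_mulVec_apply, SimpleGraph.lapMatrix_mulVec_apply, hx, hd, ← hn]
  congr 1
  exact Finset.sum_congr rfl (fun z hz => hφ z (by simpa using hz))

/-- the functional of degrees and Green function -/
noncomputable def auxD (d : V → ℝ) (g : V → V → ℝ) : ℝ :=
  (Fintype.card V : ℝ) * ∑ x, d x * g x x + (∑ x, d x) * ∑ y, g y y
      - ∑ x, ∑ y, d x * (g x y + g y x)

lemma auxD_add (d : V → ℝ) (g g' : V → V → ℝ) : auxD d (g + g') = auxD d g + auxD d g' := by
  simp only [auxD, Pi.add_apply, mul_add, Finset.sum_add_distrib]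
  ring

lemma aux_sum_S (h : ℕ) (c : ℕ → V) (inj : ∀ i j, i < h → j < h → c i = c j → i = j)
    (F : V → ℝ) (hF : ∀ x, (∀ i < h, c i ≠ x) → F x = 0) :
    ∑ x, F x = ∑ i ∈ range h, F (c i) := by
  rw [← Finset.sum_image (f := F) (s := range h) (g := c)]
  · symm
    apply Finset.sum_subset (Finset.subset_univ _)
    intro x _ hx
    apply hF
    intro i hi e
    exact hx (Finset.mem_image.mpr ⟨i, by simpa using hi, e⟩)
  · intro i hi j hj e
    exact inj i j (by simpa using hi) (by simpa using hj) e

/-- lifted function on the cycle. -/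
noncomputable def auxLift (h : ℕ) (c : ℕ → V) (pos : V → ℕ) (γ : ℕ → ℕ → ℝ) (x y : V) : ℝ :=
  if x ∈ (range h).image c ∧ y ∈ (range h).image c then γ (pos x) (pos y) else 0

lemma auxD_lift (h : ℕ) (c : ℕ → V) (inj : ∀ i j, i < h → j < h → c i = c j → i = j)
    (pos : V → ℕ) (hpos : ∀ i < h, pos (c i) = i) (γ : ℕ → ℕ → ℝ) (hγ : ∀ i j, γ i j = γ j i)
    (d : V → ℝ) :
    auxD d (auxLift h c pos γ) = (Fintype.card V : ℝ) * ∑ i ∈ range h, d (c i) * γ i i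
      + (∑ x, d x) * ∑ i ∈ range h, γ i i
      - 2 * ∑ i ∈ range h, d (c i) * ∑ j ∈ range h, γ i j := by
  have hm : ∀ i < h, c i ∈ (range h).image c := fun i hi =>
    Finset.mem_image.mpr ⟨i, by simpa using hi, rfl⟩
  have hn : ∀ x, (∀ i < h, c i ≠ x) → x ∉ (range h).image c := by
    intro x hx hx'
    obtain ⟨i, hi, e⟩ := Finset.mem_image.mp hx'
    exact hx i (by simpa using hi) e
  have hl : ∀ i < h, ∀ j < h, auxLift h c pos γ (c i) (c j) = γ i j := by
    intro i hi j hj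
    simp only [auxLift]
    rw [if_pos ⟨hm i hi, hm j hj⟩, hpos i hi, hpos j hj]
  have hz : ∀ x y, x ∉ (range h).image c ∨ y ∉ (range h).image c → auxLift h c pos γ x y = 0 := by
    intro x y hxy
    simp only [auxLift]
    rw [if_neg (by tauto)]
  unfold auxD
  rw [aux_sum_S h c inj (fun x => d x * auxLift h c pos γ x x)
      (fun x hx => by simp only [hz x x (Or.inl (hn x hx)), mul_zero]),
    aux_sum_S h c inj (fun x => auxLift h c pos γ x x)
      (fun x hx => hz x x (Or.inl (hn x hx))),
    aux_sum_S h c inj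
      (fun x => ∑ y, d x * (auxLift h c pos γ x y + auxLift h c pos γ y x))
      (fun x hx => Finset.sum_eq_zero fun y _ => by
        simp only [hz x y (Or.inl (hn x hx)), hz y x (Or.inr (hn x hx)), add_zero, mul_zero])]
  have e1 : ∑ i ∈ range h, d (c i) * auxLift h c pos γ (c i) (c i)
      = ∑ i ∈ range h, d (c i) * γ i i :=
    Finset.sum_congr rfl fun i hi => by
      rw [hl i (by simpa using hi) i (by simpa using hi)]
  have e2 : ∑ i ∈ range h, auxLift h c pos γ (c i) (c i) = ∑ i ∈ range h, γ i i :=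
    Finset.sum_congr rfl fun i hi => by
      rw [hl i (by simpa using hi) i (by simpa using hi)]
  have e3 : ∑ i ∈ range h, ∑ y, d (c i) * (auxLift h c pos γ (c i) y + auxLift h c pos γ y (c i))
      = 2 * ∑ i ∈ range h, d (c i) * ∑ j ∈ range h, γ i j := by
    rw [Finset.mul_sum]
    refine Finset.sum_congr rfl fun i hi => ?_
    have hi' : i < h := by simpa using hi
    rw [aux_sum_S h c inj
      (fun y => d (c i) * (auxLift h c pos γ (c i) y + auxLift h c pos γ y (c i)))
      (fun y hy => by
        simp only [hz (c i) y (Or.inr (hn y hy)), hz y (c i) (Or.inl (hn y hy)), add_zero,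
          mul_zero])]
    rw [← mul_assoc, Finset.mul_sum]
    refine Finset.sum_congr rfl fun j hj => ?_
    have hj' : j < h := by simpa using hj
    rw [hl i hi' j hj', hl j hj' i hi', hγ j i]
    ring
  rw [e1, e2, e3]

/-- Main computation. -/
lemma aux_core (G G' : SimpleGraph V) [DecidableRel G.Adj] [DecidableRel G'.Adj]
    (hconn : G.Connected) (h : ℕ) (hh : 4 ≤ h) (c : ℕ → V) (hch : c h = c 0)
    (inj : ∀ i j, i < h → j < h → c i = c j → i = j)
    (hN : ∀ i, i + 1 < h → ∀ z, G.Adj (c (i + 1)) z ↔ z = c i ∨ z = c (i + 2))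
    (hout : ∃ y, (∀ i < h, c i ≠ y) ∧ G.Adj (c 0) y)
    (hcard : h + 3 ≤ Fintype.card V)
    (hG' : ∀ x y, G'.Adj x y ↔ (G.Adj x y ∧ s(x, y) ≠ s(c 1, c 2)) ∨ s(x, y) = s(c 0, c 2)) :
    degRes G' < degRes G := by
  set S := (range h).image c with hS
  have hmS : ∀ i < h, c i ∈ S := fun i hi => Finset.mem_image.mpr ⟨i, by simpa using hi, rfl⟩
  have hSm : ∀ x ∈ S, ∃ i < h, c i = x := by
    intro x hx
    obtain ⟨i, hi, e⟩ := Finset.mem_image.mp hx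
    exact ⟨i, by simpa using hi, e⟩
  have hne : ∀ i j, i < h → j < h → i ≠ j → c i ≠ c j := fun i j hi hj hij e =>
    hij (inj i j hi hj e)
  have hmS2 : ∀ i, i ≤ h → c i ∈ S := by
    intro i hi
    rcases Nat.lt_or_ge i h with hlt | hge
    · exact hmS i hlt
    · have : i = h := le_antisymm hi hge
      rw [this, hch]; exact hmS 0 (by omega)
  obtain ⟨pos, hpos⟩ : ∃ pos : V → ℕ, ∀ i < h, pos (c i) = i := by
    have hinj : Set.InjOn c (Set.Iio h) := fun i hi j hj e => inj i j hi hj e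
    exact ⟨Function.invFunOn c (Set.Iio h), fun i hi => hinj.leftInvOn_invFunOn hi⟩
  -- adjacency facts
  have hA2 : ∀ i, i + 1 < h → c i ≠ c (i + 2) := by
    intro i hi
    rcases Nat.lt_or_ge (i + 2) h with hlt | hge
    · exact hne _ _ (by omega) hlt (by omega)
    · have : i + 2 = h := by omega
      rw [this, hch]; exact hne _ _ (by omega) (by omega) (by omega)
  have hSadj : ∀ x ∈ S, x ≠ c 0 → ∀ y, G.Adj x y → y ∈ S := by
    intro x hx hx0 y hxy
    obtain ⟨i, hi, rfl⟩ := hSm x hx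
    obtain ⟨k, rfl⟩ : ∃ k, i = k + 1 := by
      cases i with
      | zero => exact absurd rfl hx0
      | succ k => exact ⟨k, rfl⟩
    rcases (hN k hi y).mp hxy with rfl | rfl
    · exact hmS k (by omega)
    · exact hmS2 (k + 2) (by omega)
  have hOadj : ∀ x, x ∉ S → ∀ y, G.Adj x y → y ∉ S ∨ y = c 0 := by
    intro x hx y hxy
    by_contra hcon
    push Not at hcon
    exact hx (hSadj y hcon.1 hcon.2 x hxy.symm)
  have hc2S : c 2 ∈ S := hmS 2 (by omega)
  have hc1S : c 1 ∈ S := hmS 1 (by omega)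
  have hc0S : c 0 ∈ S := hmS 0 (by omega)
  have hO' : ∀ x, x ∉ S → ∀ y, G.Adj x y ↔ G'.Adj x y := by
    intro x hx y
    rw [hG']
    have n0 : x ≠ c 0 := fun e => hx (e ▸ hc0S)
    have n1 : x ≠ c 1 := fun e => hx (e ▸ hc1S)
    have n2 : x ≠ c 2 := fun e => hx (e ▸ hc2S)
    simp [n0, n1, n2]
  have ne01 : c 0 ≠ c 1 := hne _ _ (by omega) (by omega) (by omega)
  have ne02 : c 0 ≠ c 2 := hne _ _ (by omega) (by omega) (by omega)
  have ne12 : c 1 ≠ c 2 := hne _ _ (by omega) (by omega) (by omega)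
  have ne13 : c 1 ≠ c 3 := hne _ _ (by omega) (by omega) (by omega)
  have ne03 : c 0 ≠ c 3 := hne _ _ (by omega) (by omega) (by omega)
  have hN1' : ∀ z, G'.Adj (c 1) z ↔ z = c 0 := by
    intro z
    rw [hG', hN 0 (by omega)]
    have := ne01.symm; have := ne02.symm; have := ne12.symm
    simp only [ne_eq, Sym2.eq_iff]
    constructor
    · rintro (⟨rfl | rfl, h2⟩ | (⟨h1, h2⟩ | ⟨h1, h2⟩))
      · rfl
      · simp at h2
      · exact absurd h1.symm ne01
      · exact absurd h1 ne12
    · rintro rfl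
      left
      refine ⟨Or.inl rfl, ?_⟩
      rintro (⟨-, h2⟩ | ⟨h1, -⟩)
      · exact ne02 h2
      · exact ne12 h1
  have hN2' : ∀ z, G'.Adj (c 2) z ↔ z = c 0 ∨ z = c 3 := by
    intro z
    rw [hG', hN 1 (by omega)]
    simp only [ne_eq, Sym2.eq_iff]
    constructor
    · rintro (⟨rfl | rfl, h2⟩ | (⟨h1, h2⟩ | ⟨h1, h2⟩))
      · simp at h2
      · right; rfl
      · exact absurd h1.symm ne02
      · left; exact h2
    · rintro (rfl | rfl)
      · right; right; simp
      · left
        refine ⟨Or.inr rfl, ?_⟩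
        rintro (⟨h1, -⟩ | ⟨-, h2⟩)
        · exact ne12 h1.symm
        · exact ne13 h2.symm
  have hN3' : ∀ i, i + 3 < h → ∀ z, G'.Adj (c (i + 3)) z ↔ z = c (i + 2) ∨ z = c (i + 4) := by
    intro i hi z
    have n0 : c (i + 3) ≠ c 0 := hne _ _ (by omega) (by omega) (by omega)
    have n1 : c (i + 3) ≠ c 1 := hne _ _ (by omega) (by omega) (by omega)
    have n2 : c (i + 3) ≠ c 2 := hne _ _ (by omega) (by omega) (by omega)
    rw [hG', hN (i + 2) (by omega)]
    simp [n0, n1, n2]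
  have hSadj' : ∀ x ∈ S, x ≠ c 0 → ∀ y, G'.Adj x y → y ∈ S := by
    intro x hx hx0 y hxy
    rcases (hG' x y).mp hxy with ⟨h1, -⟩ | h1
    · exact hSadj x hx hx0 y h1
    · rw [Sym2.eq_iff] at h1
      rcases h1 with ⟨-, rfl⟩ | ⟨-, rfl⟩ <;> assumption
  -- degrees
  have hd : ∀ i, i + 1 < h → G.degree (c (i + 1)) = 2 := fun i hi =>
    (aux_two G _ _ _ (hA2 i hi) (hN i hi)).1
  have hd1' : G'.degree (c 1) = 1 := (aux_one G' _ _ hN1').1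
  have hd2' : G'.degree (c 2) = 2 := (aux_two G' _ _ _ ne03 hN2').1
  have hd3' : ∀ i, i + 3 < h → G'.degree (c (i + 3)) = 2 := fun i hi =>
    (aux_two G' _ _ _ (hA2 (i + 2) (by omega)) (hN3' i hi)).1
  have hdO : ∀ x, x ∉ S → G.degree x = G'.degree x := fun x hx =>
    (aux_lap_congr G G' x 0 0 rfl (hO' x hx) (fun _ _ => rfl)).1
  have hnadj02 : ¬ G.Adj (c 0) (c 2) := by
    intro ha
    rcases (hN 1 (by omega) (c 0)).mp ha.symm with e | e
    · exact ne01 e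
    · exact ne03 e
  have hd0 : G'.degree (c 0) = G.degree (c 0) + 1 := by
    have hn : G'.neighborFinset (c 0) = insert (c 2) (G.neighborFinset (c 0)) := by
      ext z
      simp only [SimpleGraph.mem_neighborFinset, Finset.mem_insert]
      rw [hG']
      simp only [ne_eq, Sym2.eq_iff]
      constructor
      · rintro (⟨h1, -⟩ | (⟨-, h2⟩ | ⟨h1, -⟩))
        · right; exact h1
        · left; exact h2
        · exact absurd h1 ne02
      · rintro (rfl | h1)
        · right; left; simp
        · left
          refine ⟨h1, ?_⟩
          rintro (⟨h1, -⟩ | ⟨h1, -⟩)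
          · exact ne01 h1
          · exact ne02 h1
    rw [← SimpleGraph.card_neighborFinset_eq_degree, hn, Finset.card_insert_of_notMem (by simpa using hnadj02),
      SimpleGraph.card_neighborFinset_eq_degree]
  have hM : ∑ x, (G'.degree x : ℝ) = ∑ x, (G.degree x : ℝ) := by
    have : ∑ x, ((G'.degree x : ℝ) - G.degree x) = 0 := by
      rw [aux_sum_S h c inj (fun x => (G'.degree x : ℝ) - G.degree x)]
      · obtain ⟨k, rfl⟩ : ∃ k, h = k + 3 := ⟨h - 3, by omega⟩
        rw [Finset.sum_range_succ', Finset.sum_range_succ', Finset.sum_range_succ',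
          Finset.sum_eq_zero]
        · simp only [zero_add]
          rw [hd0, hd1', hd2', hd 1 (by omega), hd 0 (by omega)]
          push_cast; ring
        · intro i hi
          have hi' : i < k := by simpa using hi
          have h1 : G'.degree (c (i + 1 + 1 + 1)) = 2 := hd3' i (by omega)
          have h2 : G.degree (c (i + 1 + 1 + 1)) = 2 := hd (i + 2) (by omega)
          rw [h1, h2]; simp
      · intro x hx
        rw [hdO x (fun hxS => by obtain ⟨i, hi, e⟩ := hSm x hxS; exact hx i hi e)]
        simp
    rw [Finset.sum_sub_distrib] at this
    linarith
  -- Green functions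
  choose f hf0 hf using aux_exists_green G hconn (c 0)
  let gH : V → V → ℝ := fun b z => if b ∈ S ∨ z ∈ S then 0 else f b z
  have gHS : ∀ b z, b ∈ S ∨ z ∈ S → gH b z = 0 := fun b z hbz => if_pos hbz
  have gHO : ∀ b z, b ∉ S → z ∉ S → gH b z = f b z := fun b z hb hz => if_neg (by tauto)
  have hHG : ∀ b z, z ≠ c 0 →
      (G.lapMatrix ℝ).mulVec (gH b) z = if z = b ∧ b ∉ S then 1 else 0 := by
    intro b z hz
    by_cases hb : b ∈ S
    · rw [aux_lap_zero G z _ (gHS _ _ (Or.inl hb)) (fun _ _ => gHS _ _ (Or.inl hb)), if_neg (by tauto)]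
    by_cases hzS : z ∈ S
    · rw [aux_lap_zero G z _ (gHS _ _ (Or.inr hzS))
        (fun y hy => gHS _ _ (Or.inr (hSadj z hzS hz y hy))), if_neg (by rintro ⟨rfl, h2⟩; exact h2 hzS)]
    · rw [(aux_lap_congr G G z (gH b) (f b) (gHO _ _ hb hzS) (fun _ => Iff.rfl) ?_).2, hf b z hz]
      · simp [hb]
      · intro y hy
        by_cases hyS : y ∈ S
        · rw [gHS _ _ (Or.inr hyS)]
          rcases hOadj z hzS y hy with h1 | rfl
          · exact absurd hyS h1
          · rw [hf0]
        · exact gHO _ _ hb hyS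
  have hHG' : ∀ b z, z ≠ c 0 →
      (G'.lapMatrix ℝ).mulVec (gH b) z = if z = b ∧ b ∉ S then 1 else 0 := by
    intro b z hz
    by_cases hzS : z ∈ S
    · rw [aux_lap_zero G' z _ (gHS _ _ (Or.inr hzS))
        (fun y hy => gHS _ _ (Or.inr (hSadj' z hzS hz y hy))), if_neg (by rintro ⟨rfl, h2⟩; exact h2 hzS)]
    · rw [← hHG b z hz]
      exact ((aux_lap_congr G G' z (gH b) (gH b) rfl (hO' z hzS) (fun _ _ => rfl)).2).symm
  have liftz : ∀ γ b z, b ∉ S ∨ z ∉ S → auxLift h c pos γ b z = 0 := by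
    intro γ b z hbz
    simp only [auxLift]
    rw [if_neg (by tauto)]
  have liftc : ∀ (γ : ℕ → ℕ → ℝ), (∀ j, γ j 0 = 0) → (∀ j ≤ h, γ j h = 0) → ∀ i ≤ h, ∀ j < h,
      auxLift h c pos γ (c j) (c i) = γ j i := by
    intro γ h0 h1 i hi j hj
    simp only [auxLift]
    rw [if_pos ⟨hmS j hj, hmS2 i hi⟩, hpos j hj]
    rcases Nat.lt_or_ge i h with hlt | hge
    · rw [hpos i hlt]
    · have : i = h := le_antisymm hi hge
      rw [this, hch, hpos 0 (by omega), h0, h1 j hj.le]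
  have hγc := liftc (auxγ h) (auxγ_zero_right h) (auxγ_top h)
  have hγc' := liftc (auxγ' h) (auxγ'_zero_right h) (fun j hj => auxγ'_top h j hj hh)
  -- cycle side Laplacian at outside vertices
  have hCO : ∀ (γ : ℕ → ℕ → ℝ), (∀ j, γ j 0 = 0) → ∀ b z, z ∉ S →
      (G.lapMatrix ℝ).mulVec (auxLift h c pos γ b) z = 0 := by
    intro γ h0 b z hz
    apply aux_lap_zero G z _ (liftz γ _ _ (Or.inr hz))
    intro y hy
    rcases hOadj z hz y hy with h1 | rfl
    · exact liftz γ _ _ (Or.inr h1)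
    · simp only [auxLift]
      rw [hpos 0 (by omega), h0]; simp
  have hCG : ∀ b z, z ≠ c 0 →
      (G.lapMatrix ℝ).mulVec (auxLift h c pos (auxγ h) b) z = if z = b ∧ b ∈ S then 1 else 0 := by
    intro b z hz
    by_cases hzS : z ∈ S
    · by_cases hb : b ∈ S
      · obtain ⟨j, hj, rfl⟩ := hSm b hb
        obtain ⟨i, hi, rfl⟩ := hSm z hzS
        obtain ⟨k, rfl⟩ : ∃ k, i = k + 1 := by
          cases i with
          | zero => exact absurd rfl hz
          | succ k => exact ⟨k, rfl⟩
        rw [(aux_two G _ _ _ (hA2 k hi) (hN k hi)).2, hγc _ (by omega) _ hj, hγc _ (by omega) _ hj,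
          hγc _ (by omega) _ hj, auxγ_lap h k j hi]
        have : (k + 1 = j) ↔ (c (k + 1) = c j ∧ c j ∈ S) :=
          ⟨fun e => ⟨by rw [e], hb⟩, fun e => inj _ _ hi hj e.1⟩
        simp only [this]
      · rw [aux_lap_zero G z _ (liftz _ _ _ (Or.inl hb)) (fun _ _ => liftz _ _ _ (Or.inl hb)),
          if_neg (by tauto)]
    · rw [hCO _ (auxγ_zero_right h) b z hzS, if_neg (by rintro ⟨rfl, h2⟩; exact hzS h2)]
  have hCG' : ∀ b z, z ≠ c 0 →
      (G'.lapMatrix ℝ).mulVec (auxLift h c pos (auxγ' h) b) z = if z = b ∧ b ∈ S then 1 else 0 := by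
    intro b z hz
    by_cases hzS : z ∈ S
    · by_cases hb : b ∈ S
      · obtain ⟨j, hj, rfl⟩ := hSm b hb
        obtain ⟨i, hi, rfl⟩ := hSm z hzS
        have hij : (c i = c j ∧ c j ∈ S) ↔ i = j :=
          ⟨fun e => inj _ _ hi hj e.1, fun e => ⟨by rw [e], hb⟩⟩
        simp only [hij]
        match i, hi, hz with
        | 0, _, hz => exact absurd rfl hz
        | 1, hi, hz =>
          rw [(aux_one G' _ _ hN1').2, hγc' _ (by omega) _ hj, hγc' _ (by omega) _ hj,
            auxγ'_zero_right, auxγ'_one, sub_zero]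
        | 2, hi, hz =>
          rw [(aux_two G' _ _ _ ne03 hN2').2, hγc' _ (by omega) _ hj, hγc' _ (by omega) _ hj,
            hγc' _ (by omega) _ hj, auxγ'_lap2 h j (by omega)]
        | k + 3, hi, hz =>
          rw [(aux_two G' _ _ _ (hA2 (k + 2) (by omega)) (hN3' k hi)).2, hγc' _ (by omega) _ hj,
            hγc' _ (by omega) _ hj, hγc' _ (by omega) _ hj]
          exact auxγ'_lap h k j hi
      · rw [aux_lap_zero G' z _ (liftz _ _ _ (Or.inl hb)) (fun _ _ => liftz _ _ _ (Or.inl hb)),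
          if_neg (by tauto)]
    · rw [← (aux_lap_congr G G' z _ _ rfl (hO' z hzS) (fun _ _ => rfl)).2,
        hCO _ (auxγ'_zero_right h) b z hzS, if_neg (by rintro ⟨rfl, h2⟩; exact hzS h2)]
  have hite : ∀ b z : V, ((if z = b ∧ b ∉ S then 1 else 0) + (if z = b ∧ b ∈ S then 1 else 0) : ℝ)
      = if z = b then 1 else 0 := by
    intro b z
    by_cases h1 : z = b <;> by_cases h2 : b ∈ S <;> simp [h1, h2]
  have hDG : degRes G = auxD (fun x => (G.degree x : ℝ)) (gH + auxLift h c pos (auxγ h)) := by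
    refine aux_degRes G _ (c 0) (fun b z hz => ?_)
    rw [Pi.add_apply, Matrix.mulVec_add, Pi.add_apply, hHG b z hz, hCG b z hz, hite]
  have hDG' : degRes G' = auxD (fun x => (G'.degree x : ℝ)) (gH + auxLift h c pos (auxγ' h)) := by
    refine aux_degRes G' _ (c 0) (fun b z hz => ?_)
    rw [Pi.add_apply, Matrix.mulVec_add, Pi.add_apply, hHG' b z hz, hCG' b z hz, hite]
  have hHeq : auxD (fun x => (G'.degree x : ℝ)) gH = auxD (fun x => (G.degree x : ℝ)) gH := by
    unfold auxD
    rw [hM]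
    congr 1
    · congr 2
      refine Finset.sum_congr rfl fun x _ => ?_
      by_cases hx : x ∈ S
      · rw [gHS x x (Or.inl hx)]; simp
      · beta_reduce; rw [hdO x hx]
    · refine Finset.sum_congr rfl fun x _ => Finset.sum_congr rfl fun y _ => ?_
      by_cases hx : x ∈ S
      · rw [gHS x y (Or.inl hx), gHS y x (Or.inr hx)]; simp
      · beta_reduce; rw [hdO x hx]
  have hCv : auxD (fun x => (G.degree x : ℝ)) (auxLift h c pos (auxγ h))
      = (Fintype.card V : ℝ) * (2 * (((h : ℝ) ^ 2 - 1) / 6))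
        + (∑ x, (G.degree x : ℝ)) * (((h : ℝ) ^ 2 - 1) / 6)
        - 2 * (2 * (h * ((h : ℝ) ^ 2 - 1) / 12)) := by
    rw [auxD_lift h c inj pos hpos _ (auxγ_comm h), ← auxγ_diag h (by omega), ← auxγ_tot h (by omega),
      Finset.mul_sum (a := (2:ℝ)) (f := fun i => auxγ h i i),
      Finset.mul_sum (a := (2:ℝ)) (f := fun i => ∑ j ∈ range h, auxγ h i j)]
    have hdd : ∀ i ∈ range h, i = 0 ∨ (G.degree (c i) : ℝ) = 2 := by
      intro i hi
      have hi' : i < h := by simpa using hi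
      cases i with
      | zero => left; rfl
      | succ k => right; rw [hd k hi']; norm_num
    congr 1
    · congr 2
      refine Finset.sum_congr rfl fun i hi => ?_
      rcases hdd i hi with rfl | e
      · simp [auxγ_zero_left]
      · rw [e]
    · congr 1
      refine Finset.sum_congr rfl fun i hi => ?_
      rcases hdd i hi with rfl | e
      · simp [auxγ_zero_left]
      · rw [e]
  have hCv' : auxD (fun x => (G'.degree x : ℝ)) (auxLift h c pos (auxγ' h))
      = (Fintype.card V : ℝ) * (2 * (1 + (((h : ℝ) - 1) ^ 2 - 1) / 6) - 1)
        + (∑ x, (G.degree x : ℝ)) * (1 + (((h : ℝ) - 1) ^ 2 - 1) / 6)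
        - 2 * (2 * (1 + ((h : ℝ) - 1) * (((h : ℝ) - 1) ^ 2 - 1) / 12) - 1) := by
    rw [auxD_lift h c inj pos hpos _ (auxγ'_comm h), hM, ← auxγ'_diag h hh, ← auxγ'_tot h hh]
    have hdd : ∀ i ∈ range h, i = 0 ∨ (G'.degree (c i) : ℝ) = 2 - (if i = 1 then 1 else 0) := by
      intro i hi
      have hi' : i < h := by simpa using hi
      match i, hi' with
      | 0, _ => left; rfl
      | 1, _ => right; rw [hd1']; norm_num
      | 2, _ => right; rw [hd2']; norm_num
      | k + 3, hi' => right; rw [hd3' k hi', if_neg (by omega)]; norm_num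
    have h1h : 1 ∈ range h := by simp; omega
    have s1 : ∑ i ∈ range h, (G'.degree (c i) : ℝ) * auxγ' h i i
        = 2 * ∑ i ∈ range h, auxγ' h i i - 1 := by
      have : ∑ i ∈ range h, (G'.degree (c i) : ℝ) * auxγ' h i i
          = ∑ i ∈ range h, (2 * auxγ' h i i - if i = 1 then auxγ' h 1 1 else 0) := by
        refine Finset.sum_congr rfl fun i hi => ?_
        rcases hdd i hi with rfl | e
        · simp [auxγ'_zero_left]
        · rw [e]; by_cases hi1 : i = 1
          · subst hi1; simp; ring
          · simp [hi1]
      rw [this, Finset.sum_sub_distrib, ← Finset.mul_sum, Finset.sum_ite_eq', if_pos h1h, auxγ'_one]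
      simp
    have s2 : ∑ i ∈ range h, (G'.degree (c i) : ℝ) * ∑ j ∈ range h, auxγ' h i j
        = 2 * ∑ i ∈ range h, ∑ j ∈ range h, auxγ' h i j - 1 := by
      have : ∑ i ∈ range h, (G'.degree (c i) : ℝ) * ∑ j ∈ range h, auxγ' h i j
          = ∑ i ∈ range h, (2 * (∑ j ∈ range h, auxγ' h i j)
              - if i = 1 then ∑ j ∈ range h, auxγ' h 1 j else 0) := by
        refine Finset.sum_congr rfl fun i hi => ?_
        rcases hdd i hi with rfl | e
        · simp [auxγ'_zero_left]
        · rw [e]; by_cases hi1 : i = 1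
          · subst hi1; simp; ring
          · simp [hi1]
      rw [this, Finset.sum_sub_distrib, ← Finset.mul_sum, Finset.sum_ite_eq', if_pos h1h]
      have : ∑ j ∈ range h, auxγ' h 1 j = 1 := by
        rw [Finset.sum_congr rfl fun j _ => (auxγ'_comm h 1 j).trans (auxγ'_one h j),
          Finset.sum_ite_eq, if_pos h1h]
      rw [this]
    rw [s1, s2]
  rw [hDG, hDG', auxD_add, auxD_add, hHeq, hCv, hCv']
  -- lower bound on the degree sum
  have hMlow : (2 * h + 1 : ℝ) ≤ ∑ x, (G.degree x : ℝ) := by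
    have hScard : S.card = h := by
      rw [hS, Finset.card_image_of_injOn, Finset.card_range]
      intro i hi j hj e
      exact inj i j (by simpa using hi) (by simpa using hj) e
    obtain ⟨y, hyS, hy⟩ := hout
    have hyS' : y ∉ S := fun hh' => by obtain ⟨i, hi, e⟩ := hSm y hh'; exact hyS i hi e
    have hu3 : 3 ≤ G.degree (c 0) := by
      have hsub : ({c 1, c (h - 1), y} : Finset V) ⊆ G.neighborFinset (c 0) := by
        intro z hz
        simp only [Finset.mem_insert, Finset.mem_singleton] at hz
        rw [SimpleGraph.mem_neighborFinset]
        rcases hz with rfl | rfl | rfl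
        · exact ((hN 0 (by omega) (c 0)).mpr (Or.inl rfl)).symm
        · obtain ⟨k, rfl⟩ : ∃ k, h = k + 2 := ⟨h - 2, by omega⟩
          exact ((hN k (by omega) (c 0)).mpr (Or.inr hch.symm)).symm
        · exact hy
      rw [← SimpleGraph.card_neighborFinset_eq_degree]
      refine le_trans ?_ (Finset.card_le_card hsub)
      rw [Finset.card_insert_of_notMem, Finset.card_pair]
      · exact fun e => hyS' (e ▸ hmS (h - 1) (by omega))
      · simp only [Finset.mem_insert, Finset.mem_singleton, not_or]
        exact ⟨hne _ _ (by omega) (by omega) (by omega), fun e => hyS' (e ▸ hc1S)⟩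
    have : (2 * h + 1 : ℝ) = ∑ i ∈ range h, (2 + if i = 0 then (1:ℝ) else 0) := by
      have h0 : 0 ∈ range h := by simp; omega
      rw [Finset.sum_add_distrib, Finset.sum_ite_eq', if_pos h0]
      simp; ring
    rw [this]
    have hle : ∑ x ∈ S, (G.degree x : ℝ) ≤ ∑ x, (G.degree x : ℝ) :=
      Finset.sum_le_sum_of_subset_of_nonneg (Finset.subset_univ _) (fun _ _ _ => by positivity)
    refine le_trans ?_ hle
    rw [hS, Finset.sum_image]
    · refine Finset.sum_le_sum fun i hi => ?_
      have hi' : i < h := by simpa using hi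
      cases i with
      | zero => simp only [if_true]; have : (3:ℝ) ≤ G.degree (c 0) := by exact_mod_cast hu3
                linarith
      | succ k => rw [hd k hi']; simp
    · intro i hi j hj e
      exact inj i j (by simpa using hi) (by simpa using hj) e
  have hcardR : (h : ℝ) + 3 ≤ (Fintype.card V : ℝ) := by exact_mod_cast hcard
  have hhR : (4 : ℝ) ≤ h := by exact_mod_cast hh
  nlinarith [mul_le_mul_of_nonneg_right hcardR (show (0:ℝ) ≤ 2 * h - 4 by linarith),
    mul_le_mul_of_nonneg_right hMlow (show (0:ℝ) ≤ 2 * h - 7 by linarith), sq_nonneg ((h:ℝ) - 4)]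

end Core

section GraphPart
variable {V : Type*}

lemma aux_no_chord [Finite V] {G : SimpleGraph V} (hG : IsCactus G) (C : G.Subgraph)
    (hC : IsCycleSubgraph C) {a b : V} (ha : a ∈ C.verts) (hb : b ∈ C.verts) (hab : G.Adj a b) :
    C.Adj a b := by
  classical
  by_contra hn
  obtain ⟨q0⟩ := hC.1.preconnected ⟨b, hb⟩ ⟨a, ha⟩
  let q1 : C.coe.Walk ⟨b, hb⟩ ⟨a, ha⟩ := q0.bypass
  have hq1 : q1.IsPath := q0.bypass_isPath
  let q : G.Walk b a := q1.map C.hom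
  have hq : q.IsPath := SimpleGraph.Walk.map_isPath_of_injective C.hom_injective hq1
  have hedge : s(a, b) ∉ q.edges := by
    intro he
    have he' : s(a, b) ∈ (q1.map C.hom).edges := he
    rw [SimpleGraph.Walk.edges_map, List.mem_map] at he'
    obtain ⟨e, he1, he2⟩ := he'
    have hmem := q1.edges_subset_edgeSet he1
    induction e using Sym2.ind with
    | _ x y =>
      rw [SimpleGraph.mem_edgeSet] at hmem
      have hxy : C.Adj x y := hmem
      rw [Sym2.map_mk] at he2
      rcases Sym2.eq_iff.mp he2 with ⟨h1, h2⟩ | ⟨h1, h2⟩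
      · apply hn; rw [← h1, ← h2]; exact hxy
      · apply hn; rw [← h1, ← h2]; exact hxy.symm
  let r : G.Walk a a := SimpleGraph.Walk.cons hab q
  have hr : r.IsCycle := (SimpleGraph.Walk.cons_isCycle_iff q hab).mpr ⟨hq, hedge⟩
  have hcyc : IsCycleSubgraph r.toSubgraph := by
    refine ⟨r.toSubgraph_connected.coe, fun x hx => ?_⟩
    exact hr.ncard_neighborSet_toSubgraph_eq_two (r.mem_verts_toSubgraph.mp hx)
  have hadj : r.toSubgraph.Adj a b := by
    rw [SimpleGraph.Walk.adj_toSubgraph_iff_mem_edges]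
    simp [r]
  have hne : C ≠ r.toSubgraph := by
    intro e; rw [← e] at hadj; exact hn hadj
  have h1 := hG.2 C _ hC hcyc hne
  have h2 : ({a, b} : Set V) ⊆ C.verts ∩ r.toSubgraph.verts := by
    intro x hx
    rcases hx with rfl | hx
    · exact ⟨ha, r.toSubgraph.edge_vert hadj⟩
    · rw [Set.mem_singleton_iff] at hx
      subst hx
      exact ⟨hb, r.toSubgraph.edge_vert hadj.symm⟩
  have h3 := Set.ncard_le_ncard h2 (Set.toFinite _)
  rw [Set.ncard_pair hab.ne] at h3
  omega

lemma aux_cycle_card [Finite V] {G : SimpleGraph V} (C : G.Subgraph)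
    (hC : IsCycleSubgraph C) : 3 ≤ C.verts.ncard := by
  obtain ⟨x⟩ := hC.1.nonempty
  have h2 := hC.2 x x.2
  have hs : insert (x:V) {y | C.Adj x y} ⊆ C.verts := by
    intro z hz
    rcases hz with rfl | hz
    · exact x.2
    · exact C.edge_vert (SimpleGraph.Subgraph.Adj.symm hz)
  have h3 := Set.ncard_le_ncard hs (Set.toFinite _)
  have hx : (x:V) ∉ {y | C.Adj x y} := fun h => (C.adj_sub h).ne rfl
  rw [Set.ncard_insert_of_notMem hx (Set.toFinite _), h2] at h3
  exact h3

lemma aux_card [Finite V] {G : SimpleGraph V} (hG : IsCactus G) (ht : 3 ≤ numCycles G)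
    (C : G.Subgraph) (hC : IsCycleSubgraph C) : C.verts.ncard + 3 ≤ Nat.card V := by
  have hfin : {H : G.Subgraph | IsCycleSubgraph H}.Finite := by
    apply Set.finite_of_ncard_pos
    unfold numCycles at ht
    omega
  have h1 : 1 < ({H : G.Subgraph | IsCycleSubgraph H} \ {C}).ncard := by
    have := Set.ncard_diff_singleton_add_one (s := {H : G.Subgraph | IsCycleSubgraph H}) hC hfin
    unfold numCycles at ht
    omega
  obtain ⟨A, B, hA, hB, hAB⟩ := (Set.one_lt_ncard_iff (hfin.subset Set.diff_subset)).mp h1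
  have key : ∀ H : G.Subgraph, IsCycleSubgraph H → H ≠ C → 2 ≤ (H.verts \ C.verts).ncard := by
    intro H hH hne
    have e := Set.ncard_inter_add_ncard_diff_eq_ncard H.verts C.verts (Set.toFinite _)
    have e2 := hG.2 H C hH hC hne
    have e3 := aux_cycle_card H hH
    omega
  have kA := key A hA.1 hA.2
  have kB := key B hB.1 hB.2
  have hcompl := Set.ncard_add_ncard_compl C.verts
  by_contra hcon
  have hc2 : (C.vertsᶜ).ncard ≤ 2 := by omega
  have eA : A.verts \ C.verts = C.vertsᶜ :=
    Set.eq_of_subset_of_ncard_le (fun x hx => hx.2) (by omega) (Set.toFinite _)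
  have eB : B.verts \ C.verts = C.vertsᶜ :=
    Set.eq_of_subset_of_ncard_le (fun x hx => hx.2) (by omega) (Set.toFinite _)
  have hsub : C.vertsᶜ ⊆ A.verts ∩ B.verts := by
    intro x hx
    have h1 := hx
    have h2 := hx
    rw [← eA] at h1
    rw [← eB] at h2
    exact ⟨h1.1, h2.1⟩
  have h4 := Set.ncard_le_ncard hsub (Set.toFinite _)
  have h5 := hG.2 A B hA.1 hB.1 hAB
  rw [eA] at kA
  omega

lemma aux_param [Finite V] {G : SimpleGraph V} (C : G.Subgraph)
    (hC : IsCycleSubgraph C) {u v w : V} (huC : u ∈ C.verts) (huv : C.Adj u v) (hvw : C.Adj v w)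
    (hwu : w ≠ u) :
    ∃ c : ℕ → V, c 0 = u ∧ c 1 = v ∧ c 2 = w ∧ c C.verts.ncard = u ∧
      (∀ i j, i < C.verts.ncard → j < C.verts.ncard → c i = c j → i = j) ∧
      (∀ x, x ∈ C.verts ↔ ∃ i < C.verts.ncard, c i = x) ∧
      (∀ i, i + 1 < C.verts.ncard → ∀ z, C.Adj (c (i + 1)) z ↔ z = c i ∨ z = c (i + 2)) := by
  classical
  let K : SimpleGraph V := C.spanningCoe
  have hKadj : ∀ x y, K.Adj x y ↔ C.Adj x y := fun x y => Iff.rfl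
  have hK2 : ∀ x ∈ C.verts, (K.neighborSet x).ncard = 2 := fun x hx => hC.2 x hx
  have hK : K.IsCycles := by
    intro x hx
    obtain ⟨y, hy⟩ := hx
    exact hK2 x (C.edge_vert hy)
  have hsupp : (K.connectedComponentMk u).supp = C.verts := by
    ext x
    rw [SimpleGraph.ConnectedComponent.mem_supp_iff, SimpleGraph.ConnectedComponent.eq]
    constructor
    · rintro ⟨p⟩
      clear * - p huC
      induction p with
      | nil => exact huC
      | cons hadj p ih => exact C.edge_vert hadj
    · intro hx
      have hr := hC.1.preconnected ⟨x, hx⟩ ⟨u, huC⟩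
      exact hr.map (⟨fun y => (y : V), fun h => h⟩ : C.coe →g K)
  obtain ⟨p, hp, hv, hpv⟩ : ∃ p : K.Walk u u, p.IsCycle ∧ p.toSubgraph.verts = C.verts ∧
      p.getVert 1 = v := by
    obtain ⟨p, hp, hv⟩ := hK.exists_cycle_toSubgraph_verts_eq_connectedComponentSupp
      (c := K.connectedComponentMk u) (v := u) rfl ⟨v, huv⟩
    rw [hsupp] at hv
    have hn : p.toSubgraph.neighborSet u = K.neighborSet u := by
      apply Set.eq_of_subset_of_ncard_le (p.toSubgraph.neighborSet_subset u) _ (Set.toFinite _)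
      rw [hK2 u huC, hp.ncard_neighborSet_toSubgraph_eq_two (by simp)]
    rw [hp.neighborSet_toSubgraph_endpoint] at hn
    have hvm : v ∈ K.neighborSet u := huv
    rw [← hn] at hvm
    rcases hvm with h1 | h1
    · exact ⟨p, hp, hv, h1.symm⟩
    · rw [Set.mem_singleton_iff] at h1
      refine ⟨p.reverse, hp.reverse, by simpa using hv, ?_⟩
      rw [h1]
      simp [SimpleGraph.Walk.getVert_reverse]
  have hnb : ∀ x ∈ C.verts, p.toSubgraph.neighborSet x = K.neighborSet x := by
    intro x hx
    apply Set.eq_of_subset_of_ncard_le (p.toSubgraph.neighborSet_subset x) _ (Set.toFinite _)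
    rw [hK2 x hx, hp.ncard_neighborSet_toSubgraph_eq_two (by rw [← hv] at hx; simpa using hx)]
  have hlen3 := hp.three_le_length
  have hinj : ∀ i j, i < p.length → j < p.length → p.getVert i = p.getVert j → i = j := by
    intro i j hi hj e
    exact hp.getVert_injOn' (by simp; omega) (by simp; omega) e
  have hmem : ∀ x, x ∈ C.verts ↔ ∃ i < p.length, p.getVert i = x := by
    intro x
    rw [← hv, SimpleGraph.Walk.mem_verts_toSubgraph, SimpleGraph.Walk.mem_support_iff_exists_getVert]
    constructor
    · rintro ⟨i, e, hi⟩
      rcases Nat.lt_or_ge i p.length with hlt | hge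
      · exact ⟨i, hlt, e⟩
      · refine ⟨0, by omega, ?_⟩
        have : i = p.length := le_antisymm hi hge
        rw [← e, this]; simp
    · rintro ⟨i, hi, e⟩
      exact ⟨i, e, hi.le⟩
  have hlen : C.verts.ncard = p.length := by
    have : C.verts = (((Finset.range p.length).image p.getVert : Finset V) : Set V) := by
      ext x; rw [hmem]; simp
    rw [this, Set.ncard_coe_finset, Finset.card_image_of_injOn, Finset.card_range]
    intro i hi j hj e
    exact hinj i j (by simpa using hi) (by simpa using hj) e
  have hN : ∀ i, i + 1 < p.length → ∀ z, C.Adj (p.getVert (i + 1)) z ↔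
      z = p.getVert i ∨ z = p.getVert (i + 2) := by
    intro i hi z
    have h1 := hp.neighborSet_toSubgraph_internal (i := i + 1) (by omega) hi
    rw [hnb _ ((hmem _).mpr ⟨i + 1, hi, rfl⟩)] at h1
    have : z ∈ K.neighborSet (p.getVert (i + 1)) ↔ C.Adj (p.getVert (i + 1)) z := Iff.rfl
    rw [← this, h1]
    simp
  rw [hlen]
  refine ⟨p.getVert, by simp, hpv, ?_, by simp, hinj, hmem, hN⟩
  have := (hN 0 (by omega) w).mp (by rw [hpv]; exact hvw)
  rcases this with h1 | h1
  · simp at h1; exact absurd h1 hwu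
  · exact h1.symm

end GraphPart

/-- Correction of Lemma 7 of Du–Su–Tu–Gutman: shrinking the cycle `C_h` (with unique
attachment vertex `u`, and `uv, vw` edges of the cycle) by replacing the edge `vw`
with `uw` strictly decreases the degree resistance distance. -/
theorem stmt_5 {V : Type*} [Finite V] (n t h : ℕ) (ht : 3 ≤ t) (hh : 4 ≤ h)
    (G : SimpleGraph V) (hG : MemCact n t G)
    (C : G.Subgraph) (hC : IsCycleSubgraph C) (hcard : C.verts.ncard = h)
    (u v w : V) (huC : u ∈ C.verts)
    (hout : ∃ y ∉ C.verts, G.Adj u y)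
    (huniq : ∀ x ∈ C.verts, (∃ y ∉ C.verts, G.Adj x y) → x = u)
    (huv : C.Adj u v) (hvw : C.Adj v w) (hwu : w ≠ u) :
    degRes (SimpleGraph.fromEdgeSet ((G.edgeSet \ {s(v, w)}) ∪ {s(u, w)})) < degRes G := by
  classical
  letI := Fintype.ofFinite V
  obtain ⟨c, h0, h1, h2, hch, inj, hmem, hN⟩ := aux_param C hC huC huv hvw hwu
  rw [hcard] at hch inj hmem hN
  have hcardV := aux_card hG.1 (by rw [hG.2.2]; exact ht) C hC
  rw [hcard, Nat.card_eq_fintype_card] at hcardV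
  refine aux_core G _ hG.1.1 h hh c (by rw [hch, h0]) inj ?_ ?_ hcardV ?_
  · intro i hi z
    rw [← hN i hi z]
    have hi1 : c (i + 1) ∈ C.verts := (hmem _).mpr ⟨i + 1, hi, rfl⟩
    refine ⟨fun hadj => ?_, fun hadj => C.adj_sub hadj⟩
    by_cases hz : z ∈ C.verts
    · exact aux_no_chord hG.1 C hC hi1 hz hadj
    · have e := huniq _ hi1 ⟨z, hz, hadj⟩
      rw [← h0] at e
      have := inj _ _ hi (by omega) e
      omega
  · obtain ⟨y, hy, hadj⟩ := hout
    exact ⟨y, fun i hi e => hy ((hmem y).mpr ⟨i, hi, e⟩), by rw [h0]; exact hadj⟩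
  · intro x y
    rw [h0, h1, h2, SimpleGraph.fromEdgeSet_adj]
    simp only [Set.mem_union, Set.mem_diff, SimpleGraph.mem_edgeSet, Set.mem_singleton_iff]
    constructor
    · exact fun hx => hx.1
    · intro hx
      refine ⟨hx, ?_⟩
      rcases hx with hx | hx
      · exact hx.1.ne
      · rintro rfl
        rcases Sym2.eq_iff.mp hx with ⟨e1, e2⟩ | ⟨e1, e2⟩
        · exact hwu (e2.symm.trans e1)
        · exact hwu (e1.symm.trans e2)
end

section
/- For integers n and t with n ≥ 2t + 1 and t ≥ 0, the degree resistance distance of G⁰(n,t) equals D_R(G⁰(n,t)) = −(4/3)t² + ((4/3)n − 14/3)t + 3n² − 7n + 4. -/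
open Finset

section general
open Matrix

lemma sum_lapMatrix_mulVec {V : Type*} [Fintype V] [DecidableEq V] (G : SimpleGraph V)
    [DecidableRel G.Adj] (x : V → ℝ) : ∑ w, (G.lapMatrix ℝ *ᵥ x) w = 0 := by
  have h : (fun _ => (1 : ℝ)) ⬝ᵥ (G.lapMatrix ℝ *ᵥ x) = 0 := by
    rw [dotProduct_mulVec, ← mulVec_transpose, (G.isSymm_lapMatrix ℝ).eq,
      G.lapMatrix_mulVec_const_eq_zero, zero_dotProduct]
  simpa [dotProduct] using h

lemma det_mul_eq_minor {W : Type*} [Fintype W] [DecidableEq W] (M : Matrix W W ℝ) (v : W)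
    (y : W → ℝ) (hy : M *ᵥ y = Pi.single v 1) :
    det (M.submatrix (fun w : {w // ¬ w = v} => (w : W)) (fun w => (w : W))) = M.det * y v := by
  have h1 : M.cramer (Pi.single v 1) = M.det • y := by
    rw [← hy, cramer_eq_adjugate_mulVec, mulVec_mulVec, adjugate_mul, smul_mulVec, one_mulVec]
  have h2 := congrFun h1 v
  rw [cramer_apply] at h2
  rw [twoBlockTriangular_det _ (fun w => w = v)] at h2
  · simp only [Pi.smul_apply, smul_eq_mul] at h2
    rw [← h2]
    have e1 : (toSquareBlockProp (M.updateCol v (Pi.single v 1)) fun w => w = v) = 1 := by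
      ext ⟨i, hi⟩ ⟨j, hj⟩
      subst hi; subst hj
      simp [toSquareBlockProp_def]
    rw [e1, @det_one, one_mul]
    congr 1
    ext ⟨i, hi⟩ ⟨j, hj⟩
    simp [toSquareBlockProp_def, updateCol_apply, hj]
  · intro i hi j hj
    subst hj
    simp [hi]

lemma sub_mulVec_ext {V : Type*} [Fintype V] [DecidableEq V] (M : Matrix V V ℝ) (u : V)
    (x : V → ℝ) (hx : x u = 0) (w : {w // w ≠ u}) :
    (M.submatrix (fun w : {w // w ≠ u} => (w : V)) (fun w : {w // w ≠ u} => (w : V)) *ᵥ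
      (fun w : {w // w ≠ u} => x w)) w
      = (M *ᵥ x) w := by
  simp only [mulVec, dotProduct, submatrix_apply]
  rw [← Finset.sum_filter_add_sum_filter_not univ (fun z => z ≠ u) (fun z => M w z * x z)]
  have : ∑ z ∈ univ.filter (fun z => ¬ z ≠ u), M w z * x z = 0 := by
    apply Finset.sum_eq_zero
    intro z hz
    simp at hz
    simp [hz, hx]
  rw [this, add_zero]
  exact (Finset.sum_subtype (univ.filter (fun z => z ≠ u)) (by simp)
    (fun z => M w z * x z)).symm

lemma det_reduced_ne_zero {V : Type*} [Fintype V] [DecidableEq V] (G : SimpleGraph V)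
    [DecidableRel G.Adj] (hG : G.Preconnected) (u : V) :
    det ((G.lapMatrix ℝ).submatrix (fun w : {w // w ≠ u} => (w : V)) (fun w => (w : V))) ≠ 0 := by
  intro h0
  obtain ⟨y, hy0, hy⟩ := exists_mulVec_eq_zero_iff.2 h0
  apply hy0
  let x : V → ℝ := fun w => if h : w ≠ u then y ⟨w, h⟩ else 0
  have hxu : x u = 0 := by simp [x]
  have hxy : (fun w : {w // w ≠ u} => x w) = y := by
    ext ⟨w, hw⟩; simp [x, hw]
  have h1 : ∀ w, w ≠ u → (G.lapMatrix ℝ *ᵥ x) w = 0 := by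
    intro w hw
    have := sub_mulVec_ext (G.lapMatrix ℝ) u x hxu ⟨w, hw⟩
    rw [hxy, hy] at this
    exact this.symm
  have h2 : G.lapMatrix ℝ *ᵥ x = 0 := by
    ext w
    by_cases hw : w = u
    · subst hw
      have := sum_lapMatrix_mulVec G x
      rw [Finset.sum_eq_single w (fun b _ hb => h1 b hb) (by simp)] at this
      simpa using this
    · exact h1 w hw
  rw [SimpleGraph.lapMatrix_mulVec_eq_zero_iff_forall_reachable] at h2
  ext w
  have := h2 w u (hG w u)
  rw [← hxy]
  simpa [hxu] using this

lemma effRes_eq_s6 {V : Type*} [Fintype V] [DecidableEq V] (G : SimpleGraph V)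
    [DecidableRel G.Adj] (hG : G.Preconnected) (u v : V) (huv : u ≠ v) (x : V → ℝ)
    (hx : ∀ w, w ≠ u → (G.lapMatrix ℝ *ᵥ x) w = if w = v then 1 else 0) :
    effRes G u v = x v - x u := by
  have key : det ((G.lapMatrix ℝ).submatrix
        (fun w : {w : V // w ≠ u ∧ w ≠ v} => (w : V)) (fun w => (w : V)))
      / det ((G.lapMatrix ℝ).submatrix
        (fun w : {w : V // w ≠ u} => (w : V)) (fun w => (w : V))) = x v - x u := by
    rw [div_eq_iff (det_reduced_ne_zero G hG u), mul_comm]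
    let x' : V → ℝ := x - (x u) • (fun _ => (1 : ℝ))
    have hx' : x' u = 0 := by simp [x']
    have hL : G.lapMatrix ℝ *ᵥ x' = G.lapMatrix ℝ *ᵥ x := by
      simp only [x']
      rw [mulVec_sub, mulVec_smul, G.lapMatrix_mulVec_const_eq_zero]
      simp
    have := det_mul_eq_minor ((G.lapMatrix ℝ).submatrix
        (fun w : {w : V // w ≠ u} => (w : V)) (fun w => (w : V))) ⟨v, huv.symm⟩
        (fun w => x' w) (by
          ext w
          rw [sub_mulVec_ext _ _ _ hx', hL, hx _ w.2, Pi.single_apply]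
          simp [Subtype.ext_iff])
    have e : x' v = x v - x u := by simp [x']
    simp only [e] at this
    rw [← this]
    let f : {w : V // w ≠ u ∧ w ≠ v} ≃ {w : {w : V // w ≠ u} // ¬ w = ⟨v, huv.symm⟩} :=
      { toFun := fun w => ⟨⟨w.1, w.2.1⟩, by simpa [Subtype.ext_iff] using w.2.2⟩
        invFun := fun w => ⟨w.1.1, w.1.2, by simpa [Subtype.ext_iff] using w.2⟩
        left_inv := fun w => rfl
        right_inv := fun w => rfl }
    rw [← det_submatrix_equiv_self f]
    rfl
  rw [← key]
  unfold effRes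
  simp only [if_neg huv]
  congr!

end general

section cactus

/-- vertices lying on a triangle, other than the centre -/
def Tri (t : ℕ) {m : ℕ} (u : Fin (m + 1)) : Prop := 1 ≤ u.val ∧ u.val ≤ 2 * t

instance triDec (t m : ℕ) (u : Fin (m + 1)) : Decidable (Tri t u) := by
  unfold Tri; infer_instance

/-- the other non-central vertex of the triangle -/
def ptn {t m : ℕ} (ht : 2 * t ≤ m) (u : Fin (m + 1)) : Fin (m + 1) :=
  ⟨if 1 ≤ u.val ∧ u.val ≤ 2 * t then (if u.val % 2 = 1 then u.val + 1 else u.val - 1) else u.val,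
    by have := u.2; split_ifs <;> omega⟩

variable {t m : ℕ} (ht : 2 * t ≤ m)

lemma G0_adj (u w : Fin (m + 1)) (hu : u ≠ 0) :
    (G0 (m + 1) t).Adj u w ↔ w = 0 ∨ (Tri t u ∧ w = ptn ht u) := by
  have hu' : u.val ≠ 0 := fun h => hu (Fin.ext h)
  simp only [G0, SimpleGraph.fromRel_adj, Tri, ptn, Fin.ext_iff, ne_eq, Nat.odd_iff, Fin.val_zero]
  split_ifs <;> omega

lemma G0_adj_zero (w : Fin (m + 1)) :
    (G0 (m + 1) t).Adj 0 w ↔ w ≠ 0 := by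
  have h0 : ((0 : Fin (m + 1)) : ℕ) = 0 := rfl
  simp only [G0, SimpleGraph.fromRel_adj, Fin.ext_iff, ne_eq, Nat.odd_iff, h0]
  tauto

lemma G0_pre : (G0 (m + 1) t).Preconnected := by
  have h : ∀ w, (G0 (m + 1) t).Reachable 0 w := by
    intro w
    by_cases hw : w = 0
    · subst hw; rfl
    · exact ((G0_adj_zero w).2 hw).reachable
  exact fun a b => (h a).symm.trans (h b)

lemma ptn_ne_zero {u : Fin (m + 1)} (hu : u ≠ 0) : ptn ht u ≠ 0 := by
  have hu' : u.val ≠ 0 := fun h => hu (Fin.ext h)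
  have h0 : ((0 : Fin (m + 1)) : ℕ) = 0 := rfl
  intro h
  simp only [ptn, Fin.ext_iff, h0] at h
  split_ifs at h <;> omega

lemma ptn_ne {u : Fin (m + 1)} (hu : Tri t u) : ptn ht u ≠ u := by
  unfold Tri at hu
  simp only [ptn, Fin.ext_iff, ne_eq]
  split_ifs <;> omega

lemma ptn_ptn (u : Fin (m + 1)) : ptn ht (ptn ht u) = u := by
  simp only [ptn, Fin.ext_iff]
  split_ifs <;> omega

lemma ptn_tri {u : Fin (m + 1)} (hu : Tri t u) : Tri t (ptn ht u) := by
  unfold Tri at *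
  simp only [ptn]
  split_ifs <;> omega

lemma tri_ne_zero {u : Fin (m + 1)} (hu : Tri t u) : u ≠ 0 := by
  rintro rfl
  simp [Tri] at hu

variable [DecidableRel (G0 (m + 1) t).Adj]

lemma nbr_sum (u : Fin (m + 1)) (hu : u ≠ 0) (f : Fin (m + 1) → ℝ) :
    ∑ w ∈ (G0 (m + 1) t).neighborFinset u, f w = f 0 + if Tri t u then f (ptn ht u) else 0 := by
  split_ifs with h
  · have : (G0 (m + 1) t).neighborFinset u = {0, ptn ht u} := by
      ext w; simp [G0_adj ht u w hu, h]
    rw [this, Finset.sum_pair (ptn_ne_zero ht hu).symm]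
  · have : (G0 (m + 1) t).neighborFinset u = {0} := by
      ext w; simp [G0_adj ht u w hu, h]
    simp [this]

lemma deg_eq (ht : 2 * t ≤ m) (u : Fin (m + 1)) : ((G0 (m + 1) t).degree u : ℝ) =
    if u = 0 then (m : ℝ) else if Tri t u then 2 else 1 := by
  by_cases hu : u = 0
  · subst hu
    have : (G0 (m + 1) t).neighborFinset 0 = univ.erase 0 := by
      ext w; simp [G0_adj_zero]
    rw [← SimpleGraph.card_neighborFinset_eq_degree, this]
    simp
  · have := nbr_sum ht u hu (fun _ => 1)
    simp only [Finset.sum_const, SimpleGraph.card_neighborFinset_eq_degree, nsmul_eq_mul,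
      mul_one] at this
    rw [this, if_neg hu]
    split_ifs <;> norm_num

/-- Green function grounded at the centre -/
noncomputable def green (v w : Fin (m + 1)) : ℝ :=
  if v = 0 then 0 else if Tri t v then
    (if w = v then 2 / 3 else 0) + (if w = ptn ht v then 1 / 3 else 0)
  else if w = v then 1 else 0

open Matrix in
lemma lap_green_off (v w : Fin (m + 1)) (hw : w ≠ 0) :
    ((G0 (m + 1) t).lapMatrix ℝ *ᵥ green ht v) w = if w = v then 1 else 0 := by
  rw [SimpleGraph.lapMatrix_mulVec_apply, nbr_sum ht w hw, deg_eq ht, if_neg hw]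
  by_cases hv : v = 0
  · subst hv; simp [green, hw]
  have hp := ptn_ne_zero ht hv
  by_cases tw : Tri t w <;> by_cases tv : Tri t v
  · have e1 : ptn ht w = v ↔ w = ptn ht v :=
      ⟨fun h => by rw [← h, ptn_ptn], fun h => by rw [h, ptn_ptn]⟩
    have e2 : ptn ht w = ptn ht v ↔ w = v :=
      ⟨fun h => by rw [← ptn_ptn ht w, h, ptn_ptn], fun h => by rw [h]⟩
    have e3 := ptn_ne ht tv
    simp only [green, hv, tw, tv, if_true, if_false, e1, e2, hp.symm, Ne.symm hv]
    by_cases a : w = v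
    · subst a; simp [e3.symm]; norm_num
    · by_cases b : w = ptn ht v
      · simp [b, e3]; norm_num
      · simp [a, b]
  · have a : w ≠ v := fun h => tv (h ▸ tw)
    have b : ptn ht w ≠ v := fun h => tv (h ▸ ptn_tri ht tw)
    simp [green, hv, tw, tv, a, b, Ne.symm hv]
  · have a : w ≠ v := fun h => tw (h ▸ tv)
    have b : w ≠ ptn ht v := fun h => tw (h ▸ ptn_tri ht tv)
    simp [green, hv, tw, tv, a, b, Ne.symm hv, hp.symm]
  · simp [green, hv, tw, tv, Ne.symm hv]

open Matrix in
lemma lap_green (v w : Fin (m + 1)) :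
    ((G0 (m + 1) t).lapMatrix ℝ *ᵥ green ht v) w
      = (if w = v then 1 else 0) - if w = 0 then 1 else 0 := by
  by_cases hw : w = 0
  · subst hw
    have h := sum_lapMatrix_mulVec (G0 (m + 1) t) (green ht v)
    rw [Fin.sum_univ_succ, Finset.sum_congr rfl
      (fun i _ => lap_green_off ht v (Fin.succ i) (Fin.succ_ne_zero i))] at h
    have h2 : ∑ w : Fin (m + 1), (if w = v then (1 : ℝ) else 0) = 1 := by simp
    rw [Fin.sum_univ_succ] at h2
    simp only [if_true]
    linarith
  · rw [lap_green_off ht v w hw]; simp [hw]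

lemma effRes_green (ht : 2 * t ≤ m) (u v : Fin (m + 1)) : effRes (G0 (m + 1) t) u v =
    green ht v v + green ht u u - green ht v u - green ht u v := by
  by_cases huv : u = v
  · subst huv
    simp [effRes]
  · rw [effRes_eq_s6 (G0 (m + 1) t) G0_pre u v huv (green ht v - green ht u)]
    · simp only [Pi.sub_apply]; ring
    · intro w hw
      rw [Matrix.mulVec_sub, Pi.sub_apply, lap_green, lap_green]
      simp [hw]

lemma green_symm (u v : Fin (m + 1)) : green ht u v = green ht v u := by
  by_cases hu : u = 0
  · subst hu
    by_cases hv : v = 0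
    · subst hv; rfl
    · simp [green, hv, Ne.symm hv, (ptn_ne_zero ht hv).symm]
  by_cases hv : v = 0
  · subst hv
    simp [green, hu, Ne.symm hu, (ptn_ne_zero ht hu).symm]
  have e1 : v = ptn ht u ↔ u = ptn ht v :=
    ⟨fun h => by rw [h, ptn_ptn], fun h => by rw [h, ptn_ptn]⟩
  by_cases tu : Tri t u <;> by_cases tv : Tri t v
  · simp only [green, hu, hv, tu, tv, if_true, if_false, e1, eq_comm (a := u) (b := v)]
  · have a : v ≠ u := fun h => tv (h ▸ tu)
    have b : v ≠ ptn ht u := fun h => tv (h ▸ ptn_tri ht tu)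
    simp [green, hu, hv, tu, tv, a, b, a.symm]
  · have a : u ≠ v := fun h => tu (h ▸ tv)
    have b : u ≠ ptn ht v := fun h => tu (h ▸ ptn_tri ht tv)
    simp [green, hu, hv, tu, tv, a, b, a.symm]
  · simp only [green, hu, hv, tu, tv, if_false, eq_comm (a := u) (b := v)]

lemma green_diag (u : Fin (m + 1)) : green ht u u =
    if u = 0 then 0 else if Tri t u then 2 / 3 else 1 := by
  unfold green
  by_cases b : Tri t u
  · simp [b, (ptn_ne ht b).symm]
  · simp [b]

lemma green_sum (u : Fin (m + 1)) : ∑ v, green ht u v =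
    if u = 0 then 0 else if Tri t u then 1 else 1 := by
  unfold green
  split_ifs with a b
  · simp
  · simp only [Finset.sum_add_distrib, Finset.sum_ite_eq', mem_univ, if_true]; norm_num
  · simp

lemma class_sum (ht : 2 * t ≤ m) (a b c : ℝ) : ∑ u : Fin (m + 1), (if u = 0 then a else if Tri t u then b else c)
    = a + 2 * t * b + (m - 2 * t) * c := by
  obtain ⟨k, rfl⟩ := Nat.exists_eq_add_of_le ht
  rw [Fin.sum_univ_succ, Fin.sum_univ_add]
  have e1 : ∀ i : Fin (2 * t), Tri t (Fin.succ (Fin.castAdd k i)) := by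
    intro i; have := i.2; simp only [Tri, Fin.val_succ, Fin.val_castAdd, Fin.val_natAdd]; omega
  have e2 : ∀ i : Fin k, ¬ Tri t (Fin.succ (Fin.natAdd (2 * t) i)) := by
    intro i; simp only [Tri, Fin.val_succ, Fin.val_castAdd, Fin.val_natAdd]; omega
  simp [e1, e2, Fin.succ_ne_zero]
  ring

end cactus

/-- Corrected Theorem 1: the degree resistance distance of `G⁰(n,t)`. -/
theorem stmt_6 (n t : ℕ) (h1 : 2 * t + 1 ≤ n) :
    degRes (G0 n t) = -(4 / 3) * (t : ℝ) ^ 2 + ((4 / 3) * (n : ℝ) - 14 / 3) * t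
      + 3 * (n : ℝ) ^ 2 - 7 * n + 4 := by
  classical
  obtain ⟨m, rfl⟩ : ∃ m, n = m + 1 := ⟨n - 1, by omega⟩
  have ht : 2 * t ≤ m := by omega
  have key : degRes (G0 (m + 1) t) = (1 / 2) * ∑ u : Fin (m + 1), ∑ v : Fin (m + 1),
      (((G0 (m + 1) t).degree u : ℝ) + ((G0 (m + 1) t).degree v : ℝ))
        * effRes (G0 (m + 1) t) u v := by
    unfold degRes
    congr!
  rw [key]
  let d : Fin (m + 1) → ℝ := fun u => ((G0 (m + 1) t).degree u : ℝ)
  let r : Fin (m + 1) → ℝ := fun u => green ht u u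
  have step : ∀ u v, (((G0 (m + 1) t).degree u : ℝ) + ((G0 (m + 1) t).degree v : ℝ))
        * effRes (G0 (m + 1) t) u v = d u * r u + d v * r v + d u * r v + r u * d v
          - 2 * (d u * green ht u v) - 2 * (d v * green ht v u) := by
    intro u v
    rw [effRes_green ht, green_symm ht v u]
    simp only [d, r]; ring
  simp only [step, Finset.sum_sub_distrib, Finset.sum_add_distrib]
  rw [Finset.sum_comm (f := fun u v => 2 * (d v * green ht v u))]
  simp only [← Finset.mul_sum, ← Finset.sum_mul, Finset.sum_const, card_univ, Fintype.card_fin,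
    nsmul_eq_mul, green_sum]
  have s1 : ∑ u, d u = m + 2 * t * 2 + (m - 2 * t) * 1 := by
    rw [← class_sum ht]; exact Finset.sum_congr rfl fun u _ => deg_eq ht u
  have s2 : ∑ u, r u = 0 + 2 * t * (2 / 3) + (m - 2 * t) * 1 := by
    rw [← class_sum ht]; exact Finset.sum_congr rfl fun u _ => green_diag ht u
  have s3 : ∑ u, d u * r u = 0 + 2 * t * (4 / 3) + (m - 2 * t) * 1 := by
    rw [← class_sum ht]
    refine Finset.sum_congr rfl fun u _ => ?_
    simp only [d, r, deg_eq ht, green_diag]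
    split_ifs <;> norm_num
  have s4 : ∑ u, d u * (if u = 0 then 0 else if Tri t u then 1 else 1)
      = 0 + 2 * t * 2 + (m - 2 * t) * 1 := by
    rw [← class_sum ht]
    refine Finset.sum_congr rfl fun u _ => ?_
    simp only [d, deg_eq ht]
    split_ifs <;> norm_num
  have s5 : ∑ u, d u * (((m + 1 : ℕ) : ℝ) * r u)
      = ((m + 1 : ℕ) : ℝ) * (0 + 2 * t * (4 / 3) + (m - 2 * t) * 1) := by
    rw [← s3, Finset.mul_sum]; exact Finset.sum_congr rfl fun u _ => by ring
  simp only [s1, s2, s3, s4, s5]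
  push_cast
  ring
end

section
/- For integers n and t with n ≥ 2t + 3 and t ≥ 1, D_R(G3) − D_R(G⁰(n,t)) = 4n + 2t − 12, where G3 is the cactus on n vertices consisting of t triangles, n − 2t − 3 pendent edges, and one pendent path of length 2, all attached at a single common vertex v1. -/
open Finset

/-- `G3`: `t` triangles, `n - 2t - 3` pendent edges, and one pendent path of
length 2 (through `2t+1` to `2t+2`), all attached at the common vertex `0`. -/
def G3g (n t : ℕ) : SimpleGraph (Fin n) :=
  SimpleGraph.fromRel (fun a b =>
    (a.val = 0 ∧ b.val ≠ 2 * t + 2) ∨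
    (Odd a.val ∧ b.val = a.val + 1 ∧ b.val ≤ 2 * t) ∨
    (a.val = 2 * t + 1 ∧ b.val = 2 * t + 2))

/-- `G4`: `t` triangles and `n - 2t - 2` pendent edges at the common vertex `0`,
together with one pendent edge (to `2t+1`) attached at the triangle vertex `1`. -/
def G4g (n t : ℕ) : SimpleGraph (Fin n) :=
  SimpleGraph.fromRel (fun a b =>
    (a.val = 0 ∧ b.val ≠ 2 * t + 1) ∨
    (Odd a.val ∧ b.val = a.val + 1 ∧ b.val ≤ 2 * t) ∨
    (a.val = 1 ∧ b.val = 2 * t + 1))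

/-- `G5`: `t - 1` triangles, one quadrilateral `C₄` (on `0, 2t-1, 2t, 2t+1`), and
`n - 2t - 2` pendent edges, all sharing the common vertex `0`. -/
def G5g (n t : ℕ) : SimpleGraph (Fin n) :=
  SimpleGraph.fromRel (fun a b =>
    (a.val = 0 ∧ b.val ≠ 2 * t) ∨
    (Odd a.val ∧ b.val = a.val + 1 ∧ b.val ≤ 2 * t - 2) ∨
    (a.val = 2 * t - 1 ∧ b.val = 2 * t) ∨
    (a.val = 2 * t ∧ b.val = 2 * t + 1))

/-- `G6`: `t - 1` triangles, one quadrilateral `C₄` (on `0, 2t-1, 2t, 2t+1`), and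
`n - 2t - 3` pendent edges at the common vertex `0`, together with one pendent edge
(to `2t+2`) attached at the quadrilateral vertex `2t-1`, which is adjacent to `0`. -/
def G6g (n t : ℕ) : SimpleGraph (Fin n) :=
  SimpleGraph.fromRel (fun a b =>
    (a.val = 0 ∧ b.val ≠ 2 * t ∧ b.val ≠ 2 * t + 2) ∨
    (Odd a.val ∧ b.val = a.val + 1 ∧ b.val ≤ 2 * t - 2) ∨
    (a.val = 2 * t - 1 ∧ (b.val = 2 * t ∨ b.val = 2 * t + 2)) ∨
    (a.val = 2 * t ∧ b.val = 2 * t + 1))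

/-- `G7`: `t - 1` triangles, one quadrilateral `C₄` (on `0, 2t-1, 2t, 2t+1`), and
`n - 2t - 3` pendent edges at the common vertex `0`, together with one pendent edge
(to `2t+2`) attached at the quadrilateral vertex `2t`, which is opposite to `0`. -/
def G7g (n t : ℕ) : SimpleGraph (Fin n) :=
  SimpleGraph.fromRel (fun a b =>
    (a.val = 0 ∧ b.val ≠ 2 * t ∧ b.val ≠ 2 * t + 2) ∨
    (Odd a.val ∧ b.val = a.val + 1 ∧ b.val ≤ 2 * t - 2) ∨
    (a.val = 2 * t - 1 ∧ b.val = 2 * t) ∨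
    (a.val = 2 * t ∧ (b.val = 2 * t + 1 ∨ b.val = 2 * t + 2)))

/-- `G8`: `t - 2` triangles, two quadrilaterals `C₄` (on `0, 2t-3, 2t-2, 2t-1` and
on `0, 2t, 2t+1, 2t+2`), and `n - 2t - 3` pendent edges, all sharing the common
vertex `0`. -/
def G8g (n t : ℕ) : SimpleGraph (Fin n) :=
  SimpleGraph.fromRel (fun a b =>
    (a.val = 0 ∧ b.val ≠ 2 * t - 2 ∧ b.val ≠ 2 * t + 1) ∨
    (Odd a.val ∧ b.val = a.val + 1 ∧ b.val ≤ 2 * t - 4) ∨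
    (a.val = 2 * t - 3 ∧ b.val = 2 * t - 2) ∨
    (a.val = 2 * t - 2 ∧ b.val = 2 * t - 1) ∨
    (a.val = 2 * t ∧ b.val = 2 * t + 1) ∨
    (a.val = 2 * t + 1 ∧ b.val = 2 * t + 2))

/-- `G9`: `t - 1` triangles, one quadrilateral `C₄` (on `0, 2t-1, 2t, 2t+1`), and
`n - 2t - 3` pendent edges at the common vertex `0`, together with one pendent edge
(to `2t+2`) attached at the non-central triangle vertex `1`. -/
def G9g (n t : ℕ) : SimpleGraph (Fin n) :=
  SimpleGraph.fromRel (fun a b =>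
    (a.val = 0 ∧ b.val ≠ 2 * t ∧ b.val ≠ 2 * t + 2) ∨
    (Odd a.val ∧ b.val = a.val + 1 ∧ b.val ≤ 2 * t - 2) ∨
    (a.val = 2 * t - 1 ∧ b.val = 2 * t) ∨
    (a.val = 2 * t ∧ b.val = 2 * t + 1) ∨
    (a.val = 1 ∧ b.val = 2 * t + 2))

/-- `G10`: `t - 1` triangles, one pentagon `C₅` (on `0, 2t-1, 2t, 2t+1, 2t+2`), and
`n - 2t - 3` pendent edges, all sharing the common vertex `0`. -/
def G10g (n t : ℕ) : SimpleGraph (Fin n) :=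
  SimpleGraph.fromRel (fun a b =>
    (a.val = 0 ∧ b.val ≠ 2 * t ∧ b.val ≠ 2 * t + 1) ∨
    (Odd a.val ∧ b.val = a.val + 1 ∧ b.val ≤ 2 * t - 2) ∨
    (a.val = 2 * t - 1 ∧ b.val = 2 * t) ∨
    (a.val = 2 * t ∧ b.val = 2 * t + 1) ∨
    (a.val = 2 * t + 1 ∧ b.val = 2 * t + 2))


open Matrix in
lemma aux_det_sub {V : Type*} [Fintype V] [DecidableEq V] (M : Matrix V V ℝ) (P : V → Prop)
    [DecidablePred P] (h : ∀ j, ¬ P j → ∀ i, M i j = if i = j then 1 else 0) :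
    M.det = (M.submatrix (fun w : {w // P w} => (w : V)) (fun w : {w // P w} => (w : V))).det := by
  rw [Matrix.twoBlockTriangular_det' M P]
  · have : M.toSquareBlockProp (fun i => ¬ P i) = 1 := by
      ext i j
      simp only [Matrix.toSquareBlockProp_def, Matrix.of_apply, h _ j.2, Matrix.one_apply, Subtype.ext_iff]
    rw [this, Matrix.det_one, mul_one]
    rfl
  · intro i hi j hj
    rw [h j hj, if_neg]
    rintro rfl
    exact hj hi

open Matrix in
lemma aux_effRes_s8 {V : Type*} [Fintype V] [DecidableEq V] (G : SimpleGraph V) [DecidableRel G.Adj]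
    (u v : V) (f : V → ℝ) (c : V)
    (hc : ∀ g : V → ℝ, (∀ a b, G.Adj a b → g a = g b) → ∀ x, g x = g c)
    (hf : G.lapMatrix ℝ *ᵥ f = Pi.single v 1 - Pi.single u 1) :
    effRes G u v = f v - f u := by
  by_cases huv : u = v
  · simp [effRes, huv]
  have hvu : v ≠ u := Ne.symm huv
  set L := G.lapMatrix ℝ with hL
  set B := L.updateCol u (Pi.single u 1) with hB
  have hBmul : ∀ g : V → ℝ, B *ᵥ g = L *ᵥ (Function.update g u 0) + g u • Pi.single u 1 := by
    intro g
    ext i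
    simp only [Matrix.mulVec, dotProduct, Pi.add_apply, Pi.smul_apply, smul_eq_mul]
    rw [← Finset.add_sum_erase _ _ (Finset.mem_univ u),
      ← Finset.add_sum_erase (a := u) (f := fun x => L i x * Function.update g u 0 x) _ (Finset.mem_univ u)]
    have : ∑ x ∈ Finset.univ.erase u, B i x * g x
        = ∑ x ∈ Finset.univ.erase u, L i x * Function.update g u 0 x := by
      apply Finset.sum_congr rfl
      intro x hx
      have hx := Finset.ne_of_mem_erase hx
      simp [hB, hx]
    rw [this]
    simp [hB]
    ring
  have hdet : B.det ≠ 0 := by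
    intro h0
    obtain ⟨g, hg0, hg⟩ := Matrix.exists_mulVec_eq_zero_iff.mpr h0
    rw [hBmul] at hg
    set g' := Function.update g u 0 with hg'
    have hq : Matrix.toLinearMap₂' ℝ L g' g' = 0 := by
      rw [Matrix.toLinearMap₂'_apply']
      have : L *ᵥ g' = - (g u • Pi.single u 1) := eq_neg_of_add_eq_zero_left hg
      rw [this]
      simp [hg']
    rw [hL, SimpleGraph.lapMatrix_toLinearMap₂'_apply'_eq_zero_iff_forall_adj] at hq
    have h1 := hc g' hq
    have h2 : ∀ x, g' x = 0 := fun x => by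
      rw [h1 x, ← h1 u]; simp [hg']
    have h3 : g' = 0 := funext h2
    rw [h3] at hg
    have h4 : g u = 0 := by simpa using congrFun hg u
    apply hg0
    rw [← h3, hg', ← h4, Function.update_eq_self]
  set g : V → ℝ := fun x => if x = u then 1 else f x - f u with hgdef
  have hg : B *ᵥ g = Pi.single v 1 := by
    rw [hBmul]
    have : Function.update g u 0 = f - (fun _ => f u) := by
      ext x
      by_cases hx : x = u
      · subst hx; simp
      · simp [hx, hgdef]
    rw [this, Matrix.mulVec_sub, hf]
    have h0 : L *ᵥ (fun _ => f u) = 0 := by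
      rw [hL, SimpleGraph.lapMatrix_mulVec_eq_zero_iff_forall_adj]
      intros; rfl
    rw [h0]
    simp [hgdef]
  have hcr : (B.updateCol v (Pi.single v 1)).det = B.det * (f v - f u) := by
    rw [← Matrix.cramer_apply, ← hg, Matrix.cramer_eq_adjugate_mulVec, Matrix.mulVec_mulVec,
      Matrix.adjugate_mul, Matrix.smul_mulVec, Matrix.one_mulVec]
    simp [hgdef, hvu]
  rw [aux_det_sub B (fun w => w ≠ u)] at hcr hdet
  · rw [aux_det_sub (B.updateCol v (Pi.single v 1)) (fun w => w ≠ u ∧ w ≠ v)] at hcr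
    · have e1 : B.submatrix (fun w : {w // w ≠ u} => (w : V)) (fun w : {w // w ≠ u} => (w : V)) =
          L.submatrix (fun w : {w // w ≠ u} => (w : V)) (fun w : {w // w ≠ u} => (w : V)) := by
        ext i j
        simp [hB, j.2]
      have e2 : (B.updateCol v (Pi.single v 1)).submatrix
            (fun w : {w // w ≠ u ∧ w ≠ v} => (w : V)) (fun w : {w // w ≠ u ∧ w ≠ v} => (w : V)) =
          L.submatrix (fun w : {w // w ≠ u ∧ w ≠ v} => (w : V)) (fun w : {w // w ≠ u ∧ w ≠ v} => (w : V)) := by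
        ext i j
        simp [hB, j.2.1, j.2.2]
      rw [e1] at hcr hdet
      rw [e2] at hcr
      unfold effRes
      simp only [if_neg huv]
      rw [← mul_div_cancel_left₀ (f v - f u) hdet, ← hcr, hL]
      convert rfl
    · intro j hj i
      by_cases hjv : j = v
      · subst hjv; simp [Pi.single_apply]
      · have : j = u := by by_contra h; exact hj ⟨h, hjv⟩
        subst this
        simp [hB, huv, Pi.single_apply]
  · intro j hj i
    have : j = u := by simpa using hj
    subst this
    simp [hB, Pi.single_apply]
  · intro j hj i
    have : j = u := by simpa using hj
    subst this
    simp [hB, Pi.single_apply]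

open Matrix in
lemma aux_effRes2 {V : Type*} [Fintype V] [DecidableEq V] (G : SimpleGraph V) [DecidableRel G.Adj]
    (M : V → V → ℝ) (c : V)
    (hc : ∀ g : V → ℝ, (∀ a b, G.Adj a b → g a = g b) → ∀ x, g x = g c)
    (hM0 : ∀ x, M c x = 0)
    (hM : ∀ w x, x ≠ c → w ≠ c → ∑ y ∈ G.neighborFinset x, (M w x - M w y) = if x = w then 1 else 0)
    (u v : V) :
    effRes G u v = M v v - M u v - (M v u - M u u) := by
  have key : ∀ w, G.lapMatrix ℝ *ᵥ (M w) = Pi.single w 1 - Pi.single c 1 := by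
    intro w
    by_cases hw : w = c
    · subst hw
      have : M w = 0 := funext hM0
      simp [this]
    have hx : ∀ x, x ≠ c → (G.lapMatrix ℝ *ᵥ (M w)) x = if x = w then 1 else 0 := by
      intro x hx
      rw [← hM w x hx hw, SimpleGraph.lapMatrix_mulVec_apply]
      simp
    have hs : ∑ x, (G.lapMatrix ℝ *ᵥ (M w)) x = 0 := by
      have h1 : (fun _ => (1:ℝ)) ᵥ* G.lapMatrix ℝ = 0 := by
        rw [← Matrix.mulVec_transpose, (SimpleGraph.isSymm_lapMatrix (R := ℝ) G).eq]
        rw [SimpleGraph.lapMatrix_mulVec_eq_zero_iff_forall_adj]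
        intros; rfl
      have h2 : (fun _ => (1:ℝ)) ⬝ᵥ (G.lapMatrix ℝ *ᵥ (M w)) = 0 := by
        rw [Matrix.dotProduct_mulVec, h1, zero_dotProduct]
      simpa [dotProduct] using h2
    ext x
    by_cases hxc : x = c
    · subst hxc
      rw [← Finset.add_sum_erase _ _ (Finset.mem_univ x)] at hs
      have : ∑ y ∈ Finset.univ.erase x, (G.lapMatrix ℝ *ᵥ (M w)) y = 1 := by
        rw [Finset.sum_congr rfl (fun y hy => hx y (Finset.ne_of_mem_erase hy))]
        simp [hw]
      rw [this] at hs
      have hxw : x ≠ w := Ne.symm hw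
      simp [hxw]
      linarith
    · rw [hx x hxc]
      simp [Pi.single_apply, hxc]
  have := aux_effRes_s8 G u v (M v - M u) c hc (by
    rw [Matrix.mulVec_sub, key, key]; abel)
  rw [this]
  simp

/-- Green function of `G0`, pinned at the centre. -/
noncomputable def auxM (t w x : ℕ) : ℝ :=
  if w = 0 ∨ x = 0 then 0 else if w = x then (if x ≤ 2 * t then 2 / 3 else 1)
  else if w ≤ 2 * t ∧ x ≤ 2 * t ∧ (w + 1) / 2 = (x + 1) / 2 then 1 / 3 else 0

/-- Correction to the Green function for `G3g`. -/
noncomputable def auxE (t w x : ℕ) : ℝ :=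
  if (w = 2 * t + 1 ∧ x = 2 * t + 2) ∨ (w = 2 * t + 2 ∧ x = 2 * t + 1) ∨
    (w = 2 * t + 2 ∧ x = 2 * t + 2) then 1 else 0

lemma aux_partner (n t : ℕ) (h1 : 2 * t + 3 ≤ n) (x : Fin n) (hx0 : x.val ≠ 0) (hx : x.val ≤ 2 * t) :
    ∃ y : Fin n, y ≠ x ∧ y.val ≠ 0 ∧ y.val ≤ 2 * t ∧ (y.val + 1) / 2 = (x.val + 1) / 2 ∧
      ((x.val % 2 = 1 ∧ y.val = x.val + 1) ∨ (x.val % 2 = 0 ∧ x.val = y.val + 1)) := by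
  rcases Nat.even_or_odd x.val with h | h
  · have := Nat.even_iff.mp h
    refine ⟨⟨x.val - 1, by omega⟩, ?_⟩
    rw [ne_eq, Fin.ext_iff]
    refine ⟨?_, ?_, ?_, ?_, ?_⟩ <;> dsimp only <;> omega
  · have := Nat.odd_iff.mp h
    refine ⟨⟨x.val + 1, by omega⟩, ?_⟩
    rw [ne_eq, Fin.ext_iff]
    refine ⟨?_, ?_, ?_, ?_, ?_⟩ <;> dsimp only <;> omega

lemma aux_G0_nbr_center (n t : ℕ) (c : Fin n) (hc : c.val = 0) [DecidableRel (G0 n t).Adj] :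
    (G0 n t).neighborFinset c = Finset.univ \ {c} := by
  ext z
  rw [SimpleGraph.mem_neighborFinset]
  simp only [G0, SimpleGraph.fromRel_adj, Nat.odd_iff, ne_eq,
    Finset.mem_sdiff, Finset.mem_univ, true_and, Finset.mem_singleton, Fin.ext_iff]
  omega

lemma aux_G0_nbr_big (n t : ℕ) (c : Fin n) (hc : c.val = 0) [DecidableRel (G0 n t).Adj]
    (x : Fin n) (hx : 2 * t < x.val) :
    (G0 n t).neighborFinset x = {c} := by
  ext z
  rw [SimpleGraph.mem_neighborFinset]
  simp only [G0, SimpleGraph.fromRel_adj, Nat.odd_iff, ne_eq,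
    Finset.mem_singleton, Fin.ext_iff]
  omega

lemma aux_G0_nbr_tri (n t : ℕ) (c : Fin n) (hc : c.val = 0) [DecidableRel (G0 n t).Adj]
    (x y : Fin n) (hx0 : x.val ≠ 0) (hx : x.val ≤ 2 * t) (hy : y.val ≤ 2 * t)
    (h : (x.val % 2 = 1 ∧ y.val = x.val + 1) ∨ (x.val % 2 = 0 ∧ x.val = y.val + 1)) :
    (G0 n t).neighborFinset x = {c, y} := by
  ext z
  rw [SimpleGraph.mem_neighborFinset]
  simp only [G0, SimpleGraph.fromRel_adj, Nat.odd_iff, ne_eq,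
    Finset.mem_singleton, Finset.mem_insert, Fin.ext_iff]
  omega

lemma aux_G3_nbr_center (n t : ℕ) (c q : Fin n) (hc : c.val = 0) (hq : q.val = 2 * t + 2)
    [DecidableRel (G3g n t).Adj] :
    (G3g n t).neighborFinset c = Finset.univ \ {c, q} := by
  ext z
  rw [SimpleGraph.mem_neighborFinset]
  simp only [G3g, SimpleGraph.fromRel_adj, Nat.odd_iff, ne_eq,
    Finset.mem_sdiff, Finset.mem_univ, true_and, Finset.mem_singleton, Finset.mem_insert, Fin.ext_iff]
  omega

lemma aux_G3_nbr_big (n t : ℕ) (c : Fin n) (hc : c.val = 0) [DecidableRel (G3g n t).Adj]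
    (x : Fin n) (hx : 2 * t + 2 < x.val) :
    (G3g n t).neighborFinset x = {c} := by
  ext z
  rw [SimpleGraph.mem_neighborFinset]
  simp only [G3g, SimpleGraph.fromRel_adj, Nat.odd_iff, ne_eq,
    Finset.mem_singleton, Fin.ext_iff]
  omega

lemma aux_G3_nbr_p (n t : ℕ) (c p q : Fin n) (hc : c.val = 0) (hp : p.val = 2 * t + 1)
    (hq : q.val = 2 * t + 2) [DecidableRel (G3g n t).Adj] :
    (G3g n t).neighborFinset p = {c, q} := by
  ext z
  rw [SimpleGraph.mem_neighborFinset]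
  simp only [G3g, SimpleGraph.fromRel_adj, Nat.odd_iff, ne_eq,
    Finset.mem_singleton, Finset.mem_insert, Fin.ext_iff]
  omega

lemma aux_G3_nbr_q (n t : ℕ) (p q : Fin n) (hp : p.val = 2 * t + 1)
    (hq : q.val = 2 * t + 2) [DecidableRel (G3g n t).Adj] :
    (G3g n t).neighborFinset q = {p} := by
  ext z
  rw [SimpleGraph.mem_neighborFinset]
  simp only [G3g, SimpleGraph.fromRel_adj, Nat.odd_iff, ne_eq,
    Finset.mem_singleton, Fin.ext_iff]
  omega

lemma aux_G3_nbr_tri (n t : ℕ) (c : Fin n) (hc : c.val = 0) [DecidableRel (G3g n t).Adj]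
    (x y : Fin n) (hx0 : x.val ≠ 0) (hx : x.val ≤ 2 * t) (hy : y.val ≤ 2 * t)
    (h : (x.val % 2 = 1 ∧ y.val = x.val + 1) ∨ (x.val % 2 = 0 ∧ x.val = y.val + 1)) :
    (G3g n t).neighborFinset x = {c, y} := by
  ext z
  rw [SimpleGraph.mem_neighborFinset]
  simp only [G3g, SimpleGraph.fromRel_adj, Nat.odd_iff, ne_eq,
    Finset.mem_singleton, Finset.mem_insert, Fin.ext_iff]
  omega

lemma aux_tri_num (t w x y : ℕ) (hw : w ≠ 0) (hx0 : x ≠ 0) (hx : x ≤ 2 * t) (hy : y ≤ 2 * t)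
    (hy0 : y ≠ 0) (hne : y ≠ x) (hxy : (y + 1) / 2 = (x + 1) / 2) :
    auxM t w x - auxM t w 0 + (auxM t w x - auxM t w y) = if x = w then 1 else 0 := by
  unfold auxM
  by_cases h1 : w = x
  · subst h1
    simp [hw, hx, hy, hy0, hne.symm, hxy]
    norm_num
  · by_cases h2 : w = y
    · subst h2
      simp [hw, hx, hy, hx0, h1, Ne.symm hne, hxy]
      norm_num
    · have h1' := Ne.symm h1
      simp [hw, hx, hy, hx0, hy0, h1, h2, hxy, h1']
      omega

lemma aux_effRes_G0 (n t : ℕ) (h1 : 2 * t + 3 ≤ n) (u v : Fin n) :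
    effRes (G0 n t) u v = auxM t v v - auxM t u v - (auxM t v u - auxM t u u) := by
  classical
  have hc : (⟨0, by omega⟩ : Fin n).val = 0 := rfl
  generalize (⟨0, by omega⟩ : Fin n) = c at hc
  apply aux_effRes2 (G0 n t) (fun w x => auxM t w x) c
  · intro g hg x
    by_cases hx : x = c
    · rw [hx]
    · symm; apply hg
      rw [← SimpleGraph.mem_neighborFinset, aux_G0_nbr_center n t c hc]
      simp [hx]
  · intro x; simp [auxM, hc]
  · intro w x hx hw
    have hx0 : x.val ≠ 0 := fun h => hx (Fin.ext (by omega))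
    have hw0 : w.val ≠ 0 := fun h => hw (Fin.ext (by omega))
    by_cases hxt : x.val ≤ 2 * t
    · obtain ⟨y, hyx, hy0, hyt, hyd, hh⟩ := aux_partner n t h1 x hx0 hxt
      rw [aux_G0_nbr_tri n t c hc x y hx0 hxt hyt hh,
        Finset.sum_pair (by intro h; exact hy0 (by rw [← h, hc])), hc,
        aux_tri_num t w x y hw0 hx0 hxt hyt hy0 (fun h => hyx (Fin.ext h)) hyd]
      simp [Fin.ext_iff]
    · rw [aux_G0_nbr_big n t c hc x (by omega)]
      by_cases hwx : x = w
      · subst hwx; simp [auxM, hc, hx0, hxt]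
      · have : w.val ≠ x.val := fun h => hwx (Fin.ext h.symm)
        simp [auxM, hc, hx0, hxt, hwx, this]

lemma aux_effRes_G3 (n t : ℕ) (h1 : 2 * t + 3 ≤ n) (u v : Fin n) :
    effRes (G3g n t) u v = (auxM t v v + auxE t v v) - (auxM t u v + auxE t u v)
      - ((auxM t v u + auxE t v u) - (auxM t u u + auxE t u u)) := by
  classical
  have hc : (⟨0, by omega⟩ : Fin n).val = 0 := rfl
  have hp : (⟨2 * t + 1, by omega⟩ : Fin n).val = 2 * t + 1 := rfl
  have hq : (⟨2 * t + 2, by omega⟩ : Fin n).val = 2 * t + 2 := rfl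
  generalize (⟨0, by omega⟩ : Fin n) = c at hc
  generalize (⟨2 * t + 1, by omega⟩ : Fin n) = p at hp
  generalize (⟨2 * t + 2, by omega⟩ : Fin n) = q at hq
  apply aux_effRes2 (G3g n t) (fun w x => auxM t w x + auxE t w x) c
  · intro g hg
    have key : ∀ x, x ≠ q → g x = g c := by
      intro x hxq
      by_cases hx : x = c
      · rw [hx]
      · symm; apply hg
        rw [← SimpleGraph.mem_neighborFinset, aux_G3_nbr_center n t c q hc hq]
        simp [hx, hxq]
    intro x
    by_cases hxq : x = q
    · rw [← key p (by rw [ne_eq, Fin.ext_iff]; omega), hxq]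
      apply hg
      rw [← SimpleGraph.mem_neighborFinset, aux_G3_nbr_q n t p q hp hq]
      simp
    · exact key x hxq
  · intro x; simp [auxM, auxE, hc]
  · intro w x hx hw
    have hx0 : x.val ≠ 0 := fun h => hx (Fin.ext (by omega))
    have hw0 : w.val ≠ 0 := fun h => hw (Fin.ext (by omega))
    by_cases hxt : x.val ≤ 2 * t
    · obtain ⟨y, hyx, hy0, hyt, hyd, hh⟩ := aux_partner n t h1 x hx0 hxt
      have e0 : ∀ z : ℕ, z ≤ 2 * t → auxE t w z = 0 := by
        intro z hz
        unfold auxE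
        rw [if_neg]; omega
      rw [aux_G3_nbr_tri n t c hc x y hx0 hxt hyt hh,
        Finset.sum_pair (by intro h; exact hy0 (by rw [← h, hc])), hc,
        e0 x hxt, e0 y hyt, e0 0 (by omega)]
      simp only [add_zero]
      rw [aux_tri_num t w x y hw0 hx0 hxt hyt hy0 (fun h => hyx (Fin.ext h)) hyd]
      simp [Fin.ext_iff]
    · by_cases hxp : x = p
      · subst hxp
        rw [aux_G3_nbr_p n t c x q hc hp hq,
          Finset.sum_pair (by rw [ne_eq, Fin.ext_iff]; omega)]
        simp only [Fin.ext_iff, hp, hq, hc]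
        by_cases hw1 : w.val = 2 * t + 1
        · simp [auxM, auxE, hw1]
        · by_cases hw2 : w.val = 2 * t + 2
          · simp [auxM, auxE, hw2]
          · simp [auxM, auxE, hw1, hw2, hw0, Ne.symm hw1]
      · by_cases hxq : x = q
        · subst hxq
          rw [aux_G3_nbr_q n t p x hp hq, Finset.sum_singleton]
          simp only [Fin.ext_iff, hp, hq]
          by_cases hw1 : w.val = 2 * t + 1
          · simp [auxM, auxE, hw1]
          · by_cases hw2 : w.val = 2 * t + 2
            · simp [auxM, auxE, hw2]
            · simp [auxM, auxE, hw1, hw2, hw0, Ne.symm hw2]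
        · have a1 : x.val ≠ 2 * t + 1 := fun h => hxp (Fin.ext (by omega))
          have a2 : x.val ≠ 2 * t + 2 := fun h => hxq (Fin.ext (by omega))
          rw [aux_G3_nbr_big n t c hc x (by omega)]
          by_cases hwx : x = w
          · subst hwx; simp [auxM, auxE, hc, hx0, hxt, a1, a2]
          · have : w.val ≠ x.val := fun h => hwx (Fin.ext h.symm)
            simp [auxM, auxE, hc, hx0, hxt, hwx, this, a1, a2]

lemma aux_deg_G0 (n t : ℕ) (h1 : 2 * t + 3 ≤ n) [DecidableRel (G0 n t).Adj] (x : Fin n) :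
    ((G0 n t).degree x : ℝ) = 1 + (if x.val = 0 then (n : ℝ) - 2 else 0)
      + (if 1 ≤ x.val ∧ x.val ≤ 2 * t then 1 else 0) := by
  rw [← SimpleGraph.card_neighborFinset_eq_degree]
  by_cases hx : x.val = 0
  · rw [aux_G0_nbr_center n t x hx, Finset.card_sdiff_of_subset (by simp), Nat.cast_sub (by simp; omega)]
    simp [hx]; ring
  · by_cases hxt : x.val ≤ 2 * t
    · obtain ⟨y, hyx, hy0, hyt, hyd, hh⟩ := aux_partner n t h1 x hx hxt
      rw [aux_G0_nbr_tri n t ⟨0, by omega⟩ rfl x y hx hxt hyt hh,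
        Finset.card_pair (by rw [ne_eq, Fin.ext_iff]; exact Ne.symm hy0)]
      simp [hx, hxt, Nat.one_le_iff_ne_zero]; norm_num
    · rw [aux_G0_nbr_big n t ⟨0, by omega⟩ rfl x (by omega)]
      simp [hx, hxt]

lemma aux_deg_G3 (n t : ℕ) (h1 : 2 * t + 3 ≤ n) [DecidableRel (G3g n t).Adj] (x : Fin n) :
    ((G3g n t).degree x : ℝ) = 1 + (if x.val = 0 then (n : ℝ) - 2 else 0)
      + (if 1 ≤ x.val ∧ x.val ≤ 2 * t then 1 else 0)
      + ((if x.val = 2 * t + 1 then 1 else 0) - (if x.val = 0 then 1 else 0)) := by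
  rw [← SimpleGraph.card_neighborFinset_eq_degree]
  by_cases hx : x.val = 0
  · have hne : x ≠ (⟨2 * t + 2, by omega⟩ : Fin n) := by rw [ne_eq, Fin.ext_iff]; simp; omega
    rw [aux_G3_nbr_center n t x ⟨2 * t + 2, by omega⟩ hx rfl,
      Finset.card_sdiff_of_subset (by simp), Finset.card_pair hne, Nat.cast_sub (by simp; omega)]
    simp [hx]
  · by_cases hxt : x.val ≤ 2 * t
    · obtain ⟨y, hyx, hy0, hyt, hyd, hh⟩ := aux_partner n t h1 x hx hxt
      rw [aux_G3_nbr_tri n t ⟨0, by omega⟩ rfl x y hx hxt hyt hh,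
        Finset.card_pair (by rw [ne_eq, Fin.ext_iff]; exact Ne.symm hy0)]
      have : x.val ≠ 2 * t + 1 := by omega
      simp [hx, hxt, Nat.one_le_iff_ne_zero, this]; norm_num
    · by_cases hp : x.val = 2 * t + 1
      · rw [aux_G3_nbr_p n t ⟨0, by omega⟩ x ⟨2 * t + 2, by omega⟩ rfl hp rfl,
          Finset.card_pair (by rw [ne_eq, Fin.ext_iff]; simp)]
        simp [hp]; norm_num
      · by_cases hq : x.val = 2 * t + 2
        · rw [aux_G3_nbr_q n t ⟨2 * t + 1, by omega⟩ x rfl hq]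
          simp [hq]
        · rw [aux_G3_nbr_big n t ⟨0, by omega⟩ rfl x (by omega)]
          simp [hx, hxt, hp]

lemma aux_degRes_s8 {V : Type*} [Fintype V] (G : SimpleGraph V) [DecidableRel G.Adj] :
    degRes G = (1 / 2) * ∑ u : V, ∑ v : V, ((G.degree u : ℝ) + (G.degree v : ℝ)) * effRes G u v := by
  unfold degRes
  convert rfl

lemma aux_symm {V : Type*} [Fintype V] (d : V → ℝ) (R : V → V → ℝ) (hR : ∀ u v, R u v = R v u) :
    (1 / 2) * ∑ u : V, ∑ v : V, (d u + d v) * R u v = ∑ u : V, d u * ∑ v : V, R u v := by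
  have h1 : ∑ u : V, ∑ v : V, (d u + d v) * R u v
      = ∑ u : V, ∑ v : V, d u * R u v + ∑ u : V, ∑ v : V, d v * R u v := by
    simp only [add_mul, Finset.sum_add_distrib]
  have h2 : ∑ u : V, ∑ v : V, d v * R u v = ∑ u : V, ∑ v : V, d u * R u v := by
    rw [Finset.sum_comm]
    refine Finset.sum_congr rfl fun u _ => Finset.sum_congr rfl fun v _ => ?_
    rw [hR]
  rw [h1, h2]
  simp only [Finset.mul_sum]
  simp only [← Finset.mul_sum]
  ring

lemma aux_final {V : Type*} [Fintype V] [DecidableEq V] (c p q : V) (hcp : c ≠ p) (hcq : c ≠ q)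
    (hpq : p ≠ q) (d d' : V → ℝ) (R R' : V → V → ℝ) (n S : ℝ) (hn : (Fintype.card V : ℝ) = n)
    (hS : ∑ u, d u = S) (hdp : d p = 1) (hdq : d q = 1)
    (hd' : ∀ u, d' u = d u + ((if u = p then 1 else 0) - (if u = c then 1 else 0)))
    (hR : ∀ u v, R u v = R v u) (hR' : ∀ u v, R' u v = R' v u)
    (hRR : ∀ u v, R' u v = R u v + (if u = q then 1 else 0) + (if v = q then 1 else 0)
      - 2 * (if u = q then (if v = p then 1 else 0) else 0)
      - 2 * (if u = q then (if v = q then 1 else 0) else 0)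
      - 2 * (if u = p then (if v = q then 1 else 0) else 0))
    (hRp : ∀ v, R p v = R c v + 1 - 2 * (if v = p then 1 else 0)) :
    (1 / 2) * ∑ u : V, ∑ v : V, (d' u + d' v) * R' u v
      - (1 / 2) * ∑ u : V, ∑ v : V, (d u + d v) * R u v = 2 * n - 10 + S := by
  rw [aux_symm d R hR, aux_symm d' R' hR']
  have hK : ∀ u, ∑ v, R' u v = ∑ v, R u v + 1 + (n - 4) * (if u = q then 1 else 0)
      - 2 * (if u = p then 1 else 0) := by
    intro u
    simp only [hRR, Finset.sum_add_distrib, Finset.sum_sub_distrib, ← Finset.mul_sum]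
    by_cases h1 : u = q
    · have h2 : u ≠ p := by rw [h1]; exact Ne.symm hpq
      simp [h1, hpq.symm, hn]; ring
    · by_cases h2 : u = p
      · simp [h2, hpq]
      · simp [h1, h2]
  have hKp : ∑ v, R p v = ∑ v, R c v + n - 2 := by
    simp only [hRp, Finset.sum_add_distrib, Finset.sum_sub_distrib, ← Finset.mul_sum]
    simp [hn]
  have hA : ∑ u, d' u * ∑ v, R' u v
      = ∑ u, d u * ∑ v, R' u v + (∑ v, R' p v - ∑ v, R' c v) := by
    simp only [hd', add_mul, sub_mul, Finset.sum_add_distrib, Finset.sum_sub_distrib]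
    simp
  have hB : ∑ u, d u * ∑ v, R' u v
      = ∑ u, d u * ∑ v, R u v + S + (n - 4) * d q - 2 * d p := by
    simp only [hK, mul_add, mul_sub, Finset.sum_add_distrib, Finset.sum_sub_distrib]
    simp [hS]
    ring
  rw [hA, hB, hK p, hK c, hKp, hdp, hdq]
  simp [hcp, hcq, hpq]
  ring

lemma aux_degsum (n t : ℕ) (h1 : 2 * t + 3 ≤ n) :
    ∑ x : Fin n, ((1 : ℝ) + (if x.val = 0 then (n : ℝ) - 2 else 0)
      + (if 1 ≤ x.val ∧ x.val ≤ 2 * t then 1 else 0)) = 2 * n - 2 + 2 * t := by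
  rw [Fin.sum_univ_eq_sum_range (fun x : ℕ => (1 : ℝ) + (if x = 0 then (n : ℝ) - 2 else 0)
      + (if 1 ≤ x ∧ x ≤ 2 * t then 1 else 0)) n]
  simp only [Finset.sum_add_distrib]
  have : (Finset.range n).filter (fun x => 1 ≤ x ∧ x ≤ 2 * t) = Finset.Icc 1 (2 * t) := by
    ext x
    simp only [Finset.mem_filter, Finset.mem_range, Finset.mem_Icc]
    omega
  rw [← Finset.sum_filter (fun x => 1 ≤ x ∧ x ≤ 2 * t), this]
  have h0 : 0 < n := by omega
  simp [h0]
  ring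

/-- `D_R(G3) - D_R(G⁰(n,t)) = 4n + 2t - 12`. -/
theorem stmt_8 (n t : ℕ) (h1 : 2 * t + 3 ≤ n) (ht : 1 ≤ t) :
    degRes (G3g n t) - degRes (G0 n t) = 4 * (n : ℝ) + 2 * t - 12 := by
  classical
  have hc : (⟨0, by omega⟩ : Fin n).val = 0 := rfl
  have hp : (⟨2 * t + 1, by omega⟩ : Fin n).val = 2 * t + 1 := rfl
  have hq : (⟨2 * t + 2, by omega⟩ : Fin n).val = 2 * t + 2 := rfl
  generalize (⟨0, by omega⟩ : Fin n) = c at hc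
  generalize (⟨2 * t + 1, by omega⟩ : Fin n) = p at hp
  generalize (⟨2 * t + 2, by omega⟩ : Fin n) = q at hq
  have ec : ∀ u : Fin n, u = c ↔ u.val = 0 := fun u => by rw [Fin.ext_iff, hc]
  have ep : ∀ u : Fin n, u = p ↔ u.val = 2 * t + 1 := fun u => by rw [Fin.ext_iff, hp]
  have eq : ∀ u : Fin n, u = q ↔ u.val = 2 * t + 2 := fun u => by rw [Fin.ext_iff, hq]
  rw [aux_degRes_s8, aux_degRes_s8]
  rw [aux_final c p q (by rw [ne_eq, ep]; omega) (by rw [ne_eq, eq]; omega)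
    (by rw [ne_eq, eq]; omega) (fun u => ((G0 n t).degree u : ℝ)) (fun u => ((G3g n t).degree u : ℝ))
    (effRes (G0 n t)) (effRes (G3g n t)) n (2 * n - 2 + 2 * t) (by simp)]
  · ring
  · rw [← aux_degsum n t h1]
    exact Finset.sum_congr rfl fun x _ => aux_deg_G0 n t h1 x
  · rw [aux_deg_G0 n t h1]; simp [hp]
  · rw [aux_deg_G0 n t h1]; simp [hq]
  · intro u
    simp only [ec, ep]
    rw [aux_deg_G0 n t h1, aux_deg_G3 n t h1]
  · intro u v
    rw [aux_effRes_G0 n t h1, aux_effRes_G0 n t h1]; ring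
  · intro u v
    rw [aux_effRes_G3 n t h1, aux_effRes_G3 n t h1]; ring
  · intro u v
    rw [aux_effRes_G0 n t h1, aux_effRes_G3 n t h1]
    simp only [ep, eq]
    have hE : auxE t v v - auxE t u v - auxE t v u + auxE t u u =
      (if u.val = 2 * t + 2 then 1 else 0) + (if v.val = 2 * t + 2 then 1 else 0)
      - 2 * (if u.val = 2 * t + 2 then (if v.val = 2 * t + 1 then 1 else 0) else 0)
      - 2 * (if u.val = 2 * t + 2 then (if v.val = 2 * t + 2 then 1 else 0) else 0)
      - 2 * (if u.val = 2 * t + 1 then (if v.val = 2 * t + 2 then 1 else 0) else 0) := by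
      unfold auxE
      by_cases hu1 : u.val = 2 * t + 1 <;> by_cases hu2 : u.val = 2 * t + 2 <;>
        by_cases hv1 : v.val = 2 * t + 1 <;> by_cases hv2 : v.val = 2 * t + 2 <;>
        first
        | omega
        | (simp [hu1, hu2, hv1, hv2]; done)
        | (simp [hu1, hu2, hv1, hv2]; norm_num)
    linarith
  · intro v
    rw [aux_effRes_G0 n t h1, aux_effRes_G0 n t h1]
    simp only [ep, hc, hp]
    unfold auxM
    by_cases hv : v.val = 2 * t + 1
    · simp [hv]; norm_num
    · by_cases hv0 : v.val = 0
      · simp [hv0]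
      · simp [hv, hv0, Ne.symm hv]
end
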